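/- Theorem (generalized Iwahori-Hecke algebra, Section 6): For any choice, for each $w\in W$, of a reduced expression $w=s_{i_1}\cdots s_{i_k}$, the elements $T_w:=T_{i_1}T_{i_2}\cdots T_{i_k}\in A'$ (with $T_1=1$) form a basis of $A'$ as a free $R$-module. In particular, $A'$ is a flat deformation of the group algebra $R[W]$. (The paper states this for the universal polynomial coefficient ring $\mathbb{Z}[u_i,v_i,f^{(l)}_{ij}]$ modulo the identifications imposed by conditions (1) and (2); the statement for an arbitrary commutative ring $R$ with elements satisfying (1) and (2) follows by base change.) -/

import Mathlib

/-!
The generalized Iwahori–Hecke algebra is free on the products along reduced words, one for each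
element of the Coxeter group `W`.

*Spanning.* `straighten` shows, by induction on the length of words, that two reduced words of the
same element give products which differ by a combination of products along shorter reduced words,
and that products along nonreduced words are combinations of such products. Two reduced words of
`w` beginning with distinct letters `s`, `t` are compared through reduced words of `w` beginning
with the two alternating words of length `m_st`; these exist by `pre_alt`, and the deformed braid
relation compares the corresponding products. The quadratic relation takes care of nonreduced
words.

*Independence.* On the free module `W →₀ R`, with basis `e_x`, operators `T_s` satisfying the
defining relations are built such that `T_s e_x = e_{sx} + (terms of length at most ℓ(x))` whenever
`ℓ(sx) > ℓ(x)`. Then `T_w e_1 = e_w + (shorter terms)`, so the `T_w` are independent (`lin_indep`).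

The operators are built one length level at a time (`Good`, `good_step`, `exists_good`). In passing
from level `K` to level `K + 1` one has to define `T_s e_x` for `ℓ(x) = K - 1`. If `s` is a descent
of `x`, the value is forced by the quadratic relation. If not, put `w = s x`, of length `K`; the
value is `e_w + c_s(w)`, with a correction `c_s(w)` of lower degree still to be chosen. The braid
relations at the new level amount to `c_s(w) - c_t(w) = -obs_{st}(w)` for all left descents
`s`, `t` of `w`, where `obs_{st}(w)` is the value of the left side of the deformed braid relation
computed without corrections. This system is solvable as soon as `obs` is a cocycle,
`obs_{pq} + obs_{qr} + obs_{rp} = 0` (`obs_cocycle`).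

For this identity only the parabolic subgroup generated by `p`, `q`, `r` matters. Three common
left descents can only have bonds of type `A1 × I2(m)`, `A3`, `B3` or `H3` (`rankThree_induct`). In
the reducible case one generator commutes with the other two, and the identity is direct
(`obs_cocycle_comm`). In the irreducible cases, `w` has a reduced word beginning with the longest
element of the parabolic subgroup (`peel_A3`, `peel_B3`, `peel_H3`), so that the three obstructions
become values of noncommutative polynomials in three letters on one common vector
(`obs_cocycle_three`). The resulting identity, of Zamolodchikov type, involves the operators only
one level above the level at which the relations are known; it is verified by a noncommutative
rewriting procedure with coefficients in `ℤ[u, v, f]` (`cocyc`, `cocyc_sound`), evaluated in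
`checkA3`, `checkB3`, `checkH3`. In type `A3` the two braid parameters have to coincide here. The equality
of the quadratic relations of two generators joined by an odd bond is used both here and to show
that the braid relations of the new level hold at `e_x` if one of `s`, `t` is a descent of `x`
(`ext_br`).
-/

/-!
Theorem (generalized Iwahori–Hecke algebra, Section 6). Let `M` be a Coxeter matrix on a
finite set `I` (Mathlib convention: `M i j = 0` encodes `m_{ij} = ∞`), with Coxeter system
`cs : CoxeterSystem M W`. For ring elements define `B_{2k}(x,y) = (xy)^k - (yx)^k` and
`B_{2k+1}(x,y) = (xy)^k x - (yx)^k y`. Let `R` be a commutative ring with elements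
`u_i, v_i` and `f^{(l)}_{ij} = f^{(l)}_{ji}` (`i ≠ j`, `m_{ij} < ∞`, `1 ≤ l < m_{ij}/2`)
such that (1) `m_{ij}` finite odd implies `u_i = u_j`, `v_i = v_j`, and (2)
`m_{ij} = m_{jk} = 3`, `m_{ik} = 2` implies `f^{(1)}_{ij} = f^{(1)}_{jk}`. Let `A'` be
the quotient of the free `R`-algebra on `(T_i)` by `T_i² - u_iT_i + v_i` and
`B_{m_{ij}}(T_i,T_j) + ∑_{1 ≤ l < m_{ij}/2} f^{(l)}_{ij} B_{m_{ij}-2l}(T_i,T_j)`. Then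
for any choice of reduced expressions, the elements `T_w` form a basis of `A'` as an
`R`-module.
-/

noncomputable section

namespace Stmt14

/-- The braid commutator `B_m(x,y)`: `B_{2k}(x,y) = (xy)^k - (yx)^k`,
`B_{2k+1}(x,y) = (xy)^k x - (yx)^k y`. -/
def braid {A : Type*} [Ring A] (x y : A) (m : ℕ) : A :=
  if Even m then (x * y) ^ (m / 2) - (y * x) ^ (m / 2)
  else (x * y) ^ (m / 2) * x - (y * x) ^ (m / 2) * y

variable {I : Type*} (R : Type*) [CommRing R]

open FreeAlgebra

/-- The defining relations of the generalized Iwahori–Hecke algebra `A'`. -/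
inductive Rel (M : CoxeterMatrix I) (u v : I → R) (f : I → I → ℕ → R) :
    FreeAlgebra R I → FreeAlgebra R I → Prop
  | quad (i : I) :
      Rel M u v f (ι R i * ι R i - algebraMap R _ (u i) * ι R i + algebraMap R _ (v i)) 0
  | braidRel (i j : I) (hij : i ≠ j) (hm : M i j ≠ 0) :
      Rel M u v f
        (braid (ι R i) (ι R j) (M i j) +
          ∑ l ∈ Finset.Ico 1 ((M i j + 1) / 2),
            algebraMap R _ (f i j l) * braid (ι R i) (ι R j) (M i j - 2 * l)) 0

/-- The generalized Iwahori–Hecke algebra `A'`. -/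
abbrev Hecke (M : CoxeterMatrix I) (u v : I → R) (f : I → I → ℕ → R) : Type _ :=
  RingQuot (Rel R M u v f)

/-- The element `T_{i₁} T_{i₂} ⋯ T_{i_k}` of `A'` attached to a word `[i₁, …, i_k]`. -/
def Tprod (M : CoxeterMatrix I) (u v : I → R) (f : I → I → ℕ → R) (l : List I) :
    Hecke R M u v f :=
  (l.map fun i => RingQuot.mkAlgHom R (Rel R M u v f) (ι R i)).prod

end Stmt14

/-! ### The sign representation and the exchange property -/

namespace Stmt14
open CoxeterSystem

section Exchange
variable {I W : Type*} [Group W] {M : CoxeterMatrix I} (cs : CoxeterSystem M W)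

open Classical in
/-- The action of `s_i` on `W × ℤ/2` given by `(t, ε) ↦ (s_i t s_i, ε + [t = s_i])`, used to
define the sign attached to a reflection and an element of `W`. -/
def signStep (i : I) : Function.End (W × ZMod 2) := fun p =>
  (cs.simple i * p.1 * cs.simple i, p.2 + if p.1 = cs.simple i then 1 else 0)

open Classical in
lemma signStep_pow (i j : I) (n : ℕ) :
    (signStep cs i * signStep cs j) ^ n = fun p : W × ZMod 2 =>
      ((cs.simple i * cs.simple j) ^ n * p.1 * ((cs.simple i * cs.simple j) ^ n)⁻¹,
        p.2 + ∑ k ∈ Finset.range (2 * n),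
          if (cs.simple i * cs.simple j) ^ n * p.1 * ((cs.simple i * cs.simple j) ^ n)⁻¹ =
            (cs.simple i * cs.simple j) ^ k * cs.simple i then 1 else 0) := by
  induction n with
  | zero => funext p; simp [Function.End.one_def]
  | succ n ih =>
    rw [pow_succ', ih]
    funext p
    obtain ⟨t, ε⟩ := p
    set c := cs.simple i * cs.simple j with hc
    set t' := c ^ n * t * (c ^ n)⁻¹ with ht'
    have hcinv : c⁻¹ = cs.simple j * cs.simple i := by simp [hc]
    have e1 : c ^ (n + 1) * t * (c ^ (n + 1))⁻¹ = c * t' * c⁻¹ := by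
      rw [ht', pow_succ']; group
    have hac : cs.simple i * c = c⁻¹ * cs.simple i := by simp [hc, mul_assoc]
    have mv : ∀ y, c * t' * c⁻¹ = y ↔ t' = c⁻¹ * y * c := by
      intro y; constructor
      · rintro rfl; group
      · rintro h; rw [h]; group
    have key : ∀ k : ℕ, (c * t' * c⁻¹ = c ^ (k + 1 + 1) * cs.simple i) ↔
        t' = c ^ k * cs.simple i := by
      intro k
      rw [mv, mul_assoc, mul_assoc, hac, pow_succ, pow_succ', ← mul_assoc c⁻¹]
      simp [mul_assoc]
    have k0 : (c * t' * c⁻¹ = c ^ 0 * cs.simple i) ↔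
        cs.simple j * t' * cs.simple j = cs.simple i := by
      rw [mv, mul_assoc, pow_zero, one_mul, hac, hcinv]
      constructor
      · intro h; rw [h]; simp [mul_assoc]
      · intro h
        have h' := congrArg (fun x => cs.simple j * x * cs.simple j) h
        simpa [mul_assoc] using h'
    have k1 : (c * t' * c⁻¹ = c ^ (0 + 1) * cs.simple i) ↔ t' = cs.simple j := by
      rw [mv, mul_assoc, zero_add, pow_one, mul_assoc, hac, hcinv]
      simp [hc, mul_assoc]
    rw [show 2 * (n + 1) = 2 * n + 1 + 1 by ring, Finset.sum_range_succ', Finset.sum_range_succ']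
    simp only [e1, key, k0, k1]
    refine Prod.ext ?_ ?_
    · change cs.simple i * (cs.simple j * t' * cs.simple j) * cs.simple i = c * t' * c⁻¹
      rw [hcinv, hc]; simp only [mul_assoc]
    · change (ε + _ + _) + _ = _
      simp only [add_assoc]
      rfl

lemma signStep_liftable : M.IsLiftable (signStep cs) := by
  classical
  intro i j
  rw [signStep_pow cs i j (M i j)]
  funext p
  have h0 := cs.simple_mul_simple_pow i j
  obtain ⟨t, ε⟩ := p
  refine Prod.ext ?_ ?_
  · simp [Function.End.one_def, h0]
  · have : ∀ f : ℕ → ZMod 2, (∀ k, f (M i j + k) = f k) →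
        ∑ k ∈ Finset.range (2 * M i j), f k = 0 := by
      intro f hf
      rw [two_mul, Finset.sum_range_add, Finset.sum_congr rfl (fun k _ => hf k)]
      exact CharTwo.add_self_eq_zero _
    change ε + _ = ε
    rw [this _ (fun k => by rw [pow_add, h0]; simp), add_zero]

open Classical in
/-- The product along a word acts by conjugation on the first component, and shifts the second one
by the number of occurrences of the new first component in the left inversion sequence of the
word. The parity of this number therefore depends only on the element represented. -/
lemma signStep_word (ω : List I) (t : W) (ε : ZMod 2) :
    cs.lift ⟨signStep cs, signStep_liftable cs⟩ (cs.wordProd ω) (t, ε) =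
      (cs.wordProd ω * t * (cs.wordProd ω)⁻¹,
        ε + ((cs.leftInvSeq ω).count (cs.wordProd ω * t * (cs.wordProd ω)⁻¹) : ZMod 2)) := by
  induction ω with
  | nil => simp [Function.End.one_def]
  | cons i ω ih =>
    rw [cs.wordProd_cons, map_mul, cs.lift_apply_simple]
    change signStep cs i (cs.lift ⟨signStep cs, signStep_liftable cs⟩ (cs.wordProd ω) (t, ε)) = _
    rw [ih]
    set t' := cs.wordProd ω * t * (cs.wordProd ω)⁻¹ with ht'
    have e1 : cs.simple i * cs.wordProd ω * t * (cs.simple i * cs.wordProd ω)⁻¹ =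
      MulAut.conj (cs.simple i) t' := by simp [ht', mul_assoc]
    rw [e1]
    have e2 : (cs.leftInvSeq (i :: ω)).count (MulAut.conj (cs.simple i) t') =
        (cs.leftInvSeq ω).count t' + if t' = cs.simple i then 1 else 0 := by
      rw [CoxeterSystem.leftInvSeq, List.count_cons,
        List.count_map_of_injective _ _ (MulAut.conj (cs.simple i)).injective]
      congr 1
      have : cs.simple i = MulAut.conj (cs.simple i) t' ↔ t' = cs.simple i := by
        rw [← (MulAut.conj (cs.simple i)).injective.eq_iff (a := t'), eq_comm]; simp
      simp only [beq_iff_eq, this]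
    refine Prod.ext ?_ ?_
    · change cs.simple i * t' * cs.simple i = _
      simp
    · change ε + _ + _ = _
      rw [e2]; push_cast; rw [add_assoc]

/-- Exchange property: `s_i` occurs in the left inversion sequence of every word, reduced or not,
of an element having `i` as a left descent. The parity of its number of occurrences is computed on
a reduced word beginning with `i`. -/
lemma mem_leftInvSeq_of_isLeftDescent {ω : List I} {i : I}
    (h : cs.IsLeftDescent (cs.wordProd ω) i) : cs.simple i ∈ cs.leftInvSeq ω := by
  classical
  obtain ⟨ω', hω', e⟩ := cs.exists_isReduced (cs.simple i * cs.wordProd ω)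
  have e2 : cs.wordProd (i :: ω') = cs.wordProd ω := by
    rw [cs.wordProd_cons, ← e]; simp
  have hr : cs.IsReduced (i :: ω') := by
    have := cs.isLeftDescent_iff.1 h
    rw [CoxeterSystem.IsReduced, e2, ← this, e, hω'.eq]; rfl
  have c1 : (cs.leftInvSeq (i :: ω')).count (cs.simple i) = 1 :=
    List.count_eq_one_of_mem hr.nodup_leftInvSeq (by simp [CoxeterSystem.leftInvSeq])
  have a1 := signStep_word cs ω ((cs.wordProd ω)⁻¹ * cs.simple i * cs.wordProd ω) 0
  have a2 := signStep_word cs (i :: ω') ((cs.wordProd ω)⁻¹ * cs.simple i * cs.wordProd ω) 0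
  rw [e2, a1] at a2
  have a3 := congrArg Prod.snd a2
  have e4 : cs.wordProd ω * ((cs.wordProd ω)⁻¹ * cs.simple i * cs.wordProd ω) *
    (cs.wordProd ω)⁻¹ = cs.simple i := by group
  simp only [e4, c1, zero_add] at a3
  by_contra hn
  rw [List.count_eq_zero_of_not_mem hn] at a3
  simp at a3

end Exchange
end Stmt14

/-! ### The geometric representation and the order of `s i * s j` -/

namespace Stmt14

section Geometric
open Module Polynomial.Chebyshev
variable {I : Type*} (M : CoxeterMatrix I)

/-- The functional `x ↦ 2 B(α_i, x)` of the geometric representation, with value `-2 cos (π /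
m_ij)` at `α_j`. For `m_ij = ∞`, encoded as `M i j = 0`, the quotient `π / 0 = 0` gives the
standard value `-2`; for `i = j` the value is `2`. -/
def coroot (i : I) : Dual ℝ (I →₀ ℝ) :=
  Finsupp.linearCombination ℝ fun j => -2 * Real.cos (Real.pi / M i j)

lemma coroot_single (i j : I) :
    coroot M i (Finsupp.single j 1) = -2 * Real.cos (Real.pi / M i j) := by
  simp [coroot]

lemma coroot_self (i : I) : coroot M i (Finsupp.single i 1) = 2 := by
  simp [coroot_single]

/-- The reflection in the root `α_i`. -/
def geomRefl (i : I) : (I →₀ ℝ) ≃ₗ[ℝ] (I →₀ ℝ) := reflection (coroot_self M i)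

lemma coroot_mul (i j : I) :
    coroot M i (Finsupp.single j 1) * coroot M j (Finsupp.single i 1) - 2 =
      2 * Real.cos (2 * Real.pi / M i j) := by
  rw [coroot_single, coroot_single, M.symmetric j i, mul_div_assoc, Real.cos_two_mul]
  ring

lemma S_mul_sin (m : ℕ) (k : ℤ) :
    (S ℝ k).eval (2 * Real.cos (2 * Real.pi / m)) * Real.sin (2 * Real.pi / m) =
      Real.sin ((k + 1) * (2 * Real.pi / m)) := S_two_mul_real_cos _ _

lemma sin_pos_of_three_le {m : ℕ} (hm : 3 ≤ m) : 0 < Real.sin (2 * Real.pi / m) := by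
  have h3 : (3 : ℝ) ≤ m := by exact_mod_cast hm
  apply Real.sin_pos_of_pos_of_lt_pi
  · positivity
  · rw [div_lt_iff₀ (by positivity)]; nlinarith [Real.pi_pos]

lemma geomRefl_liftable : M.IsLiftable (geomRefl M) := by
  intro i j
  rcases eq_or_ne i j with rfl | hij
  · rw [M.diagonal, pow_one]
    ext1 v
    exact involutive_reflection (coroot_self M i) v
  set m := M i j with hm
  have hm1 : m ≠ 1 := M.off_diagonal i j hij
  rcases Nat.lt_or_ge m 3 with h | h
  · interval_cases m
    · simp
    · simp at hm1
    · ext1 v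
      have c1 : coroot M i (Finsupp.single j 1) = 0 := by rw [coroot_single, ← hm]; simp
      have c2 : coroot M j (Finsupp.single i 1) = 0 := by
        rw [coroot_single, M.symmetric j i, ← hm]; simp
      have d1 := coroot_self M i
      have d2 := coroot_self M j
      change (reflection (coroot_self M i) * reflection (coroot_self M j)) ^ 2 • v = v
      rw [pow_two]
      change reflection (coroot_self M i) (reflection (coroot_self M j)
        (reflection (coroot_self M i) (reflection (coroot_self M j) v))) = v
      simp only [reflection_apply, map_sub, map_smul, c1, c2, d1, d2]
      module
  · have hs := sin_pos_of_three_le h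
    have hm0 : (m : ℝ) ≠ 0 := by positivity
    ext1 v
    change ((reflection (coroot_self M i) * reflection (coroot_self M j)) ^ m) v = v
    rw [reflection_mul_reflection_pow_apply _ _ m v _ (coroot_mul M i j).symm, ← hm]
    rcases Nat.even_or_odd' m with ⟨k, hk | hk⟩
    · have e1 : ((m : ℤ) - 2) / 2 = k - 1 := by omega
      have e2 : ((m : ℤ) - 1) / 2 = k - 1 := by omega
      have z : (S ℝ ((k : ℤ) - 1)).eval (2 * Real.cos (2 * Real.pi / m)) = 0 := by
        have := S_mul_sin m ((k : ℤ) - 1)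
        rw [show ((((k : ℤ) - 1 : ℤ) : ℝ) + 1) * (2 * Real.pi / m) = Real.pi by
          rw [hk] at hm0 ⊢; push_cast at hm0 ⊢; rw [sub_add_cancel]; field_simp [(mul_ne_zero_iff.1 hm0).2], Real.sin_pi] at this
        exact (mul_eq_zero.1 this).resolve_right hs.ne'
      rw [e1, e2, z]; simp
    · have e1 : ((m : ℤ) - 2) / 2 = k - 1 := by omega
      have e2 : ((m : ℤ) - 1) / 2 = k := by omega
      have e3 : ((m : ℤ) - 3) / 2 = k - 1 := by omega
      have e4 : ((m : ℤ)) / 2 = k := by omega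
      have z : (S ℝ (k : ℤ)).eval (2 * Real.cos (2 * Real.pi / m)) +
          (S ℝ ((k : ℤ) - 1)).eval (2 * Real.cos (2 * Real.pi / m)) = 0 := by
        have a1 := S_mul_sin m ((k : ℤ) - 1)
        have a2 := S_mul_sin m (k : ℤ)
        have : Real.sin ((((k : ℤ) : ℝ) + 1) * (2 * Real.pi / m)) =
            - Real.sin (((((k : ℤ) - 1 : ℤ) : ℝ) + 1) * (2 * Real.pi / m)) := by
          rw [← Real.sin_two_pi_sub]
          congr 1
          rw [hk] at hm0 ⊢; push_cast at hm0 ⊢; field_simp; ring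
        refine (mul_eq_zero.1 (?_ : _ * Real.sin (2 * Real.pi / m) = 0)).resolve_right hs.ne'
        rw [add_mul, a1, a2, this]; ring
      rw [e1, e2, e3, e4, z]; simp

end Geometric

variable {I W : Type*} [Group W] {M : CoxeterMatrix I} (cs : CoxeterSystem M W)
open Module Polynomial.Chebyshev

/-- No positive power of `s_i s_j` with exponent less than `m_ij` is trivial, and no positive
power at all if `m_ij = ∞`. In the geometric representation, powers of a product of two
reflections are given by Chebyshev polynomials. -/
lemma simple_mul_simple_pow_ne_one {i j : I} (hij : i ≠ j) {k : ℕ} (hk : 0 < k)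
    (h : M i j = 0 ∨ k < M i j) : (cs.simple i * cs.simple j) ^ k ≠ 1 := by
  intro h1
  have h2 := congrArg (cs.lift ⟨geomRefl M, geomRefl_liftable M⟩) h1
  rw [map_pow, map_mul, cs.lift_apply_simple, cs.lift_apply_simple, map_one] at h2
  have h3 : ((reflection (coroot_self M i) * reflection (coroot_self M j)) ^ k)
      (Finsupp.single i 1) = Finsupp.single i 1 := by
    have := congrArg (fun g : (I →₀ ℝ) ≃ₗ[ℝ] (I →₀ ℝ) => g (Finsupp.single i 1)) h2
    exact this
  rw [reflection_mul_reflection_pow_apply_self _ _ k _ (coroot_mul M i j).symm] at h3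
  have hi := DFunLike.congr_fun h3 i
  have hj := DFunLike.congr_fun h3 j
  simp [hij, hij.symm, coroot_single, M.symmetric j i] at hi hj
  rcases h with h | h
  · rw [h] at hi hj
    simp at hi hj
    omega
  · have hm1 : M i j ≠ 1 := M.off_diagonal i j hij
    set m := M i j with hm
    rcases Nat.lt_or_ge m 3 with h3 | h3
    · have : m = 2 := by omega
      have : k = 1 := by omega
      subst this
      rw [‹m = 2›] at hi
      norm_num at hi
    · have hs := sin_pos_of_three_le h3
      have h3' : (3 : ℝ) ≤ m := by exact_mod_cast h3
      have hc : Real.cos (Real.pi / m) ≠ 0 := by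
        apply ne_of_gt
        apply Real.cos_pos_of_mem_Ioo
        constructor
        · have : 0 < Real.pi / m := by positivity
          linarith [Real.pi_pos]
        · rw [div_lt_div_iff₀ (by positivity) (by norm_num)]; nlinarith [Real.pi_pos]
      have z := hj.resolve_right hc
      rw [z, add_zero] at hi
      have a1 := S_mul_sin m ((k : ℤ) - 1)
      have a2 := S_mul_sin m (k : ℤ)
      rw [z, zero_mul] at a1
      rw [hi, one_mul, add_mul, Real.sin_add] at a2
      push_cast at a1 a2
      rw [sub_add_cancel] at a1
      rw [← a1] at a2
      have h4 : Real.cos (k * (2 * Real.pi / m)) = 1 := by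
        have : Real.cos (k * (2 * Real.pi / m)) * Real.sin (2 * Real.pi / m) =
          1 * Real.sin (2 * Real.pi / m) := by rw [one_mul] at a2 ⊢; linarith
        exact mul_right_cancel₀ hs.ne' this
      rw [Real.cos_eq_one_iff] at h4
      obtain ⟨n, hn⟩ := h4
      have hm0 : (m : ℝ) ≠ 0 := by positivity
      have h5 : (n : ℝ) * m = k := by
        field_simp at hn
        linarith
      have h6 : n * (m : ℤ) = k := by exact_mod_cast h5
      have h7 : (m : ℤ) ∣ k := ⟨n, by rw [← h6]; ring⟩
      exact absurd (Nat.le_of_dvd hk (by exact_mod_cast h7)) (by omega)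
end Stmt14

/-! ### Alternating prefixes -/

namespace Stmt14

/-- The alternating word `[s, t, s, …]` of length `k`. -/
def alt {I : Type*} : I → I → ℕ → List I
  | _, _, 0 => []
  | s, t, k + 1 => s :: alt t s k

lemma length_alt {I : Type*} (s t : I) (k : ℕ) : (alt s t k).length = k := by
  induction k generalizing s t with
  | zero => rfl
  | succ k ih => simp [alt, ih]

lemma alt_add {I : Type*} (s t : I) (j k : ℕ) :
    ∃ a b, (a = s ∧ b = t ∨ a = t ∧ b = s) ∧ alt s t (j + k) = alt s t j ++ alt a b k := by
  induction j generalizing s t with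
  | zero => exact ⟨s, t, .inl ⟨rfl, rfl⟩, by simp [alt]⟩
  | succ j ih =>
    obtain ⟨a, b, h, e⟩ := ih t s
    exact ⟨a, b, by tauto, by rw [show j + 1 + k = (j + k) + 1 by ring]; simp [alt, e]⟩

section Prefix
variable {I W : Type*} [Group W] {M : CoxeterMatrix I} (cs : CoxeterSystem M W)

/-- The word `ω` is the beginning of a reduced word of `w`: its letters are successively left
descents, when removed one after the other from the left of `w`. -/
def Pre : List I → W → Prop
  | [], _ => True
  | a :: ω, w => cs.IsLeftDescent w a ∧ Pre ω (cs.simple a * w)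

lemma Pre.length_eq {ω : List I} {w : W} (h : Pre cs ω w) :
    cs.length w = ω.length + cs.length ((cs.wordProd ω)⁻¹ * w) := by
  induction ω generalizing w with
  | nil => simp
  | cons a ω ih =>
    have h1 := cs.isLeftDescent_iff.1 h.1
    have h2 := ih h.2
    rw [cs.wordProd_cons, mul_inv_rev, cs.inv_simple, mul_assoc, List.length_cons]
    omega

lemma pre_of_length {ω : List I} {w : W}
    (h : cs.length w = ω.length + cs.length ((cs.wordProd ω)⁻¹ * w)) : Pre cs ω w := by
  induction ω generalizing w with
  | nil => trivial
  | cons a ω ih =>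
    rw [cs.wordProd_cons, mul_inv_rev, cs.inv_simple, mul_assoc, List.length_cons] at h
    have h1 := cs.length_mul_le (cs.wordProd ω) ((cs.wordProd ω)⁻¹ * (cs.simple a * w))
    rw [mul_inv_cancel_left] at h1
    have h2 := cs.length_wordProd_le ω
    have h3 := cs.length_simple_mul w a
    have h4 : cs.IsLeftDescent w a := by rw [cs.isLeftDescent_iff]; omega
    refine ⟨h4, ih ?_⟩
    have := cs.isLeftDescent_iff.1 h4
    omega

lemma pre_append {α β : List I} {w : W} :
    Pre cs (α ++ β) w ↔ Pre cs α w ∧ Pre cs β ((cs.wordProd α)⁻¹ * w) := by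
  induction α generalizing w with
  | nil => simp [Pre]
  | cons a α ih =>
    rw [List.cons_append, Pre, Pre, ih, cs.wordProd_cons, mul_inv_rev, cs.inv_simple, mul_assoc,
      and_assoc]

lemma Pre.congr {α β : List I} {w : W} (h : Pre cs α w) (h1 : cs.wordProd α = cs.wordProd β)
    (h2 : α.length = β.length) : Pre cs β w := by
  apply pre_of_length
  rw [← h1, ← h2, h.length_eq]

lemma mem_leftInvSeq_alt {s t : I} {k : ℕ} {x : W} (h : x ∈ cs.leftInvSeq (alt s t k)) :
    ∃ i < k, x = (cs.simple s * cs.simple t) ^ i * cs.simple s := by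
  induction k generalizing s t x with
  | zero => simp [alt] at h
  | succ k ih =>
    rw [alt, CoxeterSystem.leftInvSeq, List.mem_cons, List.mem_map] at h
    rcases h with rfl | ⟨y, hy, rfl⟩
    · exact ⟨0, by omega, by simp⟩
    · obtain ⟨i, hi, rfl⟩ := ih hy
      refine ⟨i + 1, by omega, ?_⟩
      have : ∀ i : ℕ, cs.simple s * (cs.simple t * cs.simple s) ^ i * cs.simple t =
          (cs.simple s * cs.simple t) ^ (i + 1) := by
        intro i
        induction i with
        | zero => simp
        | succ i ih =>
          rw [pow_succ _ (i + 1), ← ih, pow_succ]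
          simp only [mul_assoc]
      rw [← this]
      simp [mul_assoc]

lemma leftInvSeq_append (α β : List I) : cs.leftInvSeq (α ++ β) =
    cs.leftInvSeq α ++ (cs.leftInvSeq β).map (MulAut.conj (cs.wordProd α)) := by
  induction α with
  | nil => simp
  | cons a α ih =>
    simp only [List.cons_append, CoxeterSystem.leftInvSeq, ih, List.map_append, List.map_map]
    congr 2
    apply List.map_congr_left
    intro x _
    simp [cs.wordProd_cons, mul_assoc]

/-- If a reduced word of `w` begins with an alternating word and `t` is a left descent of `w`,
then `t` can be put in front of the alternating word. By exchange, a letter of the reduced word is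
deleted; it lies beyond the alternating word, since otherwise a positive power of `s t` with
exponent less than `m_st` would be trivial. -/
lemma pre_alt_succ {s t : I} (hst : s ≠ t) {k : ℕ} (hk : M s t = 0 ∨ k < M s t) {w : W}
    (ht : cs.IsLeftDescent w t) (h : Pre cs (alt s t k) w) : Pre cs (alt t s (k + 1)) w := by
  obtain ⟨ω, hω, e⟩ := cs.exists_isReduced ((cs.wordProd (alt s t k))⁻¹ * w)
  have hw : cs.wordProd (alt s t k ++ ω) = w := by
    rw [cs.wordProd_append, ← e, mul_inv_cancel_left]
  have hl := h.length_eq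
  rw [e, hω.eq, length_alt] at hl
  rw [← hw] at ht
  have hm := mem_leftInvSeq_of_isLeftDescent cs ht
  rw [leftInvSeq_append, List.mem_append] at hm
  rcases hm with hm | hm
  · exfalso
    obtain ⟨i, hi, h1⟩ := mem_leftInvSeq_alt cs hm
    apply simple_mul_simple_pow_ne_one cs hst (k := i + 1) (by omega) (by omega)
    have h2 := congrArg (· * cs.simple t) h1
    simp only [cs.simple_mul_simple_self, mul_assoc] at h2
    rw [pow_succ]; exact h2.symm
  · obtain ⟨x, hx, h1⟩ := List.mem_map.1 hm
    rw [List.mem_iff_getElem] at hx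
    obtain ⟨j, hj, rfl⟩ := hx
    rw [cs.length_leftInvSeq] at hj
    have h2 := cs.getD_leftInvSeq_mul_wordProd ω j
    rw [List.getD_eq_getElem _ _ (by simpa using hj)] at h2
    rw [hw] at ht
    apply pre_of_length
    have h3 : (cs.wordProd (alt t s (k + 1)))⁻¹ * w = cs.wordProd (ω.eraseIdx j) := by
      rw [← h2, alt, cs.wordProd_cons, ← h1, ← hw, cs.wordProd_append]
      simp only [MulAut.conj_apply]
      have : ((cs.wordProd (alt s t k) * (cs.leftInvSeq ω)[j] * (cs.wordProd (alt s t k))⁻¹) *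
          cs.wordProd (alt s t k))⁻¹ = (cs.wordProd (alt s t k) * (cs.leftInvSeq ω)[j])⁻¹ := by
        group
      rw [this]
      have h4 := (cs.isReflection_of_mem_leftInvSeq ω (List.getElem_mem
        (by simpa using hj : j < (cs.leftInvSeq ω).length))).inv
      rw [mul_inv_rev, h4]
      group
    rw [h3, length_alt]
    have h5 := cs.length_wordProd_le (ω.eraseIdx j)
    rw [List.length_eraseIdx_of_lt hj] at h5
    have h6 := cs.length_mul_le (cs.wordProd (alt t s (k + 1)))
      ((cs.wordProd (alt t s (k + 1)))⁻¹ * w)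
    rw [h3, ← h3, mul_inv_cancel_left, h3] at h6
    have h7 := cs.length_wordProd_le (alt t s (k + 1))
    rw [length_alt] at h7
    omega

/-- If `s` and `t` are left descents of `w`, then every alternating word in `s`, `t` of length at
most `m_st` begins a reduced word of `w`. -/
lemma pre_alt {s t : I} (hst : s ≠ t) {w : W} (hs : cs.IsLeftDescent w s)
    (ht : cs.IsLeftDescent w t) (k : ℕ) (hk : M s t = 0 ∨ k ≤ M s t) :
    Pre cs (alt s t k) w := by
  have : ∀ k, (M s t = 0 ∨ k ≤ M s t) → Pre cs (alt s t k) w ∧ Pre cs (alt t s k) w := by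
    intro k
    induction k with
    | zero => intro _; exact ⟨trivial, trivial⟩
    | succ k ih =>
      intro hk
      have h := ih (by omega)
      have hk' : M s t = 0 ∨ k < M s t := by omega
      exact ⟨pre_alt_succ cs hst.symm (by rwa [M.symmetric]) hs h.2,
        pre_alt_succ cs hst hk' ht h.1⟩
  exact (this k hk).1

/-- Two distinct common left descents have a product of finite order: otherwise `w` would have
reduced words beginning with alternating words of any length. -/
lemma order_ne_zero {s t : I} (hst : s ≠ t) {w : W} (hs : cs.IsLeftDescent w s)
    (ht : cs.IsLeftDescent w t) : M s t ≠ 0 := by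
  intro h
  have := (pre_alt cs hst hs ht (cs.length w + 1) (.inl h)).length_eq
  rw [length_alt] at this
  omega

/-- If neither `s` nor `t` is a left descent of `x`, lengths add when `x` is multiplied on the
left by an alternating word of length at most `m_st`. -/
lemma pre_alt_of_not_descent {s t : I} (hst : s ≠ t) {x : W} (hs : ¬ cs.IsLeftDescent x s)
    (ht : ¬ cs.IsLeftDescent x t) (k : ℕ) (hk : k ≤ M s t) :
    cs.length (cs.wordProd (alt s t k) * x) = k + cs.length x := by
  induction k generalizing s t with
  | zero => simp [alt]
  | succ k ih =>
    have h1 := ih hst.symm ht hs (by rw [M.symmetric]; omega)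
    rw [alt, cs.wordProd_cons, mul_assoc]
    rcases k with _ | k
    · simp only [alt, cs.wordProd_nil, one_mul]
      have := cs.not_isLeftDescent_iff.1 hs
      omega
    by_contra hne
    set z := cs.wordProd (alt t s (k + 1)) * x with hz
    have hz1 : (cs.wordProd (alt t s (k + 1)))⁻¹ * z = x := by rw [hz]; group
    have hds : cs.IsLeftDescent z s := by
      rw [cs.isLeftDescent_iff]
      have := cs.length_simple_mul z s
      omega
    have hpre : Pre cs (alt t s (k + 1)) z := pre_of_length cs (by
      rw [hz1, length_alt, h1])
    have hdt : cs.IsLeftDescent z t := hpre.1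
    have hfull := pre_alt cs hst.symm hdt hds (M t s) (.inr le_rfl)
    obtain ⟨a, b, hab, e⟩ := alt_add t s (k + 1) (M t s - (k + 1))
    rw [show k + 1 + (M t s - (k + 1)) = M t s by rw [M.symmetric]; omega] at e
    rw [e, pre_append, hz1] at hfull
    have h2 := hfull.2
    rw [show M t s - (k + 1) = (M t s - (k + 1) - 1) + 1 by rw [M.symmetric]; omega, alt] at h2
    rcases hab with ⟨rfl, rfl⟩ | ⟨rfl, rfl⟩
    · exact ht h2.1
    · exact hs h2.1

lemma wordProd_alt_two_mul (s t : I) (k : ℕ) :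
    cs.wordProd (alt s t (2 * k)) = (cs.simple s * cs.simple t) ^ k ∧
    cs.wordProd (alt s t (2 * k + 1)) = (cs.simple s * cs.simple t) ^ k * cs.simple s := by
  have h : cs.wordProd (alt s t (2 * k)) = (cs.simple s * cs.simple t) ^ k := by
    induction k with
    | zero => simp [alt]
    | succ k ih =>
      rw [show 2 * (k + 1) = 2 * k + 1 + 1 by ring, alt, alt, cs.wordProd_cons, cs.wordProd_cons,
        ih, pow_succ', mul_assoc]
  refine ⟨h, ?_⟩
  have : ∀ k (s t : I), alt s t (2 * k + 1) = alt s t (2 * k) ++ [s] := by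
    intro k
    induction k with
    | zero => intro s t; simp [alt]
    | succ k ih =>
      intro s t
      have e := ih s t
      rw [show 2 * (k + 1) + 1 = 2 * k + 1 + 1 + 1 by ring, show 2 * (k + 1) = 2 * k + 1 + 1 by ring]
      simp only [alt, List.cons_append] at e ⊢
      rw [e]
  rw [this, cs.wordProd_append, h, cs.wordProd_singleton]

lemma wordProd_alt (s t : I) : cs.wordProd (alt s t (M s t)) = cs.wordProd (alt t s (M s t)) := by
  have h := cs.simple_mul_simple_pow s t
  have e : cs.simple t * cs.simple s = (cs.simple s * cs.simple t)⁻¹ := by simp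
  rcases Nat.even_or_odd' (M s t) with ⟨k, hk | hk⟩
  · rw [hk, (wordProd_alt_two_mul cs s t k).1, (wordProd_alt_two_mul cs t s k).1, e, inv_pow,
      eq_inv_iff_mul_eq_one, ← pow_add, ← two_mul, ← hk, h]
  · rw [hk, (wordProd_alt_two_mul cs s t k).2, (wordProd_alt_two_mul cs t s k).2, e, inv_pow,
      eq_inv_mul_iff_mul_eq, ← mul_assoc, ← pow_add]
    rw [hk, pow_succ, ← mul_assoc] at h
    rw [← two_mul, ← mul_left_inj (cs.simple t), h, cs.simple_mul_simple_self]

end Prefix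
end Stmt14

/-! ### Three common left descents -/

namespace Stmt14
section RankThree
variable {I W : Type*} [Group W] {M : CoxeterMatrix I} (cs : CoxeterSystem M W)

lemma simple_comm {s t : I} (h : M s t = 2) (x : W) :
    cs.simple s * (cs.simple t * x) = cs.simple t * (cs.simple s * x) := by
  have := wordProd_alt cs s t
  rw [h] at this
  simp only [alt, cs.wordProd_cons, cs.wordProd_nil, mul_one] at this
  rw [← mul_assoc, this, mul_assoc]

lemma isLeftDescent_simple_mul {w : W} {s : I} (h : cs.IsLeftDescent w s) :
    cs.length (cs.simple s * w) < cs.length w := h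

/-- If all three bonds have order at least `3`, the configuration `p, q ∈ D(w)`,
`r ∈ D(s_q w)` (`D` denoting left descent sets) reproduces itself at the shorter element `s_q w`
with the roles of the letters rotated, so it never occurs. -/
lemma no_descent_large (n : ℕ) : ∀ (w : W), cs.length w = n →
      ∀ p q r : I, p ≠ q → q ≠ r → p ≠ r → 3 ≤ M p q → 3 ≤ M q r → 3 ≤ M p r →
      cs.IsLeftDescent w p → cs.IsLeftDescent w q → cs.IsLeftDescent (cs.simple q * w) r →
      False := by
  induction n using Nat.strong_induction_on with
  | _ n ih =>
    intro w hw p q r hpq hqr hpr mpq mqr mpr hp hq hr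
    have h := pre_alt cs hpq.symm hq hp 3 (.inr (by rw [M.symmetric]; exact mpq))
    simp only [alt, Pre] at h
    refine ih _ (hw ▸ isLeftDescent_simple_mul cs hq) (cs.simple q * w) rfl r p q hpr.symm hpq
      hqr.symm (M.symmetric p r ▸ mpr) mpq (M.symmetric q r ▸ mqr) hr h.2.1 h.2.2.1

/-- If `a` and `c` commute and the two other bonds have orders `(≥ 4, ≥ 4)` or `(3, ≥ 6)`, the
configuration `a, c ∈ D(w)`, `b ∈ D(s_a w) ∩ D(s_c w)` (`D` denoting left descent sets) reproduces
itself at a shorter element, so it never occurs. -/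
lemma no_descent_comm {a b c : I} (hab : a ≠ b) (hbc : b ≠ c) (hac : a ≠ c)
    (mac : M a c = 2) (hm : 4 ≤ M a b ∧ 4 ≤ M b c ∨ M a b = 3 ∧ 6 ≤ M b c) :
    ∀ (n : ℕ) (w : W), cs.length w = n → cs.IsLeftDescent w a → cs.IsLeftDescent w c →
      cs.IsLeftDescent (cs.simple a * w) b → cs.IsLeftDescent (cs.simple c * w) b → False := by
  intro n
  induction n using Nat.strong_induction_on with
  | _ n ih =>
    intro w hw ha hc hab' hcb'
    have hAC := simple_comm cs mac
    have h1 := pre_alt cs hac ha hc 2 (.inr mac.ge)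
    have h2 := pre_alt cs hac.symm hc ha 2 (.inr (by rw [M.symmetric, mac]))
    simp only [alt, Pre] at h1 h2
    have hca := h1.2.1
    have hac' := h2.2.1
    have l1 := isLeftDescent_simple_mul cs ha
    have l2 := isLeftDescent_simple_mul cs hca
    rcases hm with ⟨mab, mbc⟩ | ⟨mab, mbc⟩
    · have e1 := pre_alt cs hbc.symm hca hab' 4 (.inr (by rw [M.symmetric]; exact mbc))
      have e2 := pre_alt cs hab hac' hcb' 4 (.inr mab)
      simp only [alt, Pre] at e1 e2
      set y := cs.simple b * (cs.simple c * (cs.simple a * w)) with hy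
      have hy' : cs.simple b * (cs.simple a * (cs.simple c * w)) = y := by rw [hAC]
      rw [hy'] at e2
      have l3 := isLeftDescent_simple_mul cs e1.2.1
      rw [← hy] at l3
      exact ih _ (by omega) y rfl e2.2.2.1 e1.2.2.1 e2.2.2.2.1 e1.2.2.2.1
    · have e1 := pre_alt cs hbc.symm hca hab' 6 (.inr (by rw [M.symmetric]; exact mbc))
      have e2 := pre_alt cs hab hac' hcb' 3 (.inr mab.ge)
      simp only [alt, Pre] at e1 e2
      set y := cs.simple b * (cs.simple c * (cs.simple a * w)) with hy
      have hy' : cs.simple b * (cs.simple a * (cs.simple c * w)) = y := by rw [hAC]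
      rw [hy'] at e2
      have e3 := pre_alt cs hac e2.2.2.1 e1.2.2.1 2 (.inr mac.ge)
      have e4 := pre_alt cs hac.symm e1.2.2.1 e2.2.2.1 2 (.inr (by rw [M.symmetric, mac]))
      simp only [alt, Pre] at e3 e4
      have e5 := pre_alt cs hab e4.2.1 e1.2.2.2.1 3 (.inr mab.ge)
      have e6 := pre_alt cs hab.symm e1.2.2.2.1 e4.2.1 3 (.inr (by rw [M.symmetric, mab]))
      simp only [alt, Pre] at e5 e6
      have l3 := isLeftDescent_simple_mul cs e1.2.1
      have l4 := isLeftDescent_simple_mul cs e1.2.2.1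
      have l5 := isLeftDescent_simple_mul cs e1.2.2.2.1
      rw [← hy] at l3
      exact ih _ (by omega) (cs.simple b * (cs.simple c * y)) rfl e6.2.1 e1.2.2.2.2.1
        e6.2.2.1 e1.2.2.2.2.2.1

/-- Three common left descents of an element have, up to a permutation, bonds `(m, 2, 2)` or `(2,
3, 3)`, `(2, 3, 4)`, `(2, 3, 5)`. A property invariant under permutations of the three letters
need therefore only be checked in these cases. -/
theorem rankThree_induct {w : W} {P : I → I → I → Prop}
    (hswap : ∀ x y z, P x y z → P y x z) (hrot : ∀ x y z, P x y z → P y z x)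
    (h22 : ∀ p q r, p ≠ q → q ≠ r → p ≠ r → cs.IsLeftDescent w p → cs.IsLeftDescent w q →
      cs.IsLeftDescent w r → M p r = 2 → M q r = 2 → P p q r)
    (h3 : ∀ p q r, p ≠ q → q ≠ r → p ≠ r → cs.IsLeftDescent w p → cs.IsLeftDescent w q →
      cs.IsLeftDescent w r → M p r = 2 → M p q = 3 → (M q r = 3 ∨ M q r = 4 ∨ M q r = 5) →
      P p q r)
    {a b c : I} (hab : a ≠ b) (hbc : b ≠ c) (hac : a ≠ c) (ha : cs.IsLeftDescent w a)
    (hb : cs.IsLeftDescent w b) (hc : cs.IsLeftDescent w c) : P a b c := by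
  have ge2 : ∀ {s t : I}, s ≠ t → cs.IsLeftDescent w s → cs.IsLeftDescent w t → 2 ≤ M s t := by
    intro s t hst hs ht
    have := order_ne_zero cs hst hs ht
    have := M.off_diagonal s t hst
    omega
  have key : ∀ p q r, p ≠ q → q ≠ r → p ≠ r → cs.IsLeftDescent w p → cs.IsLeftDescent w q →
      cs.IsLeftDescent w r → M p r = 2 → P p q r := by
    intro p q r hpq hqr hpr hp hq hr mpr
    have g1 := ge2 hpq hp hq
    have g2 := ge2 hqr hq hr
    rcases Nat.lt_or_ge 2 (M q r) with l2 | l2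
    swap
    · exact h22 p q r hpq hqr hpr hp hq hr mpr (by omega)
    rcases Nat.lt_or_ge 2 (M p q) with l1 | l1
    swap
    · have := h22 r q p hqr.symm hpq.symm hpr.symm hr hq hp (by rw [M.symmetric, mpr])
        (by rw [M.symmetric]; omega)
      exact hrot _ _ _ (hrot _ _ _ (hswap _ _ _ this))
    have start : ∀ x y : I, x ≠ y → cs.IsLeftDescent w x → cs.IsLeftDescent w y →
        cs.IsLeftDescent (cs.simple x * w) y := by
      intro x y hxy hx hy
      have := pre_alt cs hxy hx hy 2 (.inr (ge2 hxy hx hy))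
      exact this.2.1
    by_cases m1 : M p q = 3
    · by_cases m2 : M q r ≤ 5
      · exact h3 p q r hpq hqr hpr hp hq hr mpr m1 (by omega)
      · exact (no_descent_comm cs hpq hqr hpr mpr (.inr ⟨m1, by omega⟩) _ w rfl hp hr
          (start _ _ hpq hp hq) (start _ _ hqr.symm hr hq)).elim
    · by_cases m2 : M q r = 3
      · by_cases m3 : M p q ≤ 5
        · have := h3 r q p hqr.symm hpq.symm hpr.symm hr hq hp (by rw [M.symmetric, mpr])
            (by rw [M.symmetric, m2]) (by rw [M.symmetric q p]; omega)
          exact hrot _ _ _ (hrot _ _ _ (hswap _ _ _ this))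
        · exact (no_descent_comm cs hqr.symm hpq.symm hpr.symm (by rw [M.symmetric, mpr])
            (.inr ⟨by rw [M.symmetric, m2], by rw [M.symmetric]; omega⟩) _ w rfl hr hp
            (start _ _ hqr.symm hr hq) (start _ _ hpq hp hq)).elim
      · exact (no_descent_comm cs hpq hqr hpr mpr (.inl ⟨by omega, by omega⟩) _ w rfl hp hr
          (start _ _ hpq hp hq) (start _ _ hqr.symm hr hq)).elim
  have g1 := ge2 hab ha hb
  have g2 := ge2 hbc hb hc
  have g3 := ge2 hac ha hc
  by_cases m1 : M a c = 2
  · exact key a b c hab hbc hac ha hb hc m1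
  by_cases m2 : M a b = 2
  · exact hrot _ _ _ (hswap _ _ _ (key a c b hac hbc.symm hab ha hc hb m2))
  by_cases m3 : M b c = 2
  · exact hswap _ _ _ (key b a c hab.symm hac hbc hb ha hc m3)
  have h := (pre_alt cs hbc hb hc 2 (.inr g2)).2.1
  exact (no_descent_large cs _ w rfl a b c hab hbc hac (by omega) (by omega) (by omega)
    ha hb h).elim
end RankThree
end Stmt14

/-! ### Noncommutative polynomials in three letters and rewriting -/

namespace Stmt14

/-- The three letters of the rank-three computations; `a` and `c` will commute. -/
inductive Lt | a | b | c

/-- Boolean equality of letters. -/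
def leq : Lt → Lt → Bool
  | .a, .a => true
  | .b, .b => true
  | .c, .c => true
  | _, _ => false

/-- An integer polynomial, as a list of terms made of the exponent list of a monomial and a
coefficient. -/
abbrev Coef := List (List ℕ × ℤ)

/-- Product of monomials: addition of exponent lists. -/
def mmul : List ℕ → List ℕ → List ℕ
  | [], m => m
  | x :: l, [] => x :: l
  | x :: l, y :: m => (x + y) :: mmul l m

/-- Lexicographic comparison of exponent lists, a list counting as smaller than its proper
prefixes. -/
def mcmp : List ℕ → List ℕ → Ordering
  | [], [] => .eq
  | _ :: _, [] => .lt
  | [], _ :: _ => .gt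
  | x :: l, y :: m => bif Nat.beq x y then mcmp l m else bif Nat.blt x y then .lt else .gt

/-- Adds a term to a sorted polynomial, dropping the monomial if its coefficient cancels. -/
def cins (m : List ℕ) (n : ℤ) : Coef → Coef
  | [] => [(m, n)]
  | (m', n') :: l => match mcmp m m' with
    | .lt => (m, n) :: (m', n') :: l
    | .gt => (m', n') :: cins m n l
    | .eq => match Int.add n n' with
      | .ofNat 0 => l
      | k => (m, k) :: l

/-- Sum of polynomials. -/
def cadd : Coef → Coef → Coef
  | [], q => q
  | x :: l, [] => x :: l
  | (m, n) :: l, q => cins m n (cadd l q)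

/-- Product of a term and a polynomial. -/
def cmul1 (m : List ℕ) (n : ℤ) : Coef → Coef
  | [] => []
  | (m', n') :: l => (mmul m m', Int.mul n n') :: cmul1 m n l

/-- Product of polynomials. -/
def cmul : Coef → Coef → Coef
  | [], _ => []
  | (m, n) :: l, q => cadd (cmul1 m n q) (cmul l q)

/-- A noncommutative polynomial in `a`, `b`, `c`: the coefficient of the empty word, and the
cofactors of `a`, `b` and `c`, that is, what remains of the words beginning with each letter when
this letter is removed. -/
inductive Trie
  | nil
  | node (x : Coef) (ta tb tc : Trie)

namespace Trie

/-- Whether the polynomial is the empty tree. -/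
def isNil : Trie → Bool
  | nil => true
  | node _ _ _ _ => false

/-- The node with given entries, or the empty tree if all of them are empty. -/
def mk : Coef → Trie → Trie → Trie → Trie
  | [], nil, nil, nil => nil
  | x, ta, tb, tc => node x ta tb tc

/-- Sum of noncommutative polynomials. -/
def add : Trie → Trie → Trie
  | nil, t => t
  | node x ta tb tc, nil => node x ta tb tc
  | node x ta tb tc, node y sa sb sc => mk (cadd x y) (add ta sa) (add tb sb) (add tc sc)

/-- Product of a scalar and a noncommutative polynomial. -/
def smul (x : Coef) : Trie → Trie
  | nil => nil
  | node y ta tb tc => node (cmul x y) (smul x ta) (smul x tb) (smul x tc)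

/-- Left multiplication by a letter, without rewriting. -/
def pre (s : Lt) (t : Trie) : Trie :=
  bif t.isNil then nil else
  match s with
  | .a => node [] t nil nil
  | .b => node [] nil t nil
  | .c => node [] nil nil t

/-- The cofactor of the terms whose words begin with the given word. -/
def sub : List Lt → Trie → Trie
  | [], t => t
  | _ :: _, nil => nil
  | .a :: l, node _ ta _ _ => sub l ta
  | .b :: l, node _ _ tb _ => sub l tb
  | .c :: l, node _ _ _ tc => sub l tc

/-- The terms whose words do not begin with the given word. -/
def prune : List Lt → Trie → Trie
  | [], _ => nil
  | _ :: _, nil => nil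
  | .a :: l, node x ta tb tc => mk x (prune l ta) tb tc
  | .b :: l, node x ta tb tc => mk x ta (prune l tb) tc
  | .c :: l, node x ta tb tc => mk x ta tb (prune l tc)

/-- Left multiplication of `t` by a noncommutative polynomial, where a letter multiplies on the
left through `f`. -/
def lin (f : Lt → Trie → Trie) : Trie → Trie → Trie
  | nil, _ => nil
  | node x ta tb tc, t => add (bif x.isEmpty then nil else smul x t) (add (f .a (lin f ta t)) (add (f .b (lin f tb t))
      (f .c (lin f tc t))))

/-- Left multiplication of `t` by the letter `s`, with rewriting. A rule `(s', l, r)` means `s' l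
→ r`: the terms of `t` beginning with `l` are taken out, and their cofactor is multiplied by `r`,
where letters multiply through `f`. -/
def appl (f : Lt → Trie → Trie) (s : Lt) : List (Lt × List Lt × Trie) → Trie → Trie
  | [], t => pre s t
  | (s', l, r) :: rs, t =>
    bif leq s' s then
      match sub l t with
      | nil => appl f s rs t
      | t' => add (lin f r t') (appl f s rs (prune l t))
    else appl f s rs t

/-- Left multiplication by a letter, with rewriting by the rules `rs` to recursion depth at most
`n`. -/
def act (rs : List (Lt × List Lt × Trie)) : ℕ → Lt → Trie → Trie
  | 0, s, t => pre s t
  | n + 1, s, t => bif t.isNil then nil else appl (act rs n) s rs t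

/-- A word, as a noncommutative polynomial. -/
def word : List Lt → Trie
  | [] => node [([], 1)] nil nil nil
  | s :: l => pre s (word l)

/-- Left multiplication of `t` by a word, its letters acting one after the other from right to
left with rewriting at each step. -/
def nf (rs : List (Lt × List Lt × Trie)) (n : ℕ) (l : List Lt) (t : Trie) : Trie :=
  l.foldr (act rs n) t

/-- Whether all coefficients are zero. -/
def isZero : Trie → Bool
  | nil => true
  | node x ta tb tc => x.isEmpty && (isZero ta && (isZero tb && isZero tc))

/-- Whether all words have length at most the given bound. -/
def bd : Trie → ℕ → Bool
  | nil, _ => true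
  | node _ ta tb tc, 0 => isNil ta && (isNil tb && isNil tc)
  | node _ ta tb tc, d + 1 => bd ta d && (bd tb d && bd tc d)

/-- Opposite of a noncommutative polynomial. -/
def neg (t : Trie) : Trie := smul [([], -1)] t

/-- Right-hand side of a new rule with left-hand side the word `L`, obtained from a rule `s l → r`
and a word `v`. The word `s l v` is reduced in two ways, letter by letter and by applying the rule
at once; the difference of the results vanishes, and it is added to `L` with the sign, chosen
through `o`, for which `L` cancels. -/
def derive (rs : List (Lt × List Lt × Trie)) (n : ℕ) (s : Lt) (l : List Lt) (r : Trie)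
    (v : List Lt) (o : Bool) (L : List Lt) : Trie :=
  let t := nf rs n v (word [])
  let p := nf rs n (s :: l) t
  let q := lin (act rs n) r t
  add (word L) (bif o then add q (neg p) else add p (neg q))

/-- The rule `s s → x s + y`. -/
def quadR (s : Lt) (x y : Coef) : Lt × List Lt × Trie :=
  (s, [s], add (smul x (word [s])) (smul y (word [])))

/-- The lower terms `∑ x_j (alt s t j - alt t s j)` of a deformed braid relation, listed as pairs
`(j, x_j)`. -/
def terms (s t : Lt) : List (ℕ × Coef) → Trie
  | [] => nil
  | (j, x) :: l => add (smul x (add (word (alt s t j)) (neg (word (alt t s j))))) (terms s t l)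

/-- The deformed braid relation of order `m`, as a rule rewriting `alt s t m` in terms of `alt t s
m` and lower terms. -/
def braidR (s t : Lt) (m : ℕ) (l : List (ℕ × Coef)) : Lt × List Lt × Trie :=
  (s, alt t s (m - 1), add (word (alt t s m)) (neg (terms s t l)))

end Trie
open Trie

/-- Checks that the left sides of the three deformed braid relations, multiplied on the right by
the words `v1`, `v2`, `v3`, add up to zero. The leading words are one letter longer than what the
rules may be applied to, so their sum is grouped according to first letters: the three cofactors
`pa`, `pb`, `pc` are rewritten first, and only once cancellation has brought them to degree at
most `d` are the first letters applied. -/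
def cocyc (rs : List (Lt × List Lt × Trie)) (n m : ℕ) (lab lbc : List (ℕ × Coef))
    (v1 v2 v3 : List Lt) (d : ℕ) : Bool :=
  let t1 := nf rs n v1 (word [])
  let t2 := nf rs n v2 (word [])
  let t3 := nf rs n v3 (word [])
  let pa := add (nf rs n (alt .b .a 2) t1) (neg (nf rs n [.c] t3))
  let pb := add (nf rs n (alt .c .b (m - 1)) t2) (neg (nf rs n (alt .a .b 2) t1))
  let pc := add (nf rs n [.a] t3) (neg (nf rs n (alt .b .c (m - 1)) t2))
  let f := act rs n
  bd pa d && (bd pb d && (bd pc d && isZero (add (f .a pa) (add (f .b pb) (add (f .c pc)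
    (add (lin f (terms .a .b lab) t1) (lin f (terms .b .c lbc) t2)))))))

end Stmt14

/-! ### Soundness of the rewriting procedure -/

namespace Stmt14
open Trie
section Sound
variable {R V : Type*} [CommRing R] [AddCommGroup V] [Module R V] (ρ : List R)

/-- Value of a monomial at the point with coordinates `ρ`. -/
def evM : List R → List ℕ → R
  | r :: ρ, e :: m => r ^ e * evM ρ m
  | _, _ => 1

lemma evM_mmul (l m : List ℕ) : evM ρ (mmul l m) = evM ρ l * evM ρ m := by
  induction l generalizing m ρ with
  | nil => cases ρ <;> simp [mmul, evM]
  | cons x l ih =>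
    cases m with
    | nil => cases ρ <;> simp [mmul, evM]
    | cons y m =>
      cases ρ with
      | nil => simp [evM]
      | cons r ρ => simp only [mmul, evM, ih, pow_add]; ring

/-- Value of a polynomial at the point with coordinates `ρ`. -/
def evC : Coef → R
  | [] => 0
  | (m, n) :: l => (n : R) * evM ρ m + evC l

lemma mcmp_eq {l m : List ℕ} (h : mcmp l m = .eq) : l = m := by
  induction l generalizing m with
  | nil => cases m <;> simp_all [mcmp]
  | cons x l ih =>
    cases m with
    | nil => simp [mcmp] at h
    | cons y m =>
      rw [mcmp] at h
      cases h1 : Nat.beq x y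
      · rw [h1, cond_false] at h
        cases h2 : Nat.blt x y <;> simp [h2] at h
      · rw [h1, cond_true] at h
        rw [ih h, Nat.eq_of_beq_eq_true h1]

lemma evC_cins (m : List ℕ) (n : ℤ) (q : Coef) :
    evC ρ (cins m n q) = (n : R) * evM ρ m + evC ρ q := by
  induction q with
  | nil => rfl
  | cons t l ih =>
    obtain ⟨m', n'⟩ := t
    rw [cins]
    cases h : mcmp m m' with
    | lt => rfl
    | gt => simp only [evC, ih]; ring
    | eq =>
      have e := mcmp_eq h
      subst e
      have key : ((Int.add n n' : ℤ) : R) = n + n' := Int.cast_add n n'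
      simp only [evC]
      split
      · rename_i h0
        rw [h0] at key
        have : ((Int.ofNat 0 : ℤ) : R) = 0 := Int.cast_zero
        rw [this] at key
        rw [← add_assoc, ← add_mul, ← key]; ring
      · rw [evC, key]; ring

lemma evC_cadd (p q : Coef) : evC ρ (cadd p q) = evC ρ p + evC ρ q := by
  induction p with
  | nil => simp [cadd, evC]
  | cons t l ih =>
    cases q with
    | nil => simp [cadd, evC]
    | cons x q =>
      obtain ⟨m, n⟩ := t
      rw [cadd, evC_cins, ih, evC.eq_2 ρ m, add_assoc]
      simp

lemma evC_cmul (p q : Coef) : evC ρ (cmul p q) = evC ρ p * evC ρ q := by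
  have h1 : ∀ (m : List ℕ) (n : ℤ) (q : Coef),
      evC ρ (cmul1 m n q) = (n : R) * evM ρ m * evC ρ q := by
    intro m n q
    induction q with
    | nil => simp [cmul1, evC]
    | cons t l ih =>
      obtain ⟨m', n'⟩ := t
      have key : ((Int.mul n n' : ℤ) : R) = n * n' := Int.cast_mul n n'
      rw [cmul1, evC, ih, evM_mmul, key, evC]; ring
  induction p with
  | nil => simp [cmul, evC]
  | cons t l ih =>
    obtain ⟨m, n⟩ := t
    rw [cmul, evC_cadd, h1, ih, evC]; ring

variable (τ : Lt → Module.End R V)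

/-- Value of a noncommutative polynomial at a vector, the letters acting through `τ`. -/
def ev : Trie → V → V
  | .nil, _ => 0
  | .node x ta tb tc, p => evC ρ x • p + (τ .a (ev ta p) + (τ .b (ev tb p) + τ .c (ev tc p)))

lemma ev_mk (x : Coef) (ta tb tc : Trie) (p : V) :
    ev ρ τ (mk x ta tb tc) p = ev ρ τ (.node x ta tb tc) p := by
  unfold mk
  split
  · simp [ev, evC]
  · rfl

lemma ev_add (s t : Trie) (p : V) : ev ρ τ (add s t) p = ev ρ τ s p + ev ρ τ t p := by
  induction s generalizing t with
  | nil => simp [add, ev]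
  | node x ta tb tc iha ihb ihc =>
    cases t with
    | nil => simp [add, ev]
    | node y sa sb sc =>
      simp only [add, ev_mk, ev, iha, ihb, ihc, evC_cadd, map_add, add_smul]
      abel

lemma ev_smul (x : Coef) (t : Trie) (p : V) : ev ρ τ (smul x t) p = evC ρ x • ev ρ τ t p := by
  induction t with
  | nil => simp [smul, ev]
  | node y ta tb tc iha ihb ihc =>
    simp only [smul, ev, iha, ihb, ihc, evC_cmul, map_smul, smul_add, mul_smul]

lemma ev_neg (t : Trie) (p : V) : ev ρ τ (neg t) p = - ev ρ τ t p := by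
  rw [neg, ev_smul]
  cases ρ <;> simp [evC, evM]

lemma isNil_iff {t : Trie} : t.isNil = true ↔ t = .nil := by cases t <;> simp [isNil]

lemma ev_pre (s : Lt) (t : Trie) (p : V) : ev ρ τ (pre s t) p = τ s (ev ρ τ t p) := by
  unfold pre
  cases h : t.isNil
  · cases s <;> simp [ev, evC]
  · rw [isNil_iff.1 h]; simp [ev]

/-- Action of a word on a vector. -/
def evW : List Lt → V → V
  | [], p => p
  | s :: l, p => τ s (evW l p)

lemma evW_append (l m : List Lt) (p : V) : evW τ (l ++ m) p = evW τ l (evW τ m p) := by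
  induction l with
  | nil => rfl
  | cons s l ih => simp [evW, ih]

lemma evW_zero (l : List Lt) : evW τ l 0 = 0 := by
  induction l with
  | nil => rfl
  | cons s l ih => simp [evW, ih]

lemma ev_word (l : List Lt) (p : V) : ev ρ τ (word l) p = evW τ l p := by
  induction l with
  | nil => cases ρ <;> simp [word, ev, evC, evM, evW]
  | cons s l ih => rw [word, ev_pre, ih, evW]

lemma ev_sub_prune (l : List Lt) (t : Trie) (p : V) :
    ev ρ τ t p = evW τ l (ev ρ τ (sub l t) p) + ev ρ τ (prune l t) p := by
  induction l generalizing t with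
  | nil => simp [sub, prune, evW, ev]
  | cons s l ih =>
    cases t with
    | nil => cases s <;> simp [sub, prune, ev, evW, evW_zero]
    | node x ta tb tc =>
      cases s
      · simp only [sub, prune, evW, ev_mk, ev]
        conv_lhs => rw [ih ta, map_add]
        abel
      · simp only [sub, prune, evW, ev_mk, ev]
        conv_lhs => rw [ih tb, map_add]
        abel
      · simp only [sub, prune, evW, ev_mk, ev]
        conv_lhs => rw [ih tc, map_add]
        abel

lemma ev_isZero {t : Trie} (h : t.isZero = true) (p : V) : ev ρ τ t p = 0 := by
  induction t with
  | nil => rfl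
  | node x ta tb tc iha ihb ihc =>
    simp only [isZero, Bool.and_eq_true, List.isEmpty_iff] at h
    simp [ev, iha h.2.1, ihb h.2.2.1, ihc h.2.2.2, h.1, evC]

lemma bd_nil (d : ℕ) : bd .nil d = true := by cases d <;> rfl

lemma bd_succ {t : Trie} {d : ℕ} (h : bd t d = true) : bd t (d + 1) = true := by
  induction t generalizing d with
  | nil => rfl
  | node x ta tb tc iha ihb ihc =>
    cases d with
    | zero =>
      simp only [bd, Bool.and_eq_true, isNil_iff] at h ⊢
      obtain ⟨rfl, rfl, rfl⟩ := h
      simp [bd]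
    | succ d =>
      simp only [bd, Bool.and_eq_true] at h ⊢
      exact ⟨iha h.1, ihb h.2.1, ihc h.2.2⟩

lemma bd_mono {t : Trie} {d d' : ℕ} (h : bd t d = true) (hd : d ≤ d') : bd t d' = true := by
  induction hd with
  | refl => exact h
  | step _ ih => exact bd_succ ih

lemma bd_mk {x : Coef} {ta tb tc : Trie} {d : ℕ} (h : bd (.node x ta tb tc) d = true) :
    bd (mk x ta tb tc) d = true := by
  unfold mk
  split
  · exact bd_nil d
  · exact h

lemma bd_add {s t : Trie} {d : ℕ} (hs : bd s d = true) (ht : bd t d = true) :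
    bd (add s t) d = true := by
  induction s generalizing t d with
  | nil => simpa [add] using ht
  | node x ta tb tc iha ihb ihc =>
    cases t with
    | nil => simpa [add] using hs
    | node y sa sb sc =>
      apply bd_mk
      cases d with
      | zero =>
        simp only [bd, Bool.and_eq_true, isNil_iff] at hs ht ⊢
        obtain ⟨rfl, rfl, rfl⟩ := hs
        simpa [add] using ht
      | succ d =>
        simp only [bd, Bool.and_eq_true] at hs ht ⊢
        exact ⟨iha hs.1 ht.1, ihb hs.2.1 ht.2.1, ihc hs.2.2 ht.2.2⟩

lemma bd_smul {x : Coef} {t : Trie} {d : ℕ} (h : bd t d = true) : bd (smul x t) d = true := by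
  induction t generalizing d with
  | nil => exact h
  | node y ta tb tc iha ihb ihc =>
    cases d with
    | zero =>
      simp only [bd, Bool.and_eq_true, isNil_iff, smul] at h ⊢
      obtain ⟨rfl, rfl, rfl⟩ := h
      simp [smul]
    | succ d =>
      simp only [bd, Bool.and_eq_true, smul] at h ⊢
      exact ⟨iha h.1, ihb h.2.1, ihc h.2.2⟩

lemma bd_pre {s : Lt} {t : Trie} {d : ℕ} (h : bd t d = true) : bd (pre s t) (d + 1) = true := by
  unfold pre
  cases h' : t.isNil
  · cases s <;> simp [bd, h]
  · exact bd_nil _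

lemma bd_word (l : List Lt) : bd (word l) l.length = true := by
  induction l with
  | nil => rfl
  | cons s l ih => exact bd_pre ih

lemma bd_sub {l : List Lt} {t : Trie} {d : ℕ} (h : bd t d = true) :
    sub l t = .nil ∨ ∃ d', d = d' + l.length ∧ bd (sub l t) d' = true := by
  induction l generalizing t d with
  | nil => exact .inr ⟨d, rfl, h⟩
  | cons s l ih =>
    cases t with
    | nil => left; cases s <;> rfl
    | node x ta tb tc =>
      cases d with
      | zero =>
        simp only [bd, Bool.and_eq_true, isNil_iff] at h
        obtain ⟨rfl, rfl, rfl⟩ := h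
        left
        cases s <;> cases l <;> simp [sub]
      | succ d =>
        simp only [bd, Bool.and_eq_true] at h
        have : ∀ t', bd t' d = true → sub l t' = .nil ∨
            ∃ d', d + 1 = d' + (l.length + 1) ∧ bd (sub l t') d' = true := by
          intro t' h'
          rcases ih h' with h1 | ⟨d', h1, h2⟩
          · exact .inl h1
          · exact .inr ⟨d', by omega, h2⟩
        cases s
        · exact this _ h.1
        · exact this _ h.2.1
        · exact this _ h.2.2

lemma bd_prune {l : List Lt} {t : Trie} {d : ℕ} (h : bd t d = true) : bd (prune l t) d = true := by
  induction l generalizing t d with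
  | nil => exact bd_nil d
  | cons s l ih =>
    have hn : prune l .nil = .nil := by
      cases l with
      | nil => rfl
      | cons s l => cases s <;> rfl
    cases t with
    | nil => cases s <;> exact h
    | node x ta tb tc =>
      cases d with
      | zero =>
        simp only [bd, Bool.and_eq_true, isNil_iff] at h
        obtain ⟨rfl, rfl, rfl⟩ := h
        cases s <;> simp [prune, hn] <;> apply bd_mk <;> rfl
      | succ d =>
        simp only [bd, Bool.and_eq_true] at h
        cases s <;> apply bd_mk <;> simp [bd, h, ih]

variable (F : ℕ → Submodule R V) (hF : Monotone F) (hτ : ∀ s k p, p ∈ F k → τ s p ∈ F (k + 1))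
include hF hτ

lemma ev_mem {t : Trie} {d k : ℕ} {p : V} (hp : p ∈ F k) (h : bd t d = true) :
    ev ρ τ t p ∈ F (k + d) := by
  induction t generalizing d with
  | nil => exact zero_mem _
  | node x ta tb tc iha ihb ihc =>
    have h0 : evC ρ x • p ∈ F (k + d) := Submodule.smul_mem _ _ (hF (by omega) hp)
    cases d with
    | zero =>
      simp only [bd, Bool.and_eq_true, isNil_iff] at h
      obtain ⟨rfl, rfl, rfl⟩ := h
      simpa [ev] using h0
    | succ d =>
      simp only [bd, Bool.and_eq_true] at h
      exact add_mem h0 (add_mem (hτ _ _ _ (iha h.1)) (add_mem (hτ _ _ _ (ihb h.2.1))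
        (hτ _ _ _ (ihc h.2.2))))

omit hF hτ

/-- A rule `s l → r` is valid up to level `K`: it does not increase the length of words, and it
holds on the vectors of degree `k` whenever `k` plus the length of `s l` is at most `K`. -/
def RuleOK (K : ℕ) (r : Lt × List Lt × Trie) : Prop :=
  ∀ k p, p ∈ F k → k + (r.2.1.length + 1) ≤ K →
    τ r.1 (evW τ r.2.1 p) = ev ρ τ r.2.2 p ∧ bd r.2.2 (r.2.1.length + 1) = true

/-- The procedure `f` computes left multiplication by a letter correctly on polynomials evaluated
at `p ∈ F k`, as long as the total degree is at most `K`, and increases lengths of words by at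
most one. -/
def Sound (K k : ℕ) (p : V) (f : Lt → Trie → Trie) : Prop :=
  (∀ s, f s .nil = .nil) ∧ ∀ s t d, bd t d = true → k + d + 1 ≤ K →
    ev ρ τ (f s t) p = τ s (ev ρ τ t p) ∧ bd (f s t) (d + 1) = true

variable {ρ τ F} {K k : ℕ} {p : V}

lemma lin_sound {f : Lt → Trie → Trie} (hf : Sound ρ τ K k p f) {r t : Trie} {n d : ℕ}
    (hr : bd r n = true) (ht : bd t d = true) (hK : k + d + n ≤ K) :
    ev ρ τ (lin f r t) p = ev ρ τ r (ev ρ τ t p) ∧ bd (lin f r t) (d + n) = true := by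
  induction r generalizing n with
  | nil => exact ⟨rfl, bd_nil _⟩
  | node x ta tb tc iha ihb ihc =>
    have h0 : ev ρ τ (bif x.isEmpty then Trie.nil else smul x t) p = evC ρ x • ev ρ τ t p ∧
        bd (bif x.isEmpty then Trie.nil else smul x t) (d + n) = true := by
      cases x with
      | nil => exact ⟨by simp [ev, evC], bd_nil _⟩
      | cons y x => exact ⟨ev_smul _ _ _ _ _, bd_mono (bd_smul ht) (by omega)⟩
    cases n with
    | zero =>
      simp only [bd, Bool.and_eq_true, isNil_iff] at hr
      obtain ⟨rfl, rfl, rfl⟩ := hr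
      simp only [lin, hf.1, ev_add, ev, h0.1, map_zero]
      exact ⟨trivial, bd_add h0.2 (bd_add (bd_nil _) (bd_add (bd_nil _) (bd_nil _)))⟩
    | succ n =>
      simp only [bd, Bool.and_eq_true] at hr
      have ia := iha hr.1 (by omega)
      have ib := ihb hr.2.1 (by omega)
      have ic := ihc hr.2.2 (by omega)
      have ja := hf.2 .a _ _ ia.2 (by omega)
      have jb := hf.2 .b _ _ ib.2 (by omega)
      have jc := hf.2 .c _ _ ic.2 (by omega)
      simp only [lin, ev_add, ev, h0.1, ja.1, jb.1, jc.1, ia.1, ib.1, ic.1]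
      exact ⟨trivial, bd_add h0.2 (bd_add ja.2 (bd_add jb.2 jc.2))⟩

lemma leq_iff {s t : Lt} : leq s t = true ↔ s = t := by cases s <;> cases t <;> simp [leq]

include hF hτ in
lemma appl_sound {f : Lt → Trie → Trie} (hp : p ∈ F k) (hf : Sound ρ τ K k p f)
    {rs : List (Lt × List Lt × Trie)} (hrs : ∀ r ∈ rs, RuleOK ρ τ F K r) {s : Lt} {t : Trie} {d : ℕ}
    (ht : bd t d = true) (hK : k + d + 1 ≤ K) :
    ev ρ τ (appl f s rs t) p = τ s (ev ρ τ t p) ∧ bd (appl f s rs t) (d + 1) = true := by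
  induction rs generalizing t with
  | nil => exact ⟨ev_pre _ _ _ _ _, bd_pre ht⟩
  | cons r rs ih =>
    obtain ⟨s', l, r⟩ := r
    have ih' := fun t ht => ih (fun r hr => hrs r (List.mem_cons_of_mem _ hr)) (t := t) ht
    rw [appl]
    cases hs : leq s' s
    · exact ih' t ht
    · rw [leq_iff] at hs
      subst hs
      rw [cond_true]
      have hsp := ev_sub_prune ρ τ l t p
      have hb := bd_sub (l := l) ht
      split
      · exact ih' t ht
      · rename_i hne
        rcases hb with hb | ⟨d', hd, hb⟩
        · exact (hne hb).elim
        have h2 := hrs (s', l, r) List.mem_cons_self (k + d') (ev ρ τ (sub l t) p)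
          (ev_mem ρ τ F hF hτ hp hb) (by simp only; omega)
        obtain ⟨g3, h1⟩ := h2
        simp only at g3 h1
        have g1 := lin_sound hf h1 hb (by omega)
        have g2 := ih' (prune l t) (bd_prune ht)
        rw [ev_add, g1.1, g2.1, hsp, map_add, g3]
        refine ⟨rfl, bd_add (bd_mono g1.2 (by omega)) g2.2⟩

include hF hτ in
lemma act_sound (hp : p ∈ F k) {rs : List (Lt × List Lt × Trie)}
    (hrs : ∀ r ∈ rs, RuleOK ρ τ F K r) (n : ℕ) : Sound ρ τ K k p (act rs n) := by
  induction n with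
  | zero => exact ⟨fun s => rfl, fun s t d ht _ => ⟨ev_pre _ _ _ _ _, bd_pre ht⟩⟩
  | succ n ih =>
    refine ⟨fun s => rfl, fun s t d ht hK => ?_⟩
    rw [act]
    cases h : t.isNil
    · exact appl_sound hF hτ hp ih hrs ht hK
    · rw [isNil_iff.1 h]
      exact ⟨by simp [ev], bd_nil _⟩

include hF hτ in
lemma nf_sound (hp : p ∈ F k) {rs : List (Lt × List Lt × Trie)}
    (hrs : ∀ r ∈ rs, RuleOK ρ τ F K r) (n : ℕ) (l : List Lt) {t : Trie} {d : ℕ}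
    (ht : bd t d = true) (hK : k + d + l.length ≤ K) :
    ev ρ τ (nf rs n l t) p = evW τ l (ev ρ τ t p) ∧ bd (nf rs n l t) (d + l.length) = true := by
  induction l with
  | nil => exact ⟨rfl, ht⟩
  | cons s l ih =>
    rw [List.length_cons] at hK
    have i := ih (by omega)
    have j := (act_sound hF hτ hp hrs n).2 s _ _ i.2 (by omega)
    exact ⟨j.1.trans (by rw [i.1]; rfl), j.2⟩

include hF hτ in
/-- A derived rule whose left-hand side has the length of the word it comes from is valid at the
same level. -/
lemma derive_sound {rs : List (Lt × List Lt × Trie)} (hrs : ∀ r ∈ rs, RuleOK ρ τ F K r) (n : ℕ)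
    {s : Lt} {l : List Lt} {r : Trie} (hr : RuleOK ρ τ F K (s, l, r)) (v : List Lt) (o : Bool)
    (s0 : Lt) (L : List Lt) (hL : L.length = l.length + v.length) :
    RuleOK ρ τ F K (s0, L, derive rs n s l r v o (s0 :: L)) := by
  have hw : bd (word (s0 :: L)) (L.length + 1) = true := bd_word (s0 :: L)
  have hnil : bd (word []) 0 = true := rfl
  intro k p hp hK
  simp only at hK
  have a1 := nf_sound hF hτ hp hrs n v hnil (by omega)
  have a2 := nf_sound hF hτ hp hrs n (s :: l) a1.2 (by simp only [List.length_cons]; omega)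
  have a0 := hr _ _ (ev_mem ρ τ F hF hτ hp a1.2) (by simp only; omega)
  simp only at a0
  have a3 := lin_sound (act_sound hF hτ hp hrs n) a0.2 a1.2 (by omega)
  simp only [List.length_cons] at a2
  have e : ev ρ τ (nf rs n (s :: l) (nf rs n v (word []))) p =
      ev ρ τ (lin (act rs n) r (nf rs n v (word []))) p := by
    rw [a3.1, a2.1, ← a0.1]; rfl
  refine ⟨?_, ?_⟩
  · simp only [derive, ev_add, ev_word]
    cases o <;> simp [ev_add, ev_neg, e, evW]
  · simp only [derive]
    refine bd_add hw ?_
    cases o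
    · exact bd_add (bd_mono a2.2 (by omega)) (bd_smul (bd_mono a3.2 (by omega)))
    · exact bd_add (bd_mono a3.2 (by omega)) (bd_smul (bd_mono a2.2 (by omega)))

lemma ev_terms (s t : Lt) (l : List (ℕ × Coef)) (p : V) : ev ρ τ (terms s t l) p =
    (l.map fun x => evC ρ x.2 • (evW τ (alt s t x.1) p - evW τ (alt t s x.1) p)).sum := by
  induction l with
  | nil => rfl
  | cons x l ih =>
    obtain ⟨j, x⟩ := x
    rw [terms, ev_add, ev_smul, ev_add, ev_neg, ev_word, ev_word, ih]
    simp [sub_eq_add_neg]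

include hF hτ in
/-- A successful check gives the cocycle identity at total degree `K + 1`, one level above the
level `K` up to which the rules are valid: the cofactors of the first letters have degree at most
`K`, and after cancellation the final rewriting also takes place in degree at most `K`. -/
theorem cocyc_sound {rs : List (Lt × List Lt × Trie)} (hrs : ∀ r ∈ rs, RuleOK ρ τ F K r) {n m : ℕ}
    {lab lbc : List (ℕ × Coef)} {v1 v2 v3 : List Lt} {d : ℕ}
    (h : cocyc rs n m lab lbc v1 v2 v3 d = true) (hm : 2 ≤ m) {N : ℕ} (h1 : v1.length + 3 = N)
    (h2 : v2.length + m = N) (h3 : v3.length + 2 = N) (hd : d + 2 ≤ N)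
    (hab : bd (terms .a .b lab) 1 = true) (hbc : bd (terms .b .c lbc) (m - 2) = true)
    (hp : p ∈ F k) (hK : k + N = K + 1) :
    (evW τ (alt .a .b 3) (evW τ v1 p) - evW τ (alt .b .a 3) (evW τ v1 p) +
        ev ρ τ (terms .a .b lab) (evW τ v1 p)) +
      (evW τ (alt .b .c m) (evW τ v2 p) - evW τ (alt .c .b m) (evW τ v2 p) +
        ev ρ τ (terms .b .c lbc) (evW τ v2 p)) +
      (evW τ (alt .c .a 2) (evW τ v3 p) - evW τ (alt .a .c 2) (evW τ v3 p)) = 0 := by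
  obtain ⟨m, rfl⟩ : ∃ m', m = m' + 2 := ⟨m - 2, by omega⟩
  have hnil : bd (word []) 0 = true := rfl
  have A := act_sound hF hτ hp hrs n
  have a1 := nf_sound hF hτ hp hrs n v1 hnil (by omega)
  have a2 := nf_sound hF hτ hp hrs n v2 hnil (by omega)
  have a3 := nf_sound hF hτ hp hrs n v3 hnil (by omega)
  rw [ev_word] at a1 a2 a3
  have b1 := nf_sound hF hτ hp hrs n (alt .b .a 2) a1.2 (by simp only [length_alt]; omega)
  have b2 := nf_sound hF hτ hp hrs n (alt .a .b 2) a1.2 (by simp only [length_alt]; omega)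
  have b3 := nf_sound hF hτ hp hrs n (alt .c .b (m + 1)) a2.2 (by simp only [length_alt]; omega)
  have b4 := nf_sound hF hτ hp hrs n (alt .b .c (m + 1)) a2.2 (by simp only [length_alt]; omega)
  have b5 := nf_sound hF hτ hp hrs n [.c] a3.2 (by simp only [List.length_singleton]; omega)
  have b6 := nf_sound hF hτ hp hrs n [.a] a3.2 (by simp only [List.length_singleton]; omega)
  have l1 := lin_sound A hab a1.2 (by omega)
  have l2 := lin_sound A hbc a2.2 (by omega)
  simp only [cocyc, Bool.and_eq_true, show m + 2 - 1 = m + 1 from rfl] at h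
  obtain ⟨ha, hb, hc, hz⟩ := h
  have ja := A.2 .a _ _ ha (by omega)
  have jb := A.2 .b _ _ hb (by omega)
  have jc := A.2 .c _ _ hc (by omega)
  have key := ev_isZero ρ τ hz p
  simp only [ev_add, ja.1, jb.1, jc.1, l1.1, l2.1, ev_neg, b1.1, b2.1, b3.1, b4.1, b5.1, b6.1,
    a1.1, a2.1, a3.1, evW] at key
  simp only [alt, evW]
  rw [← key]
  simp only [map_add, map_neg]
  simp only [alt, evW]
  abel

end Sound
end Stmt14

/-! ### Rewriting rules and the computations in types A3, B3, H3 -/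

namespace Stmt14
open Trie Lt

section Rules
variable {R V : Type*} [CommRing R] [AddCommGroup V] [Module R V] {ρ : List R}
  {τ : Lt → Module.End R V} {F : ℕ → Submodule R V} {K : ℕ}

lemma quadR_ok {s : Lt} {x y : Coef} {u v : R} (hx : evC ρ x = u) (hy : evC ρ y = -v)
    (h : ∀ k p, p ∈ F k → k + 2 ≤ K → τ s (τ s p) = u • τ s p - v • p) :
    RuleOK ρ τ F K (quadR s x y) := by
  intro k p hp hK
  simp only [quadR, List.length_singleton] at hK ⊢
  refine ⟨?_, bd_add (bd_mono (bd_smul (bd_word [s])) (by simp))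
    (bd_mono (bd_smul (bd_word [])) (by simp))⟩
  simp only [evW, ev_add, ev_smul, ev_word, hx, hy]
  rw [h k p hp hK]
  module

lemma braidR_ok {s t : Lt} {m : ℕ} {l : List (ℕ × Coef)} (hl : bd (terms s t l) (m + 1) = true)
    (h : ∀ k p, p ∈ F k → k + (m + 1) ≤ K →
      evW τ (alt s t (m + 1)) p - evW τ (alt t s (m + 1)) p + ev ρ τ (terms s t l) p = 0) :
    RuleOK ρ τ F K (braidR s t (m + 1) l) := by
  intro k p hp hK
  simp only [braidR, Nat.add_sub_cancel, length_alt] at hK ⊢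
  refine ⟨?_, bd_add (by simpa [length_alt] using bd_word (alt t s (m + 1))) (bd_smul hl)⟩
  have := h k p hp hK
  rw [ev_add, ev_neg, ev_word]
  simp only [alt, evW] at this ⊢
  rw [← sub_eq_zero, ← this]
  abel

variable (hF : Monotone F) (hτ : ∀ s k p, p ∈ F k → τ s p ∈ F (k + 1))

lemma ok_append {rs : List (Lt × List Lt × Trie)} {r : Lt × List Lt × Trie}
    (h : ∀ r ∈ rs, RuleOK ρ τ F K r) (h' : RuleOK ρ τ F K r) :
    ∀ r' ∈ rs ++ [r], RuleOK ρ τ F K r' := by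
  intro r' hr'
  rcases List.mem_append.1 hr' with h1 | h1
  · exact h r' h1
  · rw [List.mem_singleton.1 h1]; exact h'

end Rules

/-- The defining relations as rules, for bonds `m_ac = 2`, `m_ab = 3`, `m_bc = m`. The quadratic
rules are `s s → u s + v` for `s = a, b` and `c c → U c + V`. -/
def baseR (m : ℕ) (u v U V : Coef) (lab lbc : List (ℕ × Coef)) : List (Lt × List Lt × Trie) :=
  [quadR a u v, quadR b u v, quadR c U V, braidR a c 2 [], braidR a b 3 lab, braidR b c m lbc]

/-- Right-hand side of a rule for `abca`, from the word `aba·c`. -/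
def d1 (rs : List (Lt × List Lt × Trie)) (lab : List (ℕ × Coef)) : Trie :=
  derive rs 20 a [b, a] (braidR a b 3 lab).2.2 [c] true [a, b, c, a]

/-- Right-hand side of a rule for `abcbab`, from the word `abca·ba`. -/
def d2 (rs : List (Lt × List Lt × Trie)) (r : Trie) : Trie :=
  derive rs 20 a [b, c, a] r [b, a] true [a, b, c, b, a, b]

/-- Right-hand side of a rule for `abcbcabcbc`, from the word `abcbab·cbcb`. -/
def d3 (rs : List (Lt × List Lt × Trie)) (r : Trie) : Trie :=
  derive rs 20 a [b, c, b, a, b] r [c, b, c, b] true [a, b, c, b, c, a, b, c, b, c]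

/-- The rules enlarged by the one for `abca`. -/
def ext1 (rs : List (Lt × List Lt × Trie)) (lab : List (ℕ × Coef)) : List (Lt × List Lt × Trie) :=
  rs ++ [(a, [b, c, a], d1 rs lab)]

/-- The rules enlarged by those for `abca` and `abcbab`. -/
def ext2 (rs : List (Lt × List Lt × Trie)) (lab : List (ℕ × Coef)) : List (Lt × List Lt × Trie) :=
  ext1 rs lab ++ [(a, [b, c, b, a, b], d2 (ext1 rs lab) (d1 rs lab))]

/-- The rules enlarged by those for `abca`, `abcbab` and `abcbcabcbc`. -/
def ext3 (rs : List (Lt × List Lt × Trie)) (lab : List (ℕ × Coef)) : List (Lt × List Lt × Trie) :=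
  ext2 rs lab ++ [(a, [b, c, b, c, a, b, c, b, c], d3 (ext2 rs lab) (d2 (ext1 rs lab) (d1 rs lab)))]

/-- The variable of index `i`. -/
def cvar : ℕ → Coef := fun i => [(List.replicate i 0 ++ [1], 1)]

/-- The opposite of the variable of index `i`. -/
def cnegVar : ℕ → Coef := fun i => [(List.replicate i 0 ++ [1], -1)]

/-- The cocycle identity of type `A3`, with variables `u, v, f` in this order. -/
theorem checkA3 : cocyc (ext1 (baseR 3 (cvar 0) (cnegVar 1) (cvar 0) (cnegVar 1) [(1, cvar 2)]
    [(1, cvar 2)]) [(1, cvar 2)]) 20 3 [(1, cvar 2)] [(1, cvar 2)]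
    [c, b, a] [a, b, c] [b, c, a, b] 4 = true := by decide +kernel

/-- The cocycle identity of type `B3`, with variables `u, v, U, V, f, g` in this order; `g` is the
parameter of the bond of order `4`. -/
theorem checkB3 : cocyc (ext2 (baseR 4 (cvar 0) (cnegVar 1) (cvar 2) (cnegVar 3) [(1, cvar 4)]
    [(2, cvar 5)]) [(1, cvar 4)]) 40 4 [(1, cvar 4)] [(2, cvar 5)]
    [c, b, a, c, b, c] [a, b, c, b, a] [b, a, c, b, c, a, b] 7 = true := by decide +kernel

/-- The cocycle identity of type `H3`, with variables `u, v, f, g, h` in this order; `g` and `h`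
are the parameters of the bond of order `5`. -/
theorem checkH3 : cocyc (ext3 (baseR 5 (cvar 0) (cnegVar 1) (cvar 0) (cnegVar 1) [(1, cvar 2)]
    [(3, cvar 3), (1, cvar 4)]) [(1, cvar 2)]) 40 5 [(1, cvar 2)] [(3, cvar 3), (1, cvar 4)]
    [c, b, c, b, a, b, c, b, c, a, b, c] [a, b, c, b, c, a, b, c, b, a]
    [b, c, b, c, a, b, c, b, c, a, b, c, b] 13 = true := by decide +kernel

end Stmt14

/-! ### Cocycle identities in types A3, B3, H3 -/

namespace Stmt14
open Trie Lt

section Cocycle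
variable {R V : Type*} [CommRing R] [AddCommGroup V] [Module R V] {ρ : List R}
  {τ : Lt → Module.End R V} {F : ℕ → Submodule R V} {K : ℕ}

/-- Left side of the deformed braid relation for the letters `s`, `t`, applied to `p`. The list
`l` gives the degrees and the coefficients of the lower terms. -/
def zev (τ : Lt → Module.End R V) (s t : Lt) (m : ℕ) (l : List (ℕ × R)) (p : V) : V :=
  evW τ (alt s t m) p - evW τ (alt t s m) p +
    (l.map fun x => x.2 • (evW τ (alt s t x.1) p - evW τ (alt t s x.1) p)).sum

lemma zev_eq (s t : Lt) (m : ℕ) (l : List (ℕ × Coef)) (p : V) :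
    zev τ s t m (l.map fun x => (x.1, evC ρ x.2)) p =
      evW τ (alt s t m) p - evW τ (alt t s m) p + ev ρ τ (terms s t l) p := by
  rw [zev, ev_terms, List.map_map]; rfl

lemma zev_swap (q : V) : zev τ c a 2 [] q =
    evW τ (alt .c .a 2) q - evW τ (alt .a .c 2) q := by simp [zev]

variable (hF : Monotone F) (hτ : ∀ s k p, p ∈ F k → τ s p ∈ F (k + 1))

lemma baseR_ok {m : ℕ} {xu xv xU xV : Coef} {u v U V' : R} {lab lbc : List (ℕ × Coef)}
    (hu : evC ρ xu = u) (hv : evC ρ xv = -v) (hU : evC ρ xU = U) (hV : evC ρ xV = -V')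
    (hlab : bd (terms .a .b lab) 3 = true) (hlbc : bd (terms .b .c lbc) (m + 1) = true)
    (qa : ∀ k p, p ∈ F k → k + 2 ≤ K → τ a (τ a p) = u • τ a p - v • p)
    (qb : ∀ k p, p ∈ F k → k + 2 ≤ K → τ b (τ b p) = u • τ b p - v • p)
    (qc : ∀ k p, p ∈ F k → k + 2 ≤ K → τ c (τ c p) = U • τ c p - V' • p)
    (hac : ∀ k p, p ∈ F k → k + 2 ≤ K → zev τ a c 2 [] p = 0)
    (hab : ∀ k p, p ∈ F k → k + 3 ≤ K →
      zev τ a b 3 (lab.map fun x => (x.1, evC ρ x.2)) p = 0)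
    (hbc : ∀ k p, p ∈ F k → k + (m + 1) ≤ K →
      zev τ b c (m + 1) (lbc.map fun x => (x.1, evC ρ x.2)) p = 0) :
    ∀ r ∈ baseR (m + 1) xu xv xU xV lab lbc, RuleOK ρ τ F K r := by
  simp only [baseR, List.forall_mem_cons]
  refine ⟨quadR_ok hu hv qa, quadR_ok hu hv qb, quadR_ok hU hV qc,
    braidR_ok (m := 1) rfl fun k p hp hk => ?_, braidR_ok hlab fun k p hp hk => ?_,
    braidR_ok hlbc fun k p hp hk => ?_, by simp⟩
  · rw [← zev_eq]; exact hac k p hp hk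
  · rw [← zev_eq]; exact hab k p hp hk
  · rw [← zev_eq]; exact hbc k p hp hk

include hF hτ

lemma ext1_ok {rs : List (Lt × List Lt × Trie)} (h : ∀ r ∈ rs, RuleOK ρ τ F K r)
    {lab : List (ℕ × Coef)} (hr : RuleOK ρ τ F K (braidR a b 3 lab)) :
    ∀ r ∈ ext1 rs lab, RuleOK ρ τ F K r :=
  ok_append h (derive_sound hF hτ h 20 hr [c] true a [b, c, a] rfl)

lemma ext2_ok {rs : List (Lt × List Lt × Trie)} (h : ∀ r ∈ rs, RuleOK ρ τ F K r)
    {lab : List (ℕ × Coef)} (hr : RuleOK ρ τ F K (braidR a b 3 lab)) :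
    ∀ r ∈ ext2 rs lab, RuleOK ρ τ F K r :=
  ok_append (ext1_ok hF hτ h hr) (derive_sound hF hτ (ext1_ok hF hτ h hr) 20
    (derive_sound hF hτ h 20 hr [c] true a [b, c, a] rfl) [b, a] true a [b, c, b, a, b] rfl)

lemma ext3_ok {rs : List (Lt × List Lt × Trie)} (h : ∀ r ∈ rs, RuleOK ρ τ F K r)
    {lab : List (ℕ × Coef)} (hr : RuleOK ρ τ F K (braidR a b 3 lab)) :
    ∀ r ∈ ext3 rs lab, RuleOK ρ τ F K r :=
  ok_append (ext2_ok hF hτ h hr) (derive_sound hF hτ (ext2_ok hF hτ h hr) 20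
    (derive_sound hF hτ (ext1_ok hF hτ h hr) 20
      (derive_sound hF hτ h 20 hr [c] true a [b, c, a] rfl) [b, a] true a [b, c, b, a, b] rfl)
    [c, b, c, b] true a [b, c, b, c, a, b, c, b, c] rfl)

variable {u v U V' f g h : R} {k : ℕ} {p : V}
  (qa : ∀ k p, p ∈ F k → k + 2 ≤ K → τ a (τ a p) = u • τ a p - v • p)
  (qb : ∀ k p, p ∈ F k → k + 2 ≤ K → τ b (τ b p) = u • τ b p - v • p)
  (qc : ∀ k p, p ∈ F k → k + 2 ≤ K → τ c (τ c p) = U • τ c p - V' • p)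
  (hac : ∀ k p, p ∈ F k → k + 2 ≤ K → zev τ a c 2 [] p = 0)
  (hab : ∀ k p, p ∈ F k → k + 3 ≤ K → zev τ a b 3 [(1, f)] p = 0)
  (hp : p ∈ F k)
include qa qb qc hac hab hp

/-- The cocycle identity for the longest element of `A3`, of length `6`. -/
theorem cocycle_A3 (hU : U = u) (hV : V' = v)
    (hbc : ∀ k p, p ∈ F k → k + 3 ≤ K → zev τ b c 3 [(1, f)] p = 0) (hK : k + 6 = K + 1) :
    zev τ a b 3 [(1, f)] (evW τ [c, b, a] p) + zev τ b c 3 [(1, f)] (evW τ [a, b, c] p) +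
      zev τ c a 2 [] (evW τ [b, c, a, b] p) = 0 := by
  subst hU hV
  have e1 : evC [U, V', f] (cvar 0) = U := by simp [evC, cvar, evM]
  have e2 : evC [U, V', f] (cnegVar 1) = -V' := by simp [evC, cnegVar, evM]
  have e3 : evC [U, V', f] (cvar 2) = f := by simp [evC, cvar, evM]
  have z := fun s t m q => zev_eq (ρ := [U, V', f]) (τ := τ) s t m [(1, cvar 2)] q
  simp only [List.map_cons, List.map_nil, e3] at z
  have hb := baseR_ok (ρ := [U, V', f]) (m := 2) (lab := [(1, cvar 2)]) (lbc := [(1, cvar 2)])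
    e1 e2 e1 e2 rfl rfl qa qb qc hac (by simpa [e3] using hab) (by simpa [e3] using hbc)
  have hr := hb (braidR a b 3 [(1, cvar 2)]) (by simp [baseR])
  have := cocyc_sound hF hτ (ext1_ok hF hτ hb hr) checkA3 (by norm_num) (N := 6) rfl rfl rfl
    (by norm_num) rfl rfl hp hK
  rw [z, z, zev_swap]
  exact this

/-- The cocycle identity for the longest element of `B3`, of length `9`. -/
theorem cocycle_B3
    (hbc : ∀ k p, p ∈ F k → k + 4 ≤ K → zev τ b c 4 [(2, g)] p = 0) (hK : k + 9 = K + 1) :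
    zev τ a b 3 [(1, f)] (evW τ [c, b, a, c, b, c] p) +
      zev τ b c 4 [(2, g)] (evW τ [a, b, c, b, a] p) +
      zev τ c a 2 [] (evW τ [b, a, c, b, c, a, b] p) = 0 := by
  have e1 : evC [u, v, U, V', f, g] (cvar 0) = u := by simp [evC, cvar, evM]
  have e2 : evC [u, v, U, V', f, g] (cnegVar 1) = -v := by simp [evC, cnegVar, evM]
  have e3 : evC [u, v, U, V', f, g] (cvar 2) = U := by simp [evC, cvar, evM]
  have e4 : evC [u, v, U, V', f, g] (cnegVar 3) = -V' := by simp [evC, cnegVar, evM]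
  have e5 : evC [u, v, U, V', f, g] (cvar 4) = f := by simp [evC, cvar, evM]
  have e6 : evC [u, v, U, V', f, g] (cvar 5) = g := by simp [evC, cvar, evM]
  have z := fun s t m q => zev_eq (ρ := [u, v, U, V', f, g]) (τ := τ) s t m [(1, cvar 4)] q
  have z' := fun s t m q => zev_eq (ρ := [u, v, U, V', f, g]) (τ := τ) s t m [(2, cvar 5)] q
  simp only [List.map_cons, List.map_nil, e5, e6] at z z'
  have hb := baseR_ok (ρ := [u, v, U, V', f, g]) (m := 3) (lab := [(1, cvar 4)])
    (lbc := [(2, cvar 5)]) e1 e2 e3 e4 rfl rfl qa qb qc hac (by simpa [e5] using hab)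
    (by simpa [e6] using hbc)
  have hr := hb (braidR a b 3 [(1, cvar 4)]) (by simp [baseR])
  have := cocyc_sound hF hτ (ext2_ok hF hτ hb hr) checkB3 (by norm_num) (N := 9) rfl rfl rfl
    (by norm_num) rfl rfl hp hK
  rw [z, z', zev_swap]
  exact this

/-- The cocycle identity for the longest element of `H3`, of length `15`. -/
theorem cocycle_H3 (hU : U = u) (hV : V' = v)
    (hbc : ∀ k p, p ∈ F k → k + 5 ≤ K → zev τ b c 5 [(3, g), (1, h)] p = 0)
    (hK : k + 15 = K + 1) :
    zev τ a b 3 [(1, f)] (evW τ [c, b, c, b, a, b, c, b, c, a, b, c] p) +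
      zev τ b c 5 [(3, g), (1, h)] (evW τ [a, b, c, b, c, a, b, c, b, a] p) +
      zev τ c a 2 [] (evW τ [b, c, b, c, a, b, c, b, c, a, b, c, b] p) = 0 := by
  subst hU hV
  have e1 : evC [U, V', f, g, h] (cvar 0) = U := by simp [evC, cvar, evM]
  have e2 : evC [U, V', f, g, h] (cnegVar 1) = -V' := by simp [evC, cnegVar, evM]
  have e3 : evC [U, V', f, g, h] (cvar 2) = f := by simp [evC, cvar, evM]
  have e4 : evC [U, V', f, g, h] (cvar 3) = g := by simp [evC, cvar, evM]
  have e5 : evC [U, V', f, g, h] (cvar 4) = h := by simp [evC, cvar, evM]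
  have z := fun s t m q => zev_eq (ρ := [U, V', f, g, h]) (τ := τ) s t m [(1, cvar 2)] q
  have z' := fun s t m q =>
    zev_eq (ρ := [U, V', f, g, h]) (τ := τ) s t m [(3, cvar 3), (1, cvar 4)] q
  simp only [List.map_cons, List.map_nil, e3, e4, e5] at z z'
  have hb := baseR_ok (ρ := [U, V', f, g, h]) (m := 4) (lab := [(1, cvar 2)])
    (lbc := [(3, cvar 3), (1, cvar 4)]) e1 e2 e1 e2 rfl rfl qa qb qc hac (by simpa [e3] using hab)
    (by simpa [e4, e5] using hbc)
  have hr := hb (braidR a b 3 [(1, cvar 2)]) (by simp [baseR])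
  have := cocyc_sound hF hτ (ext3_ok hF hτ hb hr) checkH3 (by norm_num) (N := 15) rfl rfl rfl
    (by norm_num) rfl rfl hp hK
  rw [z, z', zev_swap]
  exact this

end Cocycle
end Stmt14

/-! ### Reduced words starting with the longest elements of A3, B3, H3 -/

namespace Stmt14
open Lt

section Peel

/-- The Coxeter matrix on three letters with bonds `m_ac = 2`, `m_ab = 3`, `m_bc = m`. -/
def bond (m : ℕ) : Lt → Lt → ℕ
  | .a, .b => 3
  | .b, .a => 3
  | .b, .c => m
  | .c, .b => m
  | .a, .c => 2
  | .c, .a => 2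
  | _, _ => 1

/-- Strips an initial segment from a word, if the word begins with it. -/
def strip : List Lt → List Lt → Option (List Lt)
  | [], l => some l
  | _ :: _, [] => none
  | s :: α, t :: l => bif leq s t then strip α l else none

lemma strip_eq {α l l' : List Lt} (h : strip α l = some l') : l = α ++ l' := by
  induction α generalizing l with
  | nil => simpa [strip] using h
  | cons s α ih =>
    cases l with
    | nil => simp [strip] at h
    | cons t l =>
      rw [strip] at h
      cases e : leq s t
      · simp [e] at h
      · rw [e, cond_true] at h
        rw [leq_iff] at e
        rw [e, ih h, List.cons_append]

/-- The braid move replacing, at position `i`, the alternating word beginning with `s` by the one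
beginning with `t`; a word that does not contain it there is unchanged. -/
def move (m : ℕ) (s t : Lt) : ℕ → List Lt → List Lt
  | 0, l => match strip (alt s t (bond m s t)) l with
    | some l' => alt t s (bond m s t) ++ l'
    | none => l
  | _ + 1, [] => []
  | i + 1, x :: l => x :: move m s t i l

/-- A sequence of braid moves. -/
def moves (m : ℕ) : List (ℕ × Lt × Lt) → List Lt → List Lt
  | [], l => l
  | (i, s, t) :: L, l => moves m L (move m s t i l)

lemma length_moves (m : ℕ) (L : List (ℕ × Lt × Lt)) (l : List Lt) :
    (moves m L l).length = l.length := by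
  induction L generalizing l with
  | nil => rfl
  | cons x L ih =>
    obtain ⟨i, s, t⟩ := x
    rw [moves, ih]
    induction i generalizing l with
    | zero =>
      rw [move]
      split
      · rename_i l' h
        rw [strip_eq h, List.length_append, List.length_append, length_alt, length_alt]
      · rfl
    | succ i ih =>
      cases l with
      | nil => rfl
      | cons y l => rw [move, List.length_cons, ih, List.length_cons]

lemma map_alt {I : Type*} (g : Lt → I) (s t : Lt) (k : ℕ) :
    (alt s t k).map g = alt (g s) (g t) k := by
  induction k generalizing s t with
  | zero => rfl
  | succ k ih => rw [alt, alt, List.map_cons, ih]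

variable {I W : Type*} [Group W] {M : CoxeterMatrix I} (cs : CoxeterSystem M W) {m : ℕ}
  {g : Lt → I} (hM : ∀ s t, M (g s) (g t) = bond m s t)
include hM

lemma wordProd_moves (L : List (ℕ × Lt × Lt)) (l : List Lt) :
    cs.wordProd ((moves m L l).map g) = cs.wordProd (l.map g) := by
  induction L generalizing l with
  | nil => rfl
  | cons x L ih =>
    obtain ⟨i, s, t⟩ := x
    rw [moves, ih]
    induction i generalizing l with
    | zero =>
      rw [move]
      split
      · rename_i l' h
        rw [strip_eq h, List.map_append, List.map_append, cs.wordProd_append, cs.wordProd_append,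
          map_alt, map_alt, ← hM, wordProd_alt]
      · rfl
    | succ i ih =>
      cases l with
      | nil => rfl
      | cons y l => rw [move, List.map_cons, List.map_cons, cs.wordProd_cons, ih, cs.wordProd_cons]

variable {w : W}

/-- If `w` has reduced words beginning with `α s` and with `α t`, then it has one beginning with
`α` followed by the alternating word in `s`, `t` of full length. -/
lemma pre_join (α : List Lt) (s t : Lt) (hst : g s ≠ g t) (hs : Pre cs ((α ++ [s]).map g) w)
    (ht : Pre cs ((α ++ [t]).map g) w) : Pre cs ((α ++ alt s t (bond m s t)).map g) w := by
  rw [List.map_append, pre_append] at hs ht ⊢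
  refine ⟨hs.1, ?_⟩
  rw [map_alt]
  exact pre_alt cs hst hs.2.1 ht.2.1 _ (.inr (hM s t).ge)

omit hM in
lemma pre_left {α : List Lt} (β : List Lt) (h : Pre cs ((α ++ β).map g) w) :
    Pre cs (α.map g) w := by
  rw [List.map_append, pre_append] at h; exact h.1

lemma pre_moves (L : List (ℕ × Lt × Lt)) {l : List Lt} (h : Pre cs (l.map g) w) :
    Pre cs ((moves m L l).map g) w :=
  h.congr cs (wordProd_moves cs hM L l).symm (by simp [length_moves])

/-- If a reduced word of `w` begins with `ω`, and braid moves bring each of the three dihedral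
longest words to the front of `ω`, then the three resulting factorisations of `w` share the
cofactor `y` of `ω`. -/
lemma peel_end {ω v1 v2 v3 : List Lt} (L1 L2 L3 : List (ℕ × Lt × Lt)) (h : Pre cs (ω.map g) w)
    (h1 : moves m L1 ω = alt a b 3 ++ v1) (h2 : moves m L2 ω = alt b c m ++ v2)
    (h3 : moves m L3 ω = alt a c 2 ++ v3) :
    ∃ y, cs.length w = ω.length + cs.length y ∧
      w = cs.wordProd (alt (g a) (g b) 3) * (cs.wordProd (v1.map g) * y) ∧
      w = cs.wordProd (alt (g b) (g c) m) * (cs.wordProd (v2.map g) * y) ∧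
      w = cs.wordProd (alt (g a) (g c) 2) * (cs.wordProd (v3.map g) * y) := by
  refine ⟨(cs.wordProd (ω.map g))⁻¹ * w, by simpa using h.length_eq, ?_, ?_, ?_⟩
  · rw [← mul_assoc, ← cs.wordProd_append, ← map_alt, ← List.map_append, ← h1,
      wordProd_moves cs hM, mul_inv_cancel_left]
  · rw [← mul_assoc, ← cs.wordProd_append, ← map_alt, ← List.map_append, ← h2,
      wordProd_moves cs hM, mul_inv_cancel_left]
  · rw [← mul_assoc, ← cs.wordProd_append, ← map_alt, ← List.map_append, ← h3,
      wordProd_moves cs hM, mul_inv_cancel_left]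

variable (hab : g a ≠ g b) (hbc : g b ≠ g c) (hac : g a ≠ g c) (ha : cs.IsLeftDescent w (g a))
  (hb : cs.IsLeftDescent w (g b)) (hc : cs.IsLeftDescent w (g c))
include hab hbc hac ha hb hc

/-- The first beginnings of reduced words of an element having the three letters as left descents.
-/
lemma peel_start (hm : 3 ≤ m) : Pre cs ((a :: alt b c m).map g) w ∧
    Pre cs ((a :: alt c b m).map g) w ∧ Pre cs ([a, b, c, a, b, a].map g) w ∧
    Pre cs ([a, b, c, b, a, b].map g) w ∧ Pre cs ([a, b, c, a].map g) w := by
  obtain ⟨m, rfl⟩ : ∃ k, m = k + 3 := ⟨m - 3, by omega⟩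
  have pa : Pre cs ([a].map g) w := ⟨ha, trivial⟩
  have pb : Pre cs ([b].map g) w := ⟨hb, trivial⟩
  have pc : Pre cs ([c].map g) w := ⟨hc, trivial⟩
  have aba : Pre cs ([a, b, a].map g) w := pre_join cs hM [] a b hab pa pb
  have ac : Pre cs ([a, c].map g) w := pre_join cs hM [] a c hac pa pc
  have ab : Pre cs ([a, b].map g) w := pre_left cs [a] aba
  have abc : Pre cs ((a :: alt b c (m + 3)).map g) w := pre_join cs hM [a] b c hbc ab ac
  have acb : Pre cs ((a :: alt c b (m + 3)).map g) w := pre_join cs hM [a] c b hbc.symm ac ab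
  have abcb : Pre cs ([a, b, c, b].map g) w := pre_left cs (alt c b m) abc
  have abca : Pre cs ([a, b, c, a].map g) w :=
    pre_join cs hM [a, b] c a hac.symm (pre_left cs [b] abcb) aba
  exact ⟨abc, acb, pre_join cs hM [a, b, c] a b hab abca abcb,
    pre_join cs hM [a, b, c] b a hab.symm abcb abca, abca⟩

omit hM in
/-- An element with three left descents of type `A3` is the product, with lengths adding, of the
longest element, of length `6`, and some `y`. Words of the longest element beginning with each of
the three dihedral longest words are given. -/
theorem peel_A3 (hM : ∀ s t, M (g s) (g t) = bond 3 s t) :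
    ∃ y, cs.length w = 6 + cs.length y ∧
      w = cs.wordProd (alt (g a) (g b) 3) * (cs.wordProd ([c, b, a].map g) * y) ∧
      w = cs.wordProd (alt (g b) (g c) 3) * (cs.wordProd ([a, b, c].map g) * y) ∧
      w = cs.wordProd (alt (g a) (g c) 2) * (cs.wordProd ([b, c, a, b].map g) * y) := by
  obtain ⟨-, -, h, -⟩ := peel_start cs hM hab hbc hac ha hb hc (le_refl 3)
  exact peel_end cs hM [(2, c, a)]
    [(2, c, a), (0, a, b), (2, b, c), (1, a, c), (4, c, a), (2, a, b)]
    [(3, a, b), (1, b, c)] h rfl rfl rfl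

omit hM in
/-- The analogue of `peel_A3` for type `B3`, where the longest element has length `9`. -/
theorem peel_B3 (hM : ∀ s t, M (g s) (g t) = bond 4 s t) :
    ∃ y, cs.length w = 9 + cs.length y ∧
      w = cs.wordProd (alt (g a) (g b) 3) * (cs.wordProd ([c, b, a, c, b, c].map g) * y) ∧
      w = cs.wordProd (alt (g b) (g c) 4) * (cs.wordProd ([a, b, c, b, a].map g) * y) ∧
      w = cs.wordProd (alt (g a) (g c) 2) * (cs.wordProd ([b, a, c, b, c, a, b].map g) * y) := by
  obtain ⟨abcbc, -, -, abcbab, -⟩ := peel_start cs hM hab hbc hac ha hb hc (by norm_num)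
  have abcba : Pre cs ([a, b, c, b, a].map g) w := pre_left cs [b] abcbab
  have abcbac : Pre cs ([a, b, c, b, a, c].map g) w :=
    pre_join cs hM [a, b, c, b] a c hac abcba abcbc
  have h : Pre cs ([a, b, c, b, a, b, c, b, c].map g) w :=
    pre_join cs hM [a, b, c, b, a] b c hbc abcbab abcbac
  exact peel_end cs hM [(3, b, a), (2, c, a)]
    [(3, b, a), (5, a, c), (2, c, a), (0, a, b), (2, b, c), (1, a, c), (5, b, a), (7, a, c),
      (4, c, a), (2, a, b), (4, b, c), (3, a, c)]
    [(5, b, c), (4, a, c), (1, b, c), (4, b, a), (6, a, c), (3, c, a)] h rfl rfl rfl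

omit hM in
/-- The analogue of `peel_A3` for type `H3`, where the longest element has length `15`. -/
theorem peel_H3 (hM : ∀ s t, M (g s) (g t) = bond 5 s t) :
    ∃ y, cs.length w = 15 + cs.length y ∧
      w = cs.wordProd (alt (g a) (g b) 3) *
        (cs.wordProd ([c, b, c, b, a, b, c, b, c, a, b, c].map g) * y) ∧
      w = cs.wordProd (alt (g b) (g c) 5) *
        (cs.wordProd ([a, b, c, b, c, a, b, c, b, a].map g) * y) ∧
      w = cs.wordProd (alt (g a) (g c) 2) *
        (cs.wordProd ([b, c, b, c, a, b, c, b, c, a, b, c, b].map g) * y) := by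
  obtain ⟨abcbcb, -, -, abcbab, -⟩ := peel_start cs hM hab hbc hac ha hb hc (by norm_num)
  have abcba : Pre cs ([a, b, c, b, a].map g) w := pre_left cs [b] abcbab
  have abcbac : Pre cs ([a, b, c, b, a, c].map g) w :=
    pre_join cs hM [a, b, c, b] a c hac abcba (pre_left cs [b] abcbcb)
  have abcbca : Pre cs ([a, b, c, b, c, a].map g) w :=
    pre_join cs hM [a, b, c, b] c a hac.symm (pre_left cs [b] abcbcb) abcba
  have h7 : Pre cs ([a, b, c, b, c, a, b, a].map g) w :=
    pre_join cs hM [a, b, c, b, c] a b hab abcbca abcbcb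
  have h7' : Pre cs ([a, b, c, b, a, c, b, a].map g) w := pre_moves cs hM [(4, c, a)] h7
  have h8 : Pre cs ([a, b, c, b, a, c, b, c, b, c].map g) w :=
    pre_join cs hM [a, b, c, b, a] c b hbc.symm abcbac abcbab
  have h9 : Pre cs ([a, b, c, b, a, c, b, c, a].map g) w :=
    pre_join cs hM [a, b, c, b, a, c, b] c a hac.symm (pre_left cs [b, c] h8) h7'
  have h8' : Pre cs ([a, b, c, b, a, c, b, c, b].map g) w := pre_left cs [c] h8
  have h10 : Pre cs ([a, b, c, b, a, c, b, c, b, a, b].map g) w :=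
    pre_join cs hM [a, b, c, b, a, c, b, c] b a hab.symm h8' h9
  have h11 : Pre cs ([a, b, c, b, a, c, b, c, b, a, c].map g) w :=
    pre_join cs hM [a, b, c, b, a, c, b, c, b] a c hac (pre_left cs [b] h10) h8
  have h : Pre cs ([a, b, c, b, a, c, b, c, b, a, b, c, b, c, b].map g) w :=
    pre_join cs hM [a, b, c, b, a, c, b, c, b, a] b c hbc h10 h11
  exact peel_end cs hM
    [(10, b, c), (9, a, c), (5, c, b), (3, b, a), (5, a, c), (2, c, a), (9, b, a), (11, a, c),
      (8, c, a), (6, a, b)]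
    [(4, a, c), (8, b, a), (10, a, c), (7, c, a), (5, a, b), (1, b, c), (0, a, c), (5, c, a),
      (6, c, b), (4, b, a), (6, a, c), (3, c, a), (1, a, b), (10, b, a), (12, a, c), (9, c, a),
      (7, a, b), (3, b, c), (2, a, c), (7, c, a), (8, c, b), (6, b, a), (8, a, c), (5, c, a),
      (3, a, b), (12, b, a), (11, c, a), (9, a, b), (5, b, c), (4, a, c), (0, c, b)]
    [(4, a, c), (8, b, a), (10, a, c), (7, c, a), (5, a, b), (1, b, c)] h rfl rfl rfl

end Peel
end Stmt14

/-! ### Products along words and deformed braid operators -/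

namespace Stmt14

section WordProducts
variable {I A : Type*} [Ring A] (T : I → A)

/-- The product of the `T_i` along a word. -/
def wp (ω : List I) : A := (ω.map T).prod

@[simp] lemma wp_nil : wp T [] = 1 := rfl

@[simp] lemma wp_cons (s : I) (ω : List I) : wp T (s :: ω) = T s * wp T ω := by simp [wp]

lemma wp_append (α β : List I) : wp T (α ++ β) = wp T α * wp T β := by simp [wp]

/-- The braid commutator, as a difference of products along the two alternating words. -/
def bop (s t : I) (j : ℕ) : A := wp T (alt s t j) - wp T (alt t s j)

lemma bop_swap (s t : I) (j : ℕ) : bop T t s j = - bop T s t j := by simp [bop]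

lemma wp_alt_two_mul (s t : I) (k : ℕ) :
    wp T (alt s t (2 * k)) = (T s * T t) ^ k ∧
      wp T (alt s t (2 * k + 1)) = (T s * T t) ^ k * T s := by
  have h : ∀ k, wp T (alt s t (2 * k)) = (T s * T t) ^ k := by
    intro k
    induction k with
    | zero => simp [alt]
    | succ k ih =>
      rw [show 2 * (k + 1) = 2 * k + 1 + 1 by ring, alt, alt, wp_cons, wp_cons, ih, pow_succ',
        mul_assoc]
  refine ⟨h k, ?_⟩
  induction k with
  | zero => simp [alt]
  | succ k ih =>
    rw [show 2 * (k + 1) + 1 = 2 * k + 1 + 1 + 1 by ring, alt, alt, wp_cons, wp_cons, ih, pow_succ']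
    simp only [mul_assoc]

lemma braid_eq_bop (s t : I) (m : ℕ) : braid (T s) (T t) m = bop T s t m := by
  rcases Nat.even_or_odd' m with ⟨k, rfl | rfl⟩
  · simp [braid, bop, wp_alt_two_mul]
  · have h1 : (2 * k + 1) / 2 = k := by omega
    simp [braid, bop, wp_alt_two_mul, h1]

lemma map_bop {B : Type*} [Ring B] {F : Type*} [FunLike F A B] [RingHomClass F A B] (φ : F)
    (s t : I) (m : ℕ) : φ (bop T s t m) = bop (fun i => φ (T i)) s t m := by
  simp only [bop, wp, map_sub, map_list_prod, List.map_map]; rfl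

/-- An alternating word, written with its last letter split off. -/
lemma alt_succ_eq_append (s t : I) (j : ℕ) :
    alt s t (j + 1) = alt s t j ++ [if Even j then s else t] := by
  induction j generalizing s t with
  | zero => simp [alt]
  | succ j ih =>
    rw [alt, ih t s, alt, List.cons_append]
    by_cases h : Even j <;> simp [h, Nat.even_add_one]

variable {R : Type*} [CommRing R] [Algebra R A] (M : CoxeterMatrix I) (f : I → I → ℕ → R)

/-- The left side of the deformed braid relation. -/
def zel (s t : I) : A := bop T s t (M s t) +
  ∑ l ∈ Finset.Ico 1 ((M s t + 1) / 2), f s t l • bop T s t (M s t - 2 * l)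

lemma zel_swap (hf : ∀ i j l, f i j l = f j i l) (s t : I) : zel T M f t s = - zel T M f s t := by
  rw [zel, zel, M.symmetric s t, bop_swap, neg_add, ← Finset.sum_neg_distrib]
  congr 1
  exact Finset.sum_congr rfl fun l _ => by rw [bop_swap, hf t s, smul_neg]

lemma zel_self (s : I) : zel T M f s s = 0 := by simp [zel, bop]

end WordProducts

section Alternating
variable {I V R : Type*} [CommRing R] [AddCommGroup V] [Module R V] (T : I → Module.End R V)

/-- A braid commutator can be moved past `T_s`: this becomes `U - T_r`, where `r` is the first
letter of the alternating word of length `j` ending in `t`. Both expressions follow from the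
quadratic relation, applied to the last or to the first two letters. -/
lemma bop_apply_simple {s t r : I} {U V' : R} {p : V} {j : ℕ} (hj : 1 ≤ j)
    (hr : r = if Even j then s else t) (hs : T s (T s p) = U • T s p - V' • p)
    (hq : ∀ q, q = wp T (alt s t (j - 1)) p ∨ q = wp T (alt t s (j - 1)) p →
      T r (T r q) = U • T r q - V' • q) :
    bop T s t j (T s p) = U • bop T s t j p - T r (bop T s t j p) := by
  obtain ⟨j, rfl⟩ : ∃ k, j = k + 1 := ⟨j - 1, by omega⟩
  rw [Nat.add_sub_cancel] at hq
  by_cases h : Even j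
  · have h' : ¬ Even (j + 1) := by simpa [Nat.even_add_one] using h
    rw [if_neg h'] at hr
    subst hr
    have e1 : wp T (alt s r (j + 1)) (T s p) = U • wp T (alt s r (j + 1)) p
        - V' • wp T (alt s r j) p := by
      rw [alt_succ_eq_append, if_pos h, wp_append]
      simp [hs]
    have e2 : wp T (alt r s (j + 1)) (T s p) = T r (wp T (alt s r (j + 1)) p) := by
      rw [alt, wp_cons, Module.End.mul_apply, alt_succ_eq_append s, if_pos h, wp_append]
      simp
    have e3 : T r (wp T (alt r s (j + 1)) p) = U • wp T (alt r s (j + 1)) p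
        - V' • wp T (alt s r j) p := by
      rw [alt, wp_cons, Module.End.mul_apply]
      exact hq _ (.inl rfl)
    simp only [bop, LinearMap.sub_apply, map_sub, e1, e2, e3]
    module
  · have h' : Even (j + 1) := by simpa [Nat.even_add_one] using h
    rw [if_pos h'] at hr
    subst hr
    have e1 : wp T (alt t r (j + 1)) (T r p) = U • wp T (alt t r (j + 1)) p
        - V' • wp T (alt t r j) p := by
      rw [alt_succ_eq_append, if_neg h, wp_append]
      simp [hs]
    have e2 : wp T (alt r t (j + 1)) (T r p) = T r (wp T (alt t r (j + 1)) p) := by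
      rw [alt, wp_cons, Module.End.mul_apply, alt_succ_eq_append t, if_neg h, wp_append]
      simp
    have e3 : T r (wp T (alt r t (j + 1)) p) = U • wp T (alt r t (j + 1)) p
        - V' • wp T (alt t r j) p := by
      rw [alt, wp_cons, Module.End.mul_apply]
      exact hq _ (.inr rfl)
    simp only [bop, LinearMap.sub_apply, map_sub, e1, e2, e3]
    module

/-- The same exchange for the left side of a deformed braid relation. Its terms have degrees of
the same parity, so that the letter `r` is the same for all of them. -/
lemma zel_apply_simple (M : CoxeterMatrix I) (f : I → I → ℕ → R) {s t r : I} {U V' : R} {p : V}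
    (hm : M s t ≠ 0) (hr : r = if Even (M s t) then s else t)
    (hs : T s (T s p) = U • T s p - V' • p)
    (hq : ∀ i < M s t, ∀ q, q = wp T (alt s t i) p ∨ q = wp T (alt t s i) p →
      T r (T r q) = U • T r q - V' • q) :
    zel T M f s t (T s p) = U • zel T M f s t p - T r (zel T M f s t p) := by
  have e1 := bop_apply_simple T (Nat.one_le_iff_ne_zero.2 hm) hr hs (hq _ (by omega))
  simp only [zel, LinearMap.add_apply, LinearMap.sum_apply, LinearMap.smul_apply, e1, map_add,
    map_sum, map_smul, smul_add, Finset.smul_sum]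
  rw [add_sub_add_comm, ← Finset.sum_sub_distrib]
  congr 1
  refine Finset.sum_congr rfl fun l hl => ?_
  rw [Finset.mem_Ico] at hl
  have hp : Even (M s t - 2 * l) ↔ Even (M s t) := by
    rw [Nat.even_sub (by omega)]; simp
  rw [bop_apply_simple T (by omega) (by rw [hr]; simp only [hp]) hs (hq _ (by omega)), smul_sub,
    smul_comm U]

end Alternating
end Stmt14

/-! ### The length filtration on the free module -/

namespace Stmt14

variable {I W : Type*} [Group W] {M : CoxeterMatrix I} (cs : CoxeterSystem M W)
  (R : Type*) [CommRing R]

/-- The length filtration: the span of the basis vectors `e_x` with `ℓ(x) < k`. -/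
def LL (k : ℕ) : Submodule R (W →₀ R) := Finsupp.supported R R {x | cs.length x < k}

lemma LL_mono : Monotone (LL cs R) := fun _ _ h =>
  Finsupp.supported_mono fun _ hx => lt_of_lt_of_le hx h

lemma LL_zero {p : W →₀ R} (hp : p ∈ LL cs R 0) : p = 0 := by
  simpa [LL] using hp

variable {R}

lemma exists_mem_LL (p : W →₀ R) : ∃ k, p ∈ LL cs R k := by
  induction p using Finsupp.induction_linear with
  | zero => exact ⟨0, zero_mem _⟩
  | add p q hp hq =>
    obtain ⟨k, hk⟩ := hp
    obtain ⟨l, hl⟩ := hq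
    exact ⟨max k l, add_mem (LL_mono cs R (le_max_left _ _) hk)
      (LL_mono cs R (le_max_right _ _) hl)⟩
  | single x r =>
    exact ⟨cs.length x + 1, Finsupp.single_mem_supported R r (Nat.lt_succ_self (cs.length x))⟩

variable (R) in
/-- The basis vector `e_x`. -/
def ev1 (x : W) : W →₀ R := Finsupp.single x 1

lemma ev1_mem {x : W} {k : ℕ} (h : cs.length x < k) : ev1 R x ∈ LL cs R k :=
  Finsupp.single_mem_supported R 1 h

lemma LL_induct {k : ℕ} {N : Submodule R (W →₀ R)} (h : ∀ x, cs.length x < k → ev1 R x ∈ N)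
    {p : W →₀ R} (hp : p ∈ LL cs R k) : p ∈ N := by
  rw [LL, Finsupp.supported_eq_span_single] at hp
  refine Submodule.span_le.2 ?_ hp
  rintro _ ⟨x, hx, rfl⟩
  exact h x hx

lemma LL_map {k : ℕ} {V : Type*} [AddCommGroup V] [Module R V] {A : (W →₀ R) →ₗ[R] V}
    {N : Submodule R V} (h : ∀ x, cs.length x < k → A (ev1 R x) ∈ N)
    {p : W →₀ R} (hp : p ∈ LL cs R k) : A p ∈ N :=
  LL_induct cs (N := N.comap A) h hp

lemma LL_eq {k : ℕ} {V : Type*} [AddCommGroup V] [Module R V] {A B : (W →₀ R) →ₗ[R] V}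
    (h : ∀ x, cs.length x < k → A (ev1 R x) = B (ev1 R x))
    {p : W →₀ R} (hp : p ∈ LL cs R k) : A p = B p := by
  have := LL_induct cs (N := LinearMap.ker (A - B)) (fun x hx => by simp [h x hx]) hp
  simpa [sub_eq_zero] using this

/-- Each operator raises the filtration degree by at most one. -/
def Filt (T : I → Module.End R (W →₀ R)) : Prop :=
  ∀ s k p, p ∈ LL cs R k → T s p ∈ LL cs R (k + 1)

/-- Below level `K`, if `s` is not a left descent of `x`, then `T_s e_x` is `e_{sx}` plus terms of
length at most `ℓ(x)`. -/
def Asc (K : ℕ) (T : I → Module.End R (W →₀ R)) : Prop :=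
  ∀ s x, cs.length x + 1 < K → ¬ cs.IsLeftDescent x s →
    T s (ev1 R x) - ev1 R (cs.simple s * x) ∈ LL cs R (cs.length x + 1)

/-- The quadratic relations hold below level `K`, on vectors of degree `k` with `k + 2 ≤ K`. -/
def Quad (u v : I → R) (K : ℕ) (T : I → Module.End R (W →₀ R)) : Prop :=
  ∀ s k p, p ∈ LL cs R k → k + 2 ≤ K → T s (T s p) = u s • T s p - v s • p

/-- The deformed braid relations hold below level `K`, on vectors of degree `k` with `k + m_st ≤
K`. -/
def Br (f : I → I → ℕ → R) (K : ℕ) (T : I → Module.End R (W →₀ R)) : Prop :=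
  ∀ s t, s ≠ t → M s t ≠ 0 → ∀ k p, p ∈ LL cs R k → k + M s t ≤ K → zel T M f s t p = 0

/-- The operators `T'` and `T` agree on vectors of degree `k` with `k + 1 ≤ K`. -/
def Agree (K : ℕ) (T T' : I → Module.End R (W →₀ R)) : Prop :=
  ∀ s k p, p ∈ LL cs R k → k + 1 ≤ K → T' s p = T s p

variable {cs} {T T' : I → Module.End R (W →₀ R)} {K : ℕ}

lemma Filt.wp (hT : Filt cs T) (ω : List I) {k : ℕ} {p : W →₀ R} (hp : p ∈ LL cs R k) :
    wp T ω p ∈ LL cs R (k + ω.length) := by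
  induction ω with
  | nil => simpa using hp
  | cons s ω ih =>
    rw [wp_cons, Module.End.mul_apply, List.length_cons, ← add_assoc]
    exact hT _ _ _ ih

lemma Filt.bop (hT : Filt cs T) (s t : I) (j : ℕ) {k : ℕ} {p : W →₀ R} (hp : p ∈ LL cs R k) :
    bop T s t j p ∈ LL cs R (k + j) := by
  have h1 := hT.wp (alt s t j) hp
  have h2 := hT.wp (alt t s j) hp
  rw [length_alt] at h1 h2
  exact sub_mem h1 h2

lemma Agree.wp (hT : Filt cs T) (h : Agree cs K T T') (ω : List I) {k : ℕ} {p : W →₀ R}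
    (hp : p ∈ LL cs R k) (hk : k + ω.length ≤ K) : wp T' ω p = wp T ω p := by
  induction ω with
  | nil => rfl
  | cons s ω ih =>
    rw [List.length_cons] at hk
    rw [wp_cons, wp_cons, Module.End.mul_apply, Module.End.mul_apply, ih (by omega)]
    exact h _ _ _ (hT.wp ω hp) (by omega)

lemma Agree.bop (hT : Filt cs T) (h : Agree cs K T T') (s t : I) {j k : ℕ} {p : W →₀ R}
    (hp : p ∈ LL cs R k) (hk : k + j ≤ K) : bop T' s t j p = bop T s t j p := by
  simp only [Stmt14.bop, LinearMap.sub_apply]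
  rw [h.wp hT _ hp (by rwa [length_alt]), h.wp hT _ hp (by rwa [length_alt])]

lemma Agree.zel (hT : Filt cs T) (h : Agree cs K T T') {f : I → I → ℕ → R} (s t : I) {k : ℕ}
    {p : W →₀ R} (hp : p ∈ LL cs R k) (hk : k + M s t ≤ K) :
    zel T' M f s t p = zel T M f s t p := by
  simp only [Stmt14.zel, LinearMap.add_apply, LinearMap.sum_apply, LinearMap.smul_apply]
  rw [h.bop hT s t hp hk]
  congr 1
  exact Finset.sum_congr rfl fun l _ => by rw [h.bop hT s t hp (by omega)]

lemma Agree.asc (h : Agree cs K T T') (hT : Asc cs K T) : Asc cs K T' := fun s x hx hs => by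
  rw [h s _ _ (ev1_mem cs (Nat.lt_succ_self _)) hx]
  exact hT s x hx hs

lemma Agree.quad (h : Agree cs K T T') (hF : Filt cs T) {u v : I → R} (hT : Quad cs u v K T) :
    Quad cs u v K T' := fun s k p hp hk => by
  have := h.wp hF [s, s] hp hk
  simp only [wp_cons, wp_nil, mul_one, Module.End.mul_apply] at this
  rw [this, h s k p hp (by omega)]
  exact hT s k p hp hk

lemma Agree.br (h : Agree cs K T T') (hF : Filt cs T) {f : I → I → ℕ → R} (hT : Br cs f K T) :
    Br cs f K T' := fun s t hst hm k p hp hk => by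
  rw [h.zel hF s t hp hk]
  exact hT s t hst hm k p hp hk

/-- Along a word whose length adds to that of `x`, the product acts on `e_x` as on the group
element, up to terms of smaller length. -/
lemma asc_word (hF : Filt cs T) (hA : Asc cs K T) (ω : List I) {x : W}
    (hl : cs.length (cs.wordProd ω * x) = ω.length + cs.length x)
    (hk : ω.length + cs.length x < K) :
    wp T ω (ev1 R x) - ev1 R (cs.wordProd ω * x) ∈ LL cs R (ω.length + cs.length x) := by
  induction ω with
  | nil => simp
  | cons s ω ih =>
    rw [cs.wordProd_cons, mul_assoc] at hl ⊢
    rw [List.length_cons] at hl hk ⊢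
    have h1 := cs.length_simple_mul (cs.wordProd ω * x) s
    have h2 := cs.length_mul_le (cs.wordProd ω) x
    have h3 := cs.length_wordProd_le ω
    have hl' : cs.length (cs.wordProd ω * x) = ω.length + cs.length x := by omega
    have hs : ¬ cs.IsLeftDescent (cs.wordProd ω * x) s := by
      rw [cs.not_isLeftDescent_iff]; omega
    have i1 := hF s _ _ (ih hl' (by omega))
    have i2 := hA s _ (by omega) hs
    rw [hl'] at i2
    have := add_mem i1 i2
    rw [map_sub, sub_add_sub_cancel] at this
    rw [wp_cons, Module.End.mul_apply]
    exact LL_mono cs R (by omega) this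

end Stmt14

/-! ### Extension by one level -/

namespace Stmt14

variable {I W : Type*} [Group W] {M : CoxeterMatrix I} (cs : CoxeterSystem M W)
  {R : Type*} [CommRing R] (u v : I → R) {T : I → Module.End R (W →₀ R)} {K : ℕ}

open Classical in
/-- Extension of operators from level `K` to level `K + 1`. On shorter elements they are
unchanged. On `e_x` with `ℓ(x) + 1 = K` the value is the one forced by the quadratic relation if
`s` is a left descent of `x`, and `e_{sx} + c s (sx)` otherwise; on longer elements the value is
zero. -/
def ext (K : ℕ) (T : I → Module.End R (W →₀ R)) (c : I → W → (W →₀ R)) (s : I) :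
    Module.End R (W →₀ R) :=
  Finsupp.linearCombination R fun x =>
    if cs.length x + 1 < K then T s (ev1 R x)
    else if cs.length x + 1 = K then
      if cs.IsLeftDescent x s then
        u s • T s (ev1 R (cs.simple s * x)) - v s • ev1 R (cs.simple s * x) -
          T s (T s (ev1 R (cs.simple s * x)) - ev1 R x)
      else ev1 R (cs.simple s * x) + c s (cs.simple s * x)
    else 0

variable {c : I → W → (W →₀ R)}

lemma ext_lt {s : I} {x : W} (h : cs.length x + 1 < K) :
    ext cs u v K T c s (ev1 R x) = T s (ev1 R x) := by
  simp [ext, ev1, h]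

lemma ext_desc {s : I} {x : W} (h : cs.length x + 1 = K) (hs : cs.IsLeftDescent x s) :
    ext cs u v K T c s (ev1 R x) = u s • T s (ev1 R (cs.simple s * x)) -
      v s • ev1 R (cs.simple s * x) - T s (T s (ev1 R (cs.simple s * x)) - ev1 R x) := by
  simp [ext, ev1, h, hs]

lemma ext_asc {s : I} {x : W} (h : cs.length x + 1 = K) (hs : ¬ cs.IsLeftDescent x s) :
    ext cs u v K T c s (ev1 R x) = ev1 R (cs.simple s * x) + c s (cs.simple s * x) := by
  simp [ext, ev1, h, hs]

lemma ext_gt {s : I} {x : W} (h : K < cs.length x + 1) :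
    ext cs u v K T c s (ev1 R x) = 0 := by
  simp [ext, ev1, h.ne', not_lt.2 h.le]

lemma ext_agree : Agree cs K T (ext cs u v K T c) := fun s k _ hp hk =>
  LL_eq cs (fun x hx => ext_lt cs u v (by omega)) hp

lemma desc_length {x : W} {s : I} (hs : cs.IsLeftDescent x s) :
    cs.length (cs.simple s * x) + 1 = cs.length x := cs.isLeftDescent_iff.1 hs

lemma desc_not {x : W} {s : I} (hs : cs.IsLeftDescent x s) :
    ¬ cs.IsLeftDescent (cs.simple s * x) s := by
  rw [cs.not_isLeftDescent_iff, cs.simple_mul_simple_cancel_left]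
  exact (desc_length cs hs).symm

lemma asc_length {x : W} {s : I} (hs : ¬ cs.IsLeftDescent x s) :
    cs.length (cs.simple s * x) = cs.length x + 1 := cs.not_isLeftDescent_iff.1 hs

/-- If `s` is a left descent of `x`, then `T_s e_{sx}` is `e_x` plus terms of smaller length. -/
lemma asc_desc (hA : Asc cs K T) {x : W} {s : I} (hs : cs.IsLeftDescent x s)
    (hk : cs.length x < K) :
    T s (ev1 R (cs.simple s * x)) - ev1 R x ∈ LL cs R (cs.length x) := by
  have h := hA s (cs.simple s * x) (by rw [desc_length cs hs]; exact hk) (desc_not cs hs)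
  rwa [desc_length cs hs, cs.simple_mul_simple_cancel_left] at h

variable (hF : Filt cs T) (hA : Asc cs K T) (hQ : Quad cs u v K T)
  (hc : ∀ s w, c s w ∈ LL cs R K)

include hF hA hc in
lemma ext_filt : Filt cs (ext cs u v K T c) := by
  intro s k p hp
  refine LL_map cs (fun x hx => ?_) hp
  rcases lt_trichotomy (cs.length x + 1) K with h | h | h
  · rw [ext_lt cs u v h]
    exact hF _ _ _ (ev1_mem cs hx)
  · by_cases hs : cs.IsLeftDescent x s
    · rw [ext_desc cs u v h hs]
      have h1 := desc_length cs hs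
      have m0 : ev1 R (cs.simple s * x) ∈ LL cs R (cs.length x) := ev1_mem cs (by omega)
      exact sub_mem (sub_mem (Submodule.smul_mem _ _ (LL_mono cs R (by omega) (hF s _ _ m0)))
        (Submodule.smul_mem _ _ (LL_mono cs R (by omega) m0)))
        (LL_mono cs R (by omega) (hF s _ _ (asc_desc cs hA hs (by omega))))
    · rw [ext_asc cs u v h hs]
      exact add_mem (ev1_mem cs (by rw [asc_length cs hs]; omega))
        (LL_mono cs R (by omega) (hc _ _))
  · rw [ext_gt cs u v h]
    exact zero_mem _

include hA hc in
lemma ext_Asc : Asc cs (K + 1) (ext cs u v K T c) := by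
  intro s x hx hs
  rcases lt_or_eq_of_le (Nat.lt_succ_iff.1 hx) with h | h
  · rw [ext_lt cs u v h]
    exact hA s x h hs
  · rw [ext_asc cs u v h hs, add_sub_cancel_left, h]
    exact hc _ _

include hF hA hQ in
lemma ext_quad : Quad cs u v (K + 1) (ext cs u v K T c) := by
  have ag : Agree cs K T (ext cs u v K T c) := ext_agree cs u v
  have hQ' := ag.quad hF hQ
  intro s k p hp hk
  refine LL_eq cs (A := ext cs u v K T c s * ext cs u v K T c s)
    (B := u s • ext cs u v K T c s - v s • 1) (fun x hx => ?_) hp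
  simp only [Module.End.mul_apply, LinearMap.sub_apply, LinearMap.smul_apply, Module.End.one_apply]
  rcases lt_or_eq_of_le (show cs.length x + 2 ≤ K by omega) with h | h
  · exact hQ' s _ _ (ev1_mem cs (Nat.lt_succ_self _)) h
  rw [ext_lt cs u v (show cs.length x + 1 < K by omega)]
  by_cases hs : cs.IsLeftDescent x s
  · have h1 := desc_length cs hs
    have hq := asc_desc cs hA hs (by omega)
    have m0 : ev1 R (cs.simple s * x) ∈ LL cs R (cs.length x) := ev1_mem cs (by omega)
    have m1 := hF s _ _ m0
    have q0 := hQ s _ _ m0 (by omega)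
    have q1 := hQ s _ _ hq (by omega)
    have a1 := ag s _ _ (hF s _ _ hq) (by omega)
    have a2 : ext cs u v K T c s (T s (T s (ev1 R (cs.simple s * x)))) =
        T s (T s (T s (ev1 R (cs.simple s * x)))) := by
      rw [q0]
      exact ag s _ _ (sub_mem (Submodule.smul_mem _ _ m1) (Submodule.smul_mem _ _
        (LL_mono cs R (Nat.le_succ _) m0))) (by omega)
    have e : ev1 R x = T s (ev1 R (cs.simple s * x)) -
      (T s (ev1 R (cs.simple s * x)) - ev1 R x) := by abel
    rw [e, map_sub, map_sub, a2, a1, q1, q0]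
    simp only [map_sub, map_smul, q0]
    module
  · have h1 := asc_length cs hs
    have hd : cs.IsLeftDescent (cs.simple s * x) s := by
      rw [cs.isLeftDescent_iff, cs.simple_mul_simple_cancel_left, h1]
    have hq := hA s x (by omega) hs
    have key := ext_desc cs u v (T := T) (c := c) (show cs.length (cs.simple s * x) + 1 = K by omega) hd
    rw [cs.simple_mul_simple_cancel_left] at key
    have a1 := ag s _ _ hq (by omega)
    rw [map_sub, key] at a1
    rw [← sub_eq_zero] at a1 ⊢
    rw [← a1]
    abel

/-- The correction `c` enters the action of an alternating word reaching length `K` only through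
its first letter, which acts last. -/
lemma ext_wp_asc {s t : I} {m : ℕ} (hm : m ≠ 0) {x : W} (hs : ¬ cs.IsLeftDescent x s)
    (ht : ¬ cs.IsLeftDescent x t) (hst : s ≠ t) (hM : M s t = m) (hk : cs.length x + m = K)
    (hF : Filt cs T) (hA : Asc cs K T) (c : I → W → (W →₀ R)) :
    wp (ext cs u v K T c) (alt s t m) (ev1 R x) =
      wp (ext cs u v K T 0) (alt s t m) (ev1 R x) + c s (cs.wordProd (alt s t m) * x) := by
  obtain ⟨m, rfl⟩ : ∃ k, m = k + 1 := ⟨m - 1, by omega⟩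
  have l1 := pre_alt_of_not_descent cs hst hs ht (m + 1) hM.ge
  have l2 := pre_alt_of_not_descent cs hst.symm ht hs m (by rw [M.symmetric t s]; omega)
  rw [alt, cs.wordProd_cons, mul_assoc] at l1 ⊢
  set y := cs.wordProd (alt t s m) * x with hy
  have hd : ¬ cs.IsLeftDescent y s := by rw [cs.not_isLeftDescent_iff]; omega
  have low := asc_word hF hA (alt t s m) (x := x) (by rw [length_alt, l2])
    (by rw [length_alt]; omega)
  rw [length_alt] at low
  have hx : ev1 R x ∈ LL cs R (cs.length x + 1) := ev1_mem cs (Nat.lt_succ_self _)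
  have key : ∀ c, wp (ext cs u v K T c) (s :: alt t s m) (ev1 R x) = ev1 R (cs.simple s * y) +
      c s (cs.simple s * y) + T s (wp T (alt t s m) (ev1 R x) - ev1 R y) := by
    intro c
    have ag : Agree cs K T (ext cs u v K T c) := ext_agree cs u v
    rw [wp_cons, Module.End.mul_apply, ag.wp hF _ hx (by rw [length_alt]; omega),
      ← ext_asc cs u v (T := T) (show cs.length y + 1 = K by omega) hd, ← ag s _ _ low (by omega),
      ← map_add, add_sub_cancel]
  rw [key, key]
  simp only [Pi.zero_apply]
  abel

include hF hA in
lemma ext_zel_asc (f : I → I → ℕ → R) {s t : I} (hm : M s t ≠ 0) {x : W}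
    (hs : ¬ cs.IsLeftDescent x s) (ht : ¬ cs.IsLeftDescent x t) (hst : s ≠ t)
    (hk : cs.length x + M s t = K) (c : I → W → (W →₀ R)) :
    zel (ext cs u v K T c) M f s t (ev1 R x) = zel (ext cs u v K T 0) M f s t (ev1 R x) +
      c s (cs.wordProd (alt s t (M s t)) * x) - c t (cs.wordProd (alt s t (M s t)) * x) := by
  have hx : ev1 R x ∈ LL cs R (cs.length x + 1) := ev1_mem cs (Nat.lt_succ_self _)
  have ag : ∀ c, Agree cs K T (ext cs u v K T c) := fun c => ext_agree cs u v
  have e1 := ext_wp_asc cs u v hm hs ht hst rfl hk hF hA c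
  have e2 := ext_wp_asc cs u v hm ht hs hst.symm (M.symmetric t s) hk hF hA c
  simp only [zel, LinearMap.add_apply, LinearMap.sum_apply, LinearMap.smul_apply]
  have e3 : ∀ l ∈ Finset.Ico 1 ((M s t + 1) / 2),
      f s t l • bop (ext cs u v K T c) s t (M s t - 2 * l) (ev1 R x) =
      f s t l • bop (ext cs u v K T 0) s t (M s t - 2 * l) (ev1 R x) := fun l hl => by
    rw [Finset.mem_Ico] at hl
    rw [(ag c).bop hF s t hx (by omega), (ag 0).bop hF s t hx (by omega)]
  rw [Finset.sum_congr rfl e3]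
  have e4 : cs.wordProd (alt t s (M s t)) = cs.wordProd (alt s t (M s t)) := by
    rw [wordProd_alt, M.symmetric]
  simp only [bop, LinearMap.sub_apply, e1, e2, e4]
  abel

include hF hA hQ in
/-- The braid relations at level `K + 1` follow from those at level `K` and from the equations
`hcoc` on the corrections. At `e_x` with `s` or `t` a left descent of `x` they hold whatever the
corrections are, by moving the relation past `T_s`. -/
lemma ext_br (f : I → I → ℕ → R) (hf : ∀ i j l, f i j l = f j i l)
    (h1 : ∀ i j : I, i ≠ j → M i j ≠ 0 → Odd (M i j) → u i = u j ∧ v i = v j) (hB : Br cs f K T)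
    (hc : ∀ s w, c s w ∈ LL cs R K)
    (hcoc : ∀ s t x, s ≠ t → M s t ≠ 0 → ¬ cs.IsLeftDescent x s → ¬ cs.IsLeftDescent x t →
      cs.length x + M s t = K → zel (ext cs u v K T 0) M f s t (ev1 R x) +
        c s (cs.wordProd (alt s t (M s t)) * x) - c t (cs.wordProd (alt s t (M s t)) * x) = 0) :
    Br cs f (K + 1) (ext cs u v K T c) := by
  have ag : Agree cs K T (ext cs u v K T c) := ext_agree cs u v
  have hB' := ag.br hF hB
  have hQ' : Quad cs u v (K + 1) (ext cs u v K T c) := ext_quad cs u v hF hA hQ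
  have hF' : Filt cs (ext cs u v K T c) := ext_filt cs u v hF hA hc
  have hA' := ag.asc hA
  have two : ∀ s t, s ≠ t → M s t ≠ 0 → 2 ≤ M s t := fun s t hst h0 => by
    have := M.off_diagonal s t hst; omega
  have desc : ∀ s t x, s ≠ t → M s t ≠ 0 → cs.length x + M s t = K → cs.IsLeftDescent x s →
      zel (ext cs u v K T c) M f s t (ev1 R x) = 0 := by
    intro s t x hst hm hk hs
    have hm2 := two s t hst hm
    have l1 := desc_length cs hs
    have hq := asc_desc cs hA' hs (by omega)
    have m0 : ev1 R (cs.simple s * x) ∈ LL cs R (cs.length x) := ev1_mem cs (by omega)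
    have e : ev1 R x = ext cs u v K T c s (ev1 R (cs.simple s * x)) -
      (ext cs u v K T c s (ev1 R (cs.simple s * x)) - ev1 R x) := by abel
    have z0 := hB' s t hst hm _ _ m0 (by omega)
    rw [e, map_sub, hB' s t hst hm _ _ hq (by omega), sub_zero]
    rw [zel_apply_simple _ M f hm rfl (hQ' s _ _ m0 (by omega)), z0, map_zero, smul_zero, sub_zero]
    intro i hi q hq
    have hqm : q ∈ LL cs R (cs.length x + i) := by
      rcases hq with rfl | rfl
      · simpa [length_alt] using hF'.wp (alt s t i) m0
      · simpa [length_alt] using hF'.wp (alt t s i) m0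
    rw [hQ' _ _ _ hqm (by omega)]
    split_ifs with he
    · rfl
    · obtain ⟨h2, h3⟩ := h1 s t hst hm (Nat.not_even_iff_odd.1 he)
      rw [h2, h3]
  intro s t hst hm k p hp hk
  have := LL_eq cs (A := zel (ext cs u v K T c) M f s t) (B := 0) (fun x hx => ?_) hp
  · simpa using this
  rw [LinearMap.zero_apply]
  rcases lt_or_eq_of_le (show cs.length x + M s t ≤ K by omega) with h | h
  · exact hB' s t hst hm _ _ (ev1_mem cs (Nat.lt_succ_self _)) (by omega)
  by_cases hs : cs.IsLeftDescent x s
  · exact desc s t x hst hm h hs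
  by_cases ht : cs.IsLeftDescent x t
  · rw [zel_swap _ M f hf t s, LinearMap.neg_apply, desc t s x hst.symm (by rwa [M.symmetric])
      (by rwa [M.symmetric]) ht, neg_zero]
  · rw [ext_zel_asc cs u v hF hA f hm hs ht hst h]
    exact hcoc s t x hst hm hs ht h

end Stmt14

/-! ### The obstruction cocycle -/

namespace Stmt14
open Lt

section Cocycle
variable {I W : Type*} [Group W] {M : CoxeterMatrix I} (cs : CoxeterSystem M W)
  {R : Type*} [CommRing R] {u v : I → R} {T : I → Module.End R (W →₀ R)} {K : ℕ}
  {f : I → I → ℕ → R}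

variable (T f) in
/-- The obstruction at `w`: the left side of the deformed braid relation for `s`, `t`, evaluated
at `e_x`, where `w = π x` and `π` is the longest element of the subgroup generated by `s` and `t`.
-/
def obs (s t : I) (w : W) : W →₀ R :=
  zel T M f s t (ev1 R ((cs.wordProd (alt s t (M s t)))⁻¹ * w))

variable {cs}

lemma obs_swap (hf : ∀ i j l, f i j l = f j i l) (s t : I) (w : W) :
    obs cs T f t s w = - obs cs T f s t w := by
  have e : cs.wordProd (alt t s (M t s)) = cs.wordProd (alt s t (M s t)) := by
    rw [wordProd_alt cs s t, M.symmetric s t]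
  rw [obs, obs, e, zel_swap T M f hf s t, LinearMap.neg_apply]

lemma obs_mem (hF : Filt cs T) (hA : Asc cs (K + 1) T) {s t : I} (hst : s ≠ t) {w : W}
    (hs : cs.IsLeftDescent w s) (ht : cs.IsLeftDescent w t) (hw : cs.length w = K) :
    obs cs T f s t w ∈ LL cs R K := by
  have p1 := pre_alt cs hst hs ht (M s t) (.inr le_rfl)
  have l1 := p1.length_eq
  have hm := order_ne_zero cs hst hs ht
  have hm2 := M.off_diagonal s t hst
  rw [length_alt] at l1
  rw [obs]
  set x := (cs.wordProd (alt s t (M s t)))⁻¹ * w with hx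
  have e1 : cs.wordProd (alt s t (M s t)) * x = w := by rw [hx, mul_inv_cancel_left]
  have e2 : cs.wordProd (alt t s (M s t)) * x = w := by
    rw [← e1, wordProd_alt cs s t]
  have a1 := asc_word hF hA (alt s t (M s t)) (x := x) (by rw [length_alt, e1, l1])
    (by rw [length_alt]; omega)
  have a2 := asc_word hF hA (alt t s (M s t)) (x := x) (by rw [length_alt, e2, l1])
    (by rw [length_alt]; omega)
  rw [length_alt, ← l1, hw] at a1 a2
  rw [e1] at a1
  rw [e2] at a2
  simp only [zel, LinearMap.add_apply, LinearMap.sum_apply, LinearMap.smul_apply]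
  refine add_mem ?_ (sum_mem fun l hl => Submodule.smul_mem _ _ ?_)
  · have := sub_mem a1 a2
    rwa [sub_sub_sub_cancel_right] at this
  · rw [Finset.mem_Ico] at hl
    exact LL_mono cs R (by omega) (hF.bop s t _ (ev1_mem cs (Nat.lt_succ_self (cs.length x))))

/-- In the obstruction, the basis vector `e_{βy}` may be replaced by `T_β e_y`, for any
factorisation of `π⁻¹ w` as `βy` with lengths adding: the two differ by a vector of lower degree,
where the braid relation is already known. -/
lemma obs_eq (hF : Filt cs T) (hA : Asc cs (K + 1) T) (hB : Br cs f K T) {s t : I} (hst : s ≠ t)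
    (hm : M s t ≠ 0) {w y : W} {β : List I} {m : ℕ} (hM : M s t = m)
    (hw : w = cs.wordProd (alt s t m) * (cs.wordProd β * y))
    (hl : cs.length w = m + β.length + cs.length y) (hK : cs.length w = K) :
    obs cs T f s t w = zel T M f s t (wp T β (ev1 R y)) := by
  subst hM
  have e : (cs.wordProd (alt s t (M s t)))⁻¹ * w = cs.wordProd β * y := by
    rw [hw, inv_mul_cancel_left]
  have h1 := cs.length_mul_le (cs.wordProd (alt s t (M s t))) (cs.wordProd β * y)
  have h2 := cs.length_wordProd_le (alt s t (M s t))
  have h3 := cs.length_mul_le (cs.wordProd β) y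
  have h4 := cs.length_wordProd_le β
  rw [length_alt] at h2
  rw [← hw] at h1
  have low := asc_word hF hA β (x := y) (by omega) (by omega)
  have := hB s t hst hm _ _ low (by omega)
  rw [map_sub, sub_eq_zero] at this
  rw [obs, e, this]

omit [Group W] in
lemma evW_eq_wp (g : Lt → I) (l : List Lt) (p : W →₀ R) :
    evW (fun x => T (g x)) l p = wp T (l.map g) p := by
  induction l with
  | nil => rfl
  | cons s l ih => rw [evW, ih, List.map_cons, wp_cons, Module.End.mul_apply]

omit [Group W] in
lemma zev_eq_zel (g : Lt → I) {s t : Lt} {m : ℕ} (hm : M (g s) (g t) = m) {L : List (ℕ × R)}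
    (hL : ∀ F : ℕ → W →₀ R, ∑ l ∈ Finset.Ico 1 ((m + 1) / 2), f (g s) (g t) l • F (m - 2 * l) =
      (L.map fun x => x.2 • F x.1).sum) (p : W →₀ R) :
    zev (fun x => T (g x)) s t m L p = zel T M f (g s) (g t) p := by
  have e : ∀ j, evW (fun x => T (g x)) (alt s t j) p - evW (fun x => T (g x)) (alt t s j) p =
      bop T (g s) (g t) j p := by
    intro j
    rw [evW_eq_wp, evW_eq_wp, map_alt, map_alt]; rfl
  simp only [zev, zel, e, hm, LinearMap.add_apply, LinearMap.sum_apply, LinearMap.smul_apply]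
  rw [hL fun j => bop T (g s) (g t) j p]

variable (hf : ∀ i j l, f i j l = f j i l)
  (h1 : ∀ i j : I, i ≠ j → M i j ≠ 0 → Odd (M i j) → u i = u j ∧ v i = v j)
  (h2 : ∀ i j k : I, i ≠ j → j ≠ k → i ≠ k → M i j = 3 → M j k = 3 → M i k = 2 → f i j 1 = f j k 1)
  (hF : Filt cs T) (hA : Asc cs (K + 1) T) (hQ : Quad cs u v K T) (hB : Br cs f K T)
  {w : W} (hw : cs.length w = K) {p q r : I} (hpq : p ≠ q) (hqr : q ≠ r) (hpr : p ≠ r)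
  (hp : cs.IsLeftDescent w p) (hq : cs.IsLeftDescent w q) (hr : cs.IsLeftDescent w r)

/-- The assignment of generators to the three letters. -/
def lett (p q r : I) : Lt → I
  | .a => p
  | .b => q
  | .c => r

lemma lett_bond {p q r : I} {m : ℕ} (hpr : M p r = 2) (hpq : M p q = 3) (hqr : M q r = m) :
    ∀ s t, M (lett p q r s) (lett p q r t) = bond m s t := by
  have h1 := M.symmetric p r
  have h2 := M.symmetric p q
  have h3 := M.symmetric q r
  intro s t
  cases s <;> cases t <;> simp_all [lett, bond]

include h1 h2 hF hA hQ hB hw hpq hqr hpr hp hq hr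

/-- The cocycle identity in the irreducible types `A3`, `B3`, `H3`. -/
lemma obs_cocycle_three (mpr : M p r = 2) (mpq : M p q = 3)
    (mqr : M q r = 3 ∨ M q r = 4 ∨ M q r = 5) :
    obs cs T f p q w + obs cs T f q r w + obs cs T f r p w = 0 := by
  have hFm : Monotone (LL cs R) := LL_mono cs R
  have mrp : M r p = 2 := by rw [M.symmetric]; exact mpr
  have Q : ∀ s k (x : W →₀ R), x ∈ LL cs R k → k + 2 ≤ K →
      T (lett p q r s) (T (lett p q r s) x) =
        u (lett p q r s) • T (lett p q r s) x - v (lett p q r s) • x := fun s k x => hQ _ k x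
  have hT : ∀ s k p', p' ∈ LL cs R k → T (lett p q r s) p' ∈ LL cs R (k + 1) :=
    fun s k p' => hF _ k p'
  obtain ⟨hu, hv⟩ := h1 p q hpq (by omega) (by rw [mpq]; decide)
  have zac : ∀ x, zev (fun s => T (lett p q r s)) a c 2 [] x = zel T M f p r x :=
    zev_eq_zel (lett p q r) mpr (by simp)
  have zca : ∀ x, zev (fun s => T (lett p q r s)) c a 2 [] x = zel T M f r p x :=
    zev_eq_zel (lett p q r) mrp (by simp)
  have zab : ∀ x, zev (fun s => T (lett p q r s)) a b 3 [(1, f p q 1)] x = zel T M f p q x :=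
    zev_eq_zel (lett p q r) mpq (by simp [lett])
  have qa := Q a
  have qb := Q b
  have qc := Q c
  simp only [lett] at qa qb qc
  rw [← hu, ← hv] at qb
  have hac : ∀ k x, x ∈ LL cs R k → k + 2 ≤ K →
      zev (fun s => T (lett p q r s)) a c 2 [] x = 0 := fun k x hx hk => by
    rw [zac]; exact hB p r hpr (by omega) k x hx (by omega)
  have hab : ∀ k x, x ∈ LL cs R k → k + 3 ≤ K →
      zev (fun s => T (lett p q r s)) a b 3 [(1, f p q 1)] x = 0 := fun k x hx hk => by
    rw [zab]; exact hB p q hpq (by omega) k x hx (by omega)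
  have swap : ∀ {v3 : List I} {y : W}, w = cs.wordProd (alt p r 2) * (cs.wordProd v3 * y) →
      w = cs.wordProd (alt r p 2) * (cs.wordProd v3 * y) := fun h => by
    rw [h, ← mpr, wordProd_alt]
  rcases mqr with m | m | m
  · obtain ⟨y, hl, w1, w2, w3⟩ :=
      peel_A3 cs (g := lett p q r) hpq hqr hpr hp hq hr (lett_bond mpr mpq m)
    obtain ⟨hu', hv'⟩ := h1 q r hqr (by omega) (by rw [m]; decide)
    have ef := h2 p q r hpq hqr hpr mpq m mpr
    have zbc : ∀ x, zev (fun s => T (lett p q r s)) b c 3 [(1, f p q 1)] x = zel T M f q r x :=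
      zev_eq_zel (lett p q r) m (by simp [lett, ef])
    have hbc : ∀ k x, x ∈ LL cs R k → k + 3 ≤ K →
        zev (fun s => T (lett p q r s)) b c 3 [(1, f p q 1)] x = 0 := fun k x hx hk => by
      rw [zbc]; exact hB q r hqr (by omega) k x hx (by omega)
    have key := cocycle_A3 hFm hT qa qb qc hac hab (ev1_mem cs (Nat.lt_succ_self (cs.length y)))
      (hu.trans hu').symm (hv.trans hv').symm hbc (by omega)
    rw [zab, zbc, zca, evW_eq_wp, evW_eq_wp, evW_eq_wp] at key
    rw [obs_eq hF hA hB hpq (by omega) mpq w1 hl hw, obs_eq hF hA hB hqr (by omega) m w2 hl hw,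
      obs_eq hF hA hB hpr.symm (by omega) mrp (swap w3) hl hw]
    exact key
  · obtain ⟨y, hl, w1, w2, w3⟩ :=
      peel_B3 cs (g := lett p q r) hpq hqr hpr hp hq hr (lett_bond mpr mpq m)
    have zbc : ∀ x, zev (fun s => T (lett p q r s)) b c 4 [(2, f q r 1)] x = zel T M f q r x :=
      zev_eq_zel (lett p q r) m (by simp [lett])
    have hbc : ∀ k x, x ∈ LL cs R k → k + 4 ≤ K →
        zev (fun s => T (lett p q r s)) b c 4 [(2, f q r 1)] x = 0 := fun k x hx hk => by
      rw [zbc]; exact hB q r hqr (by omega) k x hx (by omega)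
    have key := cocycle_B3 hFm hT qa qb qc hac hab (ev1_mem cs (Nat.lt_succ_self (cs.length y)))
      hbc (by omega)
    rw [zab, zbc, zca, evW_eq_wp, evW_eq_wp, evW_eq_wp] at key
    rw [obs_eq hF hA hB hpq (by omega) mpq w1 hl hw, obs_eq hF hA hB hqr (by omega) m w2 hl hw,
      obs_eq hF hA hB hpr.symm (by omega) mrp (swap w3) hl hw]
    exact key
  · obtain ⟨y, hl, w1, w2, w3⟩ :=
      peel_H3 cs (g := lett p q r) hpq hqr hpr hp hq hr (lett_bond mpr mpq m)
    obtain ⟨hu', hv'⟩ := h1 q r hqr (by omega) (by rw [m]; decide)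
    have zbc : ∀ x, zev (fun s => T (lett p q r s)) b c 5 [(3, f q r 1), (1, f q r 2)] x =
        zel T M f q r x :=
      zev_eq_zel (lett p q r) m (by simp [lett, Finset.sum_Ico_succ_top])
    have hbc : ∀ k x, x ∈ LL cs R k → k + 5 ≤ K →
        zev (fun s => T (lett p q r s)) b c 5 [(3, f q r 1), (1, f q r 2)] x = 0 :=
      fun k x hx hk => by
      rw [zbc]; exact hB q r hqr (by omega) k x hx (by omega)
    have key := cocycle_H3 hFm hT qa qb qc hac hab (ev1_mem cs (Nat.lt_succ_self (cs.length y)))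
      (hu.trans hu').symm (hv.trans hv').symm hbc (by omega)
    rw [zab, zbc, zca, evW_eq_wp, evW_eq_wp, evW_eq_wp] at key
    rw [obs_eq hF hA hB hpq (by omega) mpq w1 hl hw, obs_eq hF hA hB hqr (by omega) m w2 hl hw,
      obs_eq hF hA hB hpr.symm (by omega) mrp (swap w3) hl hw]
    exact key

omit h1 h2 hF hA hQ hB hw hpq hqr hpr hp hq hr

lemma mem_alt {s t x : I} {k : ℕ} (h : x ∈ alt s t k) : x = s ∨ x = t := by
  induction k generalizing s t with
  | zero => simp [alt] at h
  | succ k ih =>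
    rcases List.mem_cons.1 h with h | h
    · exact .inl h
    · exact (ih h).symm

lemma wordProd_comm {ω : List I} (h : ∀ s ∈ ω, M s r = 2) (y : W) :
    cs.wordProd ω * (cs.simple r * y) = cs.simple r * (cs.wordProd ω * y) := by
  induction ω with
  | nil => simp
  | cons s ω ih =>
    rw [cs.wordProd_cons, mul_assoc, mul_assoc, ih fun t ht => h t (List.mem_cons_of_mem _ ht),
      simple_comm cs (h s List.mem_cons_self)]

/-- A left descent commuting with all the letters of `ω`, and distinct from them, remains a left
descent when `ω` is removed from the left of `w`. -/
lemma desc_of_comm {ω : List I} (h : ∀ s ∈ ω, s ≠ r ∧ M s r = 2) (hω : Pre cs ω w)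
    (hr : cs.IsLeftDescent w r) : cs.IsLeftDescent ((cs.wordProd ω)⁻¹ * w) r := by
  induction ω generalizing w with
  | nil => simpa using hr
  | cons s ω ih =>
    obtain ⟨hs, hm⟩ := h s List.mem_cons_self
    have h2 := (pre_alt cs hs hω.1 hr 2 (.inr hm.ge)).2.1
    rw [cs.wordProd_cons, mul_inv_rev, cs.inv_simple, mul_assoc]
    exact ih (fun t ht => h t (List.mem_cons_of_mem _ ht)) hω.2 h2

omit [Group W] in
lemma zel_two {s t : I} (h : M s t = 2) (x : W →₀ R) :
    zel T M f s t x = T s (T t x) - T t (T s x) := by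
  simp [zel, bop, h, alt]

include hF hB in
/-- If `r` commutes with all the letters of `ω`, then `T_r` commutes with the product along `ω`
below level `K`. -/
lemma wp_comm {ω : List I} (h : ∀ s ∈ ω, s ≠ r ∧ M s r = 2) {k : ℕ} {x : W →₀ R}
    (hx : x ∈ LL cs R k) (hk : k + ω.length + 1 ≤ K) :
    wp T ω (T r x) = T r (wp T ω x) := by
  induction ω with
  | nil => simp
  | cons s ω ih =>
    rw [List.length_cons] at hk
    obtain ⟨hs, hm⟩ := h s List.mem_cons_self
    have := hB s r hs (by omega) _ _ (hF.wp ω hx) (by omega)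
    rw [zel_two hm, sub_eq_zero] at this
    rw [wp_cons, Module.End.mul_apply, ih (fun t ht => h t (List.mem_cons_of_mem _ ht)) (by omega),
      this, Module.End.mul_apply]

include hF hA hB hw hpq hqr hpr hp hq hr

/-- The cocycle identity in the reducible case, where `r` commutes with `p` and `q`. -/
lemma obs_cocycle_comm (mpr : M p r = 2) (mqr : M q r = 2) :
    obs cs T f p q w + obs cs T f q r w + obs cs T f r p w = 0 := by
  have mrp : M r p = 2 := by rw [M.symmetric]; exact mpr
  have hm := order_ne_zero cs hpq hp hq
  obtain ⟨m, hM⟩ : ∃ m, M p q = m + 1 := ⟨M p q - 1, by omega⟩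
  have key : ∀ s ∈ alt p q (m + 1), s ≠ r ∧ M s r = 2 := fun s hs => by
    rcases mem_alt hs with rfl | rfl
    · exact ⟨hpr, mpr⟩
    · exact ⟨hqr, mqr⟩
  have keyX : ∀ j, ∀ s ∈ alt p q j, s ≠ r ∧ M s r = 2 := fun j s hs => by
    rcases mem_alt hs with rfl | rfl
    · exact ⟨hpr, mpr⟩
    · exact ⟨hqr, mqr⟩
  have keyY : ∀ j, ∀ s ∈ alt q p j, s ≠ r ∧ M s r = 2 := fun j s hs => by
    rcases mem_alt hs with rfl | rfl
    · exact ⟨hqr, mqr⟩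
    · exact ⟨hpr, mpr⟩
  have pre := pre_alt cs hpq hp hq (m + 1) (.inr hM.ge)
  have hl := pre.length_eq
  have hd := desc_of_comm key pre hr
  have hd' := desc_length cs hd
  rw [length_alt] at hl
  set y := cs.simple r * ((cs.wordProd (alt p q (m + 1)))⁻¹ * w) with hy
  have w1 : w = cs.wordProd (alt p q (m + 1)) * (cs.simple r * y) := by
    rw [hy, cs.simple_mul_simple_cancel_left, mul_inv_cancel_left]
  have w1' : w = cs.wordProd (alt q p (m + 1)) * (cs.simple r * y) := by
    rw [w1, ← hM, wordProd_alt]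
  have w2 : w = cs.wordProd (alt q r 2) * (cs.wordProd (alt p q m) * y) := by
    rw [w1', alt, cs.wordProd_cons, mul_assoc, wordProd_comm fun s hs => (keyX m s hs).2]
    simp [alt, cs.wordProd_cons, mul_assoc]
  have w3 : w = cs.wordProd (alt r p 2) * (cs.wordProd (alt q p m) * y) := by
    rw [← mrp, wordProd_alt, mrp, w1, alt, cs.wordProd_cons, mul_assoc,
      wordProd_comm fun s hs => (keyY m s hs).2]
    simp [alt, cs.wordProd_cons, mul_assoc]
  have hy1 : ev1 R y ∈ LL cs R (cs.length y + 1) := ev1_mem cs (Nat.lt_succ_self _)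
  rw [obs_eq hF hA hB (β := [r]) hpq (by omega) hM (by simpa using w1) (by simp; omega) hw,
    obs_eq hF hA hB hqr (by omega) mqr w2 (by rw [length_alt]; omega) hw,
    obs_eq hF hA hB hpr.symm (by omega) mrp w3 (by rw [length_alt]; omega) hw,
    zel_two mqr, zel_two mrp, wp_cons, wp_nil, mul_one]
  have cX : ∀ j, j ≤ m → wp T (alt p q j) (T r (ev1 R y)) = T r (wp T (alt p q j) (ev1 R y)) :=
    fun j hj => wp_comm hF hB (keyX j) hy1 (by rw [length_alt]; omega)
  have cY : ∀ j, j ≤ m → wp T (alt q p j) (T r (ev1 R y)) = T r (wp T (alt q p j) (ev1 R y)) :=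
    fun j hj => wp_comm hF hB (keyY j) hy1 (by rw [length_alt]; omega)
  have z := congrArg (T r) (hB p q hpq hm _ _ hy1 (by omega))
  simp only [zel, hM, LinearMap.add_apply, LinearMap.sum_apply, LinearMap.smul_apply, map_add,
    map_sum, map_smul, map_zero] at z ⊢
  have low : ∑ l ∈ Finset.Ico 1 ((m + 1 + 1) / 2),
        f p q l • bop T p q (m + 1 - 2 * l) (T r (ev1 R y)) =
      ∑ l ∈ Finset.Ico 1 ((m + 1 + 1) / 2),
        f p q l • T r (bop T p q (m + 1 - 2 * l) (ev1 R y)) := by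
    refine Finset.sum_congr rfl fun l hl => ?_
    rw [Finset.mem_Ico] at hl
    rw [bop, LinearMap.sub_apply, LinearMap.sub_apply, map_sub, cX _ (by omega), cY _ (by omega)]
  rw [low]
  simp only [bop, alt, wp_cons, LinearMap.sub_apply, Module.End.mul_apply, map_sub, cX m le_rfl,
    cY m le_rfl] at z ⊢
  rw [← z]
  abel

end Cocycle
end Stmt14

/-! ### Construction of the representation -/

namespace Stmt14

section Step
variable {I W : Type*} [Group W] {M : CoxeterMatrix I} {cs : CoxeterSystem M W}
  {R : Type*} [CommRing R] {u v : I → R} {T : I → Module.End R (W →₀ R)} {K : ℕ}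
  {f : I → I → ℕ → R}
  (hf : ∀ i j l, f i j l = f j i l)
  (h1 : ∀ i j : I, i ≠ j → M i j ≠ 0 → Odd (M i j) → u i = u j ∧ v i = v j)
  (h2 : ∀ i j k : I, i ≠ j → j ≠ k → i ≠ k → M i j = 3 → M j k = 3 → M i k = 2 → f i j 1 = f j k 1)

include hf h1 h2

/-- The cocycle identity for any three left descents of an element of length `K`. -/
lemma obs_cocycle (hF : Filt cs T) (hA : Asc cs (K + 1) T) (hQ : Quad cs u v K T)
    (hB : Br cs f K T) {w : W} (hw : cs.length w = K) {p q r : I}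
    (hp : cs.IsLeftDescent w p) (hq : cs.IsLeftDescent w q) (hr : cs.IsLeftDescent w r) :
    obs cs T f p q w + obs cs T f q r w + obs cs T f r p w = 0 := by
  have self : ∀ s, obs cs T f s s w = 0 := fun s => by simp [obs, zel_self]
  by_cases hpq : p = q
  · subst hpq; rw [self, zero_add, obs_swap hf r p, neg_add_cancel]
  by_cases hqr : q = r
  · subst hqr; rw [self, add_zero, obs_swap hf q p, neg_add_cancel]
  by_cases hpr : p = r
  · subst hpr; rw [self, add_zero, obs_swap hf q p, neg_add_cancel]
  refine rankThree_induct cs (w := w) (P := fun p q r =>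
    obs cs T f p q w + obs cs T f q r w + obs cs T f r p w = 0) ?_ ?_ ?_ ?_ hpq hqr hpr hp hq hr
  · intro x y z h
    rw [obs_swap hf x y, obs_swap hf z x, obs_swap hf y z, ← neg_eq_zero, ← h]
    abel
  · intro x y z h
    rw [← h]
    abel
  · intro p q r hpq hqr hpr hp hq hr mpr mqr
    exact obs_cocycle_comm hF hA hB hw hpq hqr hpr hp hq hr mpr mqr
  · intro p q r hpq hqr hpr hp hq hr mpr mpq mqr
    exact obs_cocycle_three h1 h2 hF hA hQ hB hw hpq hqr hpr hp hq hr mpr mpq mqr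

variable (cs u v f K) in
/-- The operators satisfy all requirements up to level `K`. -/
def Good (T : I → Module.End R (W →₀ R)) : Prop :=
  Filt cs T ∧ Asc cs K T ∧ Quad cs u v K T ∧ Br cs f K T

/-- Operators satisfying the requirements up to level `K` can be modified above this level so as
to satisfy them up to level `K + 1`. -/
lemma good_step (h : Good cs u v K f T) : ∃ T', Good cs u v (K + 1) f T' ∧ Agree cs K T T' := by
  classical
  obtain ⟨hF, hA, hQ, hB⟩ := h
  have hz : ∀ (s : I) (w : W), (0 : I → W → (W →₀ R)) s w ∈ LL cs R K := fun _ _ => zero_mem _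
  set T0 := ext cs u v K T 0 with hT0
  have ag0 : Agree cs K T T0 := ext_agree cs u v
  have hF0 : Filt cs T0 := ext_filt cs u v hF hA hz
  have hA0 : Asc cs (K + 1) T0 := ext_Asc cs u v hA hz
  have hQ0 : Quad cs u v K T0 := ag0.quad hF hQ
  have hB0 : Br cs f K T0 := ag0.br hF hB
  let s0 : W → I → I := fun w s => if h : ∃ t, cs.IsLeftDescent w t then h.choose else s
  -- A fixed left descent `s0` of `w` gets correction zero; the equations between `s0` and the
  -- other left descents then determine all the other corrections.
  let c : I → W → (W →₀ R) := fun s w =>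
    if cs.length w = K ∧ cs.IsLeftDescent w s then - obs cs T0 f s (s0 w s) w else 0
  have hs0 : ∀ w s, cs.IsLeftDescent w s → cs.IsLeftDescent w (s0 w s) := fun w s hs => by
    have h : ∃ t, cs.IsLeftDescent w t := ⟨s, hs⟩
    simp only [s0, dif_pos h]
    exact h.choose_spec
  have hs1 : ∀ w s t, cs.IsLeftDescent w s → s0 w s = s0 w t := fun w s t hs => by
    have h : ∃ t, cs.IsLeftDescent w t := ⟨s, hs⟩
    simp only [s0, dif_pos h]
  have hc : ∀ s w, c s w ∈ LL cs R K := fun s w => by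
    simp only [c]
    split_ifs with h
    · refine neg_mem ?_
      by_cases e : s = s0 w s
      · rw [← e]
        simp [obs, zel_self]
      · exact obs_mem hF0 hA0 e h.2 (hs0 w s h.2) h.1
    · exact zero_mem _
  refine ⟨ext cs u v K T c, ⟨ext_filt cs u v hF hA hc, ext_Asc cs u v hA hc,
    ext_quad cs u v hF hA hQ, ext_br cs u v hF hA hQ f hf h1 hB hc ?_⟩, ext_agree cs u v⟩
  intro s t x hst hm hs ht hk
  have l1 := pre_alt_of_not_descent cs hst hs ht (M s t) le_rfl
  set w := cs.wordProd (alt s t (M s t)) * x with hw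
  have lw : cs.length w = K := by omega
  have desc : ∀ a b, a ≠ b → ¬ cs.IsLeftDescent x a → ¬ cs.IsLeftDescent x b → M a b = M s t →
      w = cs.wordProd (alt a b (M s t)) * x → cs.IsLeftDescent w a := by
    intro a b hab ha hb hM hw'
    obtain ⟨m, e⟩ : ∃ m, M s t = m + 1 := ⟨M s t - 1, by omega⟩
    have := pre_alt_of_not_descent cs hab.symm hb ha m (by rw [M.symmetric]; omega)
    have e2 : cs.simple a * w = cs.wordProd (alt b a m) * x := by
      rw [hw', e, alt, cs.wordProd_cons, mul_assoc, cs.simple_mul_simple_cancel_left]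
    rw [cs.isLeftDescent_iff, e2]
    omega
  have ds : cs.IsLeftDescent w s := desc s t hst hs ht rfl hw
  have dt : cs.IsLeftDescent w t := desc t s hst.symm ht hs (M.symmetric t s)
    (by rw [hw, wordProd_alt])
  have e : zel T0 M f s t (ev1 R x) = obs cs T0 f s t w := by
    rw [obs, hw, inv_mul_cancel_left]
  -- The cocycle identity for `s`, `t` and the chosen descent is the equation required of `c s w`
  -- and `c t w`.
  have co := obs_cocycle hf h1 h2 hF0 hA0 hQ0 hB0 lw ds dt (hs0 w s ds)
  have e2 : c s w = - obs cs T0 f s (s0 w s) w := if_pos ⟨lw, ds⟩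
  have e3 : c t w = - obs cs T0 f t (s0 w s) w := by
    rw [hs1 w s t ds]; exact if_pos ⟨lw, dt⟩
  rw [e, e2, e3, ← co, obs_swap hf (s0 w s) s, sub_neg_eq_add]
  rw [obs_swap hf s (s0 w s), neg_neg]
  abel

variable (cs) in
/-- Operators satisfying the requirements at every level: the values at each basis vector are
eventually constant along the successive extensions. -/
lemma exists_good : ∃ T : I → Module.End R (W →₀ R), ∀ K, Good cs u v K f T := by
  have g0 : Good cs u v 0 f (0 : I → Module.End R (W →₀ R)) := by
    refine ⟨fun _ _ _ _ => zero_mem _, fun s x h => by omega, fun s k p hp h => by omega,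
      fun s t hst hm k p hp h => by omega⟩
  choose! nx hn1 hn2 using fun (K : ℕ) (T : I → Module.End R (W →₀ R))
    (h : Good cs u v K f T) => good_step (K := K) hf h1 h2 h
  let sq : ℕ → I → Module.End R (W →₀ R) := fun n => Nat.rec 0 (fun k T => nx k T) n
  have gs : ∀ n, Good cs u v n f (sq n) := fun n => by
    induction n with
    | zero => exact g0
    | succ n ih => exact hn1 n _ ih
  have stable : ∀ k n, k ≤ n → Agree cs k (sq k) (sq n) := fun k n h => by
    induction n, h using Nat.le_induction with
    | base => exact fun _ _ _ _ _ => rfl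
    | succ n h ih =>
      intro s j p hp hj
      rw [← ih s j p hp hj]
      exact hn2 n _ (gs n) s j p hp (by omega)
  let Ti : I → Module.End R (W →₀ R) := fun s =>
    Finsupp.linearCombination R fun x => sq (cs.length x + 2) s (ev1 R x)
  have ag : ∀ K, Agree cs K (sq K) Ti := fun K s k p hp hk => by
    refine LL_eq cs (fun x hx => ?_) hp
    have : Ti s (ev1 R x) = sq (cs.length x + 2) s (ev1 R x) := by simp [Ti, ev1]
    rw [this]
    exact (stable (cs.length x + 2) K (by omega) s (cs.length x + 1) _
      (ev1_mem cs (Nat.lt_succ_self _)) le_rfl).symm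
  refine ⟨Ti, fun K => ⟨?_, (ag K).asc (gs K).2.1, (ag K).quad (gs K).1 (gs K).2.2.1,
    (ag K).br (gs K).1 (gs K).2.2.2⟩⟩
  intro s k p hp
  rw [ag (k + 1) s k p hp le_rfl]
  exact (gs (k + 1)).1 s k p hp

end Step
end Stmt14

/-! ### Spanning -/

namespace Stmt14

section Span
variable {I W : Type*} [Group W] {M : CoxeterMatrix I} {cs : CoxeterSystem M W}
  {R : Type*} [CommRing R] {A : Type*} [Ring A] [Algebra R A] {u v : I → R} {T : I → A}
  {f : I → I → ℕ → R} {g : W → List I}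

variable (cs R T g) in
/-- The span of the products along the chosen words of elements of length less than `k`. -/
def UU (k : ℕ) : Submodule R A := Submodule.span R ((fun x => wp T (g x)) '' {x | cs.length x < k})

lemma UU_mono {k l : ℕ} (h : k ≤ l) : UU cs R T g k ≤ UU cs R T g l :=
  Submodule.span_mono (Set.image_mono fun _ hx => lt_of_lt_of_le hx h)

lemma mem_UU {x : W} {k : ℕ} (h : cs.length x < k) : wp T (g x) ∈ UU cs R T g k :=
  Submodule.subset_span ⟨x, h, rfl⟩

lemma mul_UU {s : I} {k : ℕ} {N : Submodule R A}
    (h : ∀ x, cs.length x < k → T s * wp T (g x) ∈ N) {a : A} (ha : a ∈ UU cs R T g k) :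
    T s * a ∈ N := by
  have : UU cs R T g k ≤ N.comap (LinearMap.mulLeft R (T s)) := by
    refine Submodule.span_le.2 ?_
    rintro _ ⟨x, hx, rfl⟩
    exact h x hx
  exact this ha

lemma reduced_cons {s : I} {α : List I} (h : cs.length (cs.wordProd (s :: α)) = α.length + 1) :
    cs.length (cs.wordProd α) = α.length ∧ cs.IsLeftDescent (cs.wordProd (s :: α)) s := by
  rw [cs.wordProd_cons] at h ⊢
  have h1 := cs.length_wordProd_le α
  have h2 := cs.length_simple_mul (cs.wordProd α) s
  rw [cs.isLeftDescent_iff, cs.simple_mul_simple_cancel_left]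
  omega

variable (hg : ∀ x : W, cs.wordProd (g x) = x ∧ cs.length x = (g x).length)
  (hq : ∀ s, T s * T s = u s • T s - v s • 1)
  (hb : ∀ s t, s ≠ t → M s t ≠ 0 → zel T M f s t = 0)

include hg hq hb

/-- Products along words of length `n` are combinations of products along chosen reduced words of
length at most `n`; for a reduced word, the product is the one along the chosen word of the same
element, up to combinations of shorter ones. -/
lemma straighten (n : ℕ) :
    (∀ ω : List I, ω.length = n → wp T ω ∈ UU cs R T g (n + 1)) ∧
    (∀ ω : List I, ω.length = n → cs.length (cs.wordProd ω) = n →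
      wp T ω - wp T (g (cs.wordProd ω)) ∈ UU cs R T g n) := by
  induction n using Nat.strong_induction_on with
  | _ n ih =>
  -- Left multiplication by a generator raises the degree by at most one below degree `n`.
  have up : ∀ s k, k < n → ∀ a ∈ UU cs R T g k, T s * a ∈ UU cs R T g (k + 1) := by
    intro s k hk a ha
    refine mul_UU (fun x hx => ?_) ha
    have := (ih (cs.length x + 1) (by omega)).1 (s :: g x) (by simp [(hg x).2])
    rw [wp_cons] at this
    exact UU_mono (by omega) this
  -- Two reduced words with the same first letter: induction applies to what follows it.
  have same : ∀ s α β, α.length + 1 = n → β.length + 1 = n →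
      cs.length (cs.wordProd (s :: α)) = n → cs.wordProd (s :: α) = cs.wordProd (s :: β) →
      wp T (s :: α) - wp T (s :: β) ∈ UU cs R T g n := by
    intro s α β ha hb hl he
    have r1 := (reduced_cons (cs := cs) (s := s) (α := α) (by omega)).1
    have r2 := (reduced_cons (cs := cs) (s := s) (α := β) (by rw [← he]; omega)).1
    have e : cs.wordProd α = cs.wordProd β := by
      rw [cs.wordProd_cons, cs.wordProd_cons] at he
      exact mul_left_cancel he
    have i1 := (ih α.length (by omega)).2 α rfl r1
    have i2 := (ih β.length (by omega)).2 β rfl r2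
    rw [show β.length = α.length by omega, ← e] at i2
    have := up s α.length (by omega) _ (sub_mem i1 i2)
    rw [sub_sub_sub_cancel_right, mul_sub] at this
    rw [wp_cons, wp_cons, ← ha]
    exact this
  have two : ∀ ω ω' : List I, ω.length = n → ω'.length = n → cs.length (cs.wordProd ω) = n →
      cs.wordProd ω = cs.wordProd ω' → wp T ω - wp T ω' ∈ UU cs R T g n := by
    intro ω ω' hω hω' hl he
    rcases ω with _ | ⟨s, α⟩
    · rw [← hω, List.length_nil, List.length_eq_zero_iff] at hω'
      subst hω'
      simp
    rcases ω' with _ | ⟨t, β⟩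
    · rw [← hω', List.length_nil] at hω
      simp at hω
    rw [List.length_cons] at hω hω'
    by_cases hst : s = t
    · subst hst
      exact same s α β hω hω' hl he
    have ds := (reduced_cons (cs := cs) (s := s) (α := α) (by omega)).2
    have dt := (reduced_cons (cs := cs) (s := t) (α := β) (by rw [← he]; omega)).2
    rw [← he] at dt
    set x := cs.wordProd (s :: α) with hx
    have hm := order_ne_zero cs hst ds dt
    have pl := (pre_alt cs hst ds dt (M s t) (.inr le_rfl)).length_eq
    rw [length_alt] at pl
    obtain ⟨g1, g2⟩ := hg ((cs.wordProd (alt s t (M s t)))⁻¹ * x)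
    set γ := g ((cs.wordProd (alt s t (M s t)))⁻¹ * x)
    have e1 : x = cs.wordProd (alt s t (M s t) ++ γ) := by
      rw [cs.wordProd_append, g1, mul_inv_cancel_left]
    have e2 : x = cs.wordProd (alt t s (M s t) ++ γ) := by
      rw [e1, cs.wordProd_append, cs.wordProd_append, wordProd_alt]
    have z := congrArg (· * wp T γ) (hb s t hst hm)
    -- The deformed braid relation trades one alternating word for the other, up to words with an
    -- even number of letters fewer.
    have low : wp T (alt s t (M s t) ++ γ) - wp T (alt t s (M s t) ++ γ) ∈ UU cs R T g n := by
      have e : wp T (alt s t (M s t) ++ γ) - wp T (alt t s (M s t) ++ γ) =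
          - ∑ l ∈ Finset.Ico 1 ((M s t + 1) / 2), f s t l •
            (wp T (alt s t (M s t - 2 * l) ++ γ) - wp T (alt t s (M s t - 2 * l) ++ γ)) := by
        simp only [zel, bop, zero_mul, add_mul, Finset.sum_mul, smul_mul_assoc, sub_mul,
          ← wp_append] at z
        exact eq_neg_of_add_eq_zero_left z
      rw [e]
      refine neg_mem (sum_mem fun l hl => Submodule.smul_mem _ _ ?_)
      rw [Finset.mem_Ico] at hl
      have w1 := (ih (M s t - 2 * l + γ.length) (by omega)).1 (alt s t (M s t - 2 * l) ++ γ)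
        (by rw [List.length_append, length_alt])
      have w2 := (ih (M s t - 2 * l + γ.length) (by omega)).1 (alt t s (M s t - 2 * l) ++ γ)
        (by rw [List.length_append, length_alt])
      exact UU_mono (by omega) (sub_mem w1 w2)
    obtain ⟨m, hM⟩ : ∃ m, M s t = m + 1 := ⟨M s t - 1, by omega⟩
    rw [hM] at e1 e2 low
    have c1 := same s α (alt t s m ++ γ) hω (by rw [List.length_append, length_alt]; omega) hl e1
    have c2 := same t (alt s t m ++ γ) β (by rw [List.length_append, length_alt]; omega) hω'
      (by rw [← hl]; exact congrArg _ e2.symm) (e2.symm.trans he)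
    have := add_mem (add_mem c1 low) c2
    simp only [alt, List.cons_append] at this
    rwa [sub_add_sub_cancel, sub_add_sub_cancel] at this
  have top : ∀ ω : List I, ω.length = n → cs.length (cs.wordProd ω) = n →
      wp T ω - wp T (g (cs.wordProd ω)) ∈ UU cs R T g n := fun ω h1 h2 =>
    two ω _ h1 (by rw [← (hg _).2, h2]) h2 (hg _).1.symm
  refine ⟨fun ω hω => ?_, top⟩
  rcases ω with _ | ⟨s, α⟩
  · have := top [] hω (by rw [← hω]; simp)
    have h2 : wp T (g (cs.wordProd [])) ∈ UU cs R T g (n + 1) := mem_UU (by simp)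
    have := add_mem (UU_mono (Nat.le_succ n) this) h2
    rwa [sub_add_cancel] at this
  rw [List.length_cons] at hω
  have hα := (ih α.length (by omega)).1 α rfl
  rw [hω] at hα
  rw [wp_cons]
  refine mul_UU (fun x hx => ?_) hα
  by_cases hx' : cs.length x + 1 < n
  · have := (ih (cs.length x + 1) hx').1 (s :: g x) (by simp [(hg x).2])
    rw [wp_cons] at this
    exact UU_mono (by omega) this
  -- It remains to multiply one basis product of maximal length by a generator, according to
  -- whether this lengthens the element.
  by_cases hs : cs.IsLeftDescent x s
  · have l1 := cs.isLeftDescent_iff.1 hs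
    obtain ⟨g1, g2⟩ := hg (cs.simple s * x)
    set γ := g (cs.simple s * x)
    have e : cs.wordProd (s :: γ) = x := by
      rw [cs.wordProd_cons, g1, cs.simple_mul_simple_cancel_left]
    have i1 := (ih (cs.length x) (by omega)).2 (s :: γ) (by rw [List.length_cons]; omega)
      (by rw [e])
    have i2 := (ih γ.length (by omega)).1 γ rfl
    have i3 := (ih (cs.length x) (by omega)).1 (s :: γ) (by rw [List.length_cons]; omega)
    rw [e] at i1
    have i4 := up s _ (by omega) _ i1
    have e2 : T s * wp T (g x) = (u s • wp T (s :: γ) - v s • wp T γ) -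
        T s * (wp T (s :: γ) - wp T (g x)) := by
      rw [mul_sub, wp_cons, ← mul_assoc, hq, sub_mul, smul_mul_assoc, smul_mul_assoc, one_mul]
      abel
    rw [e2]
    exact sub_mem (sub_mem (Submodule.smul_mem _ _ (UU_mono (by omega) i3))
      (Submodule.smul_mem _ _ (UU_mono (by omega) i2))) (UU_mono (by omega) i4)
  · have l1 := cs.not_isLeftDescent_iff.1 hs
    have e : cs.wordProd (s :: g x) = cs.simple s * x := by rw [cs.wordProd_cons, (hg x).1]
    have t1 := top (s :: g x) (by rw [List.length_cons, ← (hg x).2]; omega) (by rw [e]; omega)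
    have t2 : wp T (g (cs.wordProd (s :: g x))) ∈ UU cs R T g (n + 1) := mem_UU (by rw [e]; omega)
    have := add_mem (UU_mono (Nat.le_succ n) t1) t2
    rwa [sub_add_cancel, wp_cons] at this

end Span

/-! ### The generalized Hecke algebra -/

section Final
variable {I : Type*} {W : Type*} [Group W] {M : CoxeterMatrix I} {cs : CoxeterSystem M W}
  {R : Type*} [CommRing R] {u v : I → R} {f : I → I → ℕ → R}

variable (M u v f) in
/-- The generator `T_i` of the generalized Iwahori–Hecke algebra. -/
def hgen (i : I) : Hecke R M u v f := RingQuot.mkAlgHom R (Rel R M u v f) (FreeAlgebra.ι R i)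

lemma Tprod_eq_wp (l : List I) : Tprod R M u v f l = wp (hgen M u v f) l := rfl

lemma map_quad_rel {B : Type*} [Ring B] [Algebra R B] (φ : FreeAlgebra R I →ₐ[R] B) (a b : R)
    (i : I) : φ (FreeAlgebra.ι R i * FreeAlgebra.ι R i - algebraMap R _ a * FreeAlgebra.ι R i +
      algebraMap R _ b) = φ (FreeAlgebra.ι R i) * φ (FreeAlgebra.ι R i) -
        a • φ (FreeAlgebra.ι R i) + b • 1 := by
  simp only [map_add, map_sub, map_mul, AlgHom.commutes]
  simp only [Algebra.algebraMap_eq_smul_one, smul_mul_assoc, one_mul]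

lemma map_braid_rel {B : Type*} [Ring B] [Algebra R B] (φ : FreeAlgebra R I →ₐ[R] B) (s t : I) :
    φ (braid (FreeAlgebra.ι R s) (FreeAlgebra.ι R t) (M s t) +
      ∑ l ∈ Finset.Ico 1 ((M s t + 1) / 2), algebraMap R _ (f s t l) *
        braid (FreeAlgebra.ι R s) (FreeAlgebra.ι R t) (M s t - 2 * l)) =
      zel (fun i => φ (FreeAlgebra.ι R i)) M f s t := by
  simp only [braid_eq_bop, ← Algebra.smul_def]
  rw [map_add, map_sum, map_bop, zel]
  simp only [map_smul, map_bop]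

lemma hgen_quad (s : I) : hgen M u v f s * hgen M u v f s = u s • hgen M u v f s - v s • 1 := by
  have := RingQuot.mkAlgHom_rel R (Rel.quad (R := R) (M := M) (u := u) (v := v) (f := f) s)
  rw [map_quad_rel, map_zero, sub_add, sub_eq_zero] at this
  exact this

lemma hgen_braid (s t : I) (hst : s ≠ t) (hm : M s t ≠ 0) : zel (hgen M u v f) M f s t = 0 := by
  have := RingQuot.mkAlgHom_rel R
    (Rel.braidRel (R := R) (M := M) (u := u) (v := v) (f := f) s t hst hm)
  rw [map_braid_rel, map_zero] at this
  exact this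

/-- The products along the chosen reduced words span: their span contains `1` and is stable under
left multiplication by the generators. -/
lemma span_top {g : W → List I}
    (hg : ∀ x : W, cs.wordProd (g x) = x ∧ cs.length x = (g x).length) :
    Submodule.span R (Set.range fun x : W => Tprod R M u v f (g x)) = ⊤ := by
  set S := Submodule.span R (Set.range fun x : W => Tprod R M u v f (g x)) with hS
  have hw : ∀ ω : List I, wp (hgen M u v f) ω ∈ S := fun ω => by
    have := (straighten (T := hgen M u v f) hg hgen_quad hgen_braid ω.length).1 ω rfl
    exact Submodule.span_mono (Set.image_subset_range _ _) this
  have key : ∀ a : FreeAlgebra R I, ∀ x ∈ S, RingQuot.mkAlgHom R (Rel R M u v f) a * x ∈ S := by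
    intro a
    induction a using FreeAlgebra.induction with
    | grade0 r =>
      intro x hx
      rw [AlgHom.commutes, ← Algebra.smul_def]
      exact S.smul_mem r hx
    | grade1 i =>
      intro x hx
      have : S ≤ S.comap (LinearMap.mulLeft R (hgen M u v f i)) := by
        refine Submodule.span_le.2 ?_
        rintro _ ⟨x, rfl⟩
        have := hw (i :: g x)
        rw [wp_cons] at this
        exact this
      exact this hx
    | mul a b ha hb =>
      intro x hx
      rw [map_mul, mul_assoc]
      exact ha _ (hb _ hx)
    | add a b ha hb =>
      intro x hx
      rw [map_add, add_mul]
      exact add_mem (ha _ hx) (hb _ hx)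
  refine eq_top_iff.2 fun a _ => ?_
  obtain ⟨a, rfl⟩ := RingQuot.mkAlgHom_surjective R (Rel R M u v f) a
  have := key a 1 (hw [])
  rwa [mul_one] at this

/-- The products along the chosen reduced words are independent: in the representation on `W →₀
R`, they map `e_1` to `e_x` plus terms of smaller length. -/
lemma lin_indep (hf : ∀ i j l, f i j l = f j i l)
    (h1 : ∀ i j : I, i ≠ j → M i j ≠ 0 → Odd (M i j) → u i = u j ∧ v i = v j)
    (h2 : ∀ i j k : I, i ≠ j → j ≠ k → i ≠ k →
      M i j = 3 → M j k = 3 → M i k = 2 → f i j 1 = f j k 1) {g : W → List I}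
    (hg : ∀ x : W, cs.wordProd (g x) = x ∧ cs.length x = (g x).length) :
    LinearIndependent R (fun x : W => Tprod R M u v f (g x)) := by
  obtain ⟨T, hT⟩ := exists_good cs (u := u) (v := v) hf h1 h2
  have hF : Filt cs T := (hT 0).1
  have hrel : ∀ a b, Rel R M u v f a b → FreeAlgebra.lift R T a = FreeAlgebra.lift R T b := by
    intro a b h
    cases h with
    | quad i =>
      refine (map_quad_rel (FreeAlgebra.lift R T) (u i) (v i) i).trans ?_
      rw [map_zero, FreeAlgebra.lift_ι_apply]
      refine LinearMap.ext fun p => ?_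
      obtain ⟨k, hk⟩ := exists_mem_LL cs p
      change T i (T i p) - u i • T i p + v i • p = 0
      rw [(hT (k + 2)).2.2.1 i k p hk le_rfl, sub_add, sub_self]
    | braidRel i j hij hm =>
      refine (map_braid_rel (FreeAlgebra.lift R T) i j).trans ?_
      rw [map_zero]
      simp only [FreeAlgebra.lift_ι_apply]
      refine LinearMap.ext fun p => ?_
      obtain ⟨k, hk⟩ := exists_mem_LL cs p
      exact (hT (k + M i j)).2.2.2 i j hij hm k p hk le_rfl
  let Φ : Hecke R M u v f →ₐ[R] Module.End R (W →₀ R) :=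
    RingQuot.liftAlgHom R ⟨FreeAlgebra.lift R T, @hrel⟩
  have hΦ : ∀ i, Φ (hgen M u v f i) = T i := fun i => by
    simp [Φ, hgen]
  have hΦw : ∀ ω, Φ (wp (hgen M u v f) ω) = wp T ω := fun ω => by
    induction ω with
    | nil => simp
    | cons s ω ih => rw [wp_cons, wp_cons, map_mul, ih, hΦ]
  let Λ : Hecke R M u v f →ₗ[R] (W →₀ R) := (LinearMap.applyₗ (ev1 R 1)).comp Φ.toLinearMap
  have hΛ : ∀ x, Λ (Tprod R M u v f (g x)) - ev1 R x ∈ LL cs R (cs.length x) := fun x => by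
    have := asc_word hF (hT _).2.1 (g x) (x := 1) (by simp [hg x]) (Nat.lt_succ_self _)
    simp only [(hg x).1, mul_one, ← (hg x).2, cs.length_one, add_zero] at this
    have e : Λ (Tprod R M u v f (g x)) = wp T (g x) (ev1 R 1) := by
      rw [← hΦw]; rfl
    rw [e]
    exact this
  refine LinearIndependent.of_comp Λ ?_
  rw [linearIndependent_iff]
  intro p hp
  -- `Λ` is unitriangular: if `Λ` kills a relation supported in length at most `k`, then the
  -- relation is supported in length less than `k`.
  have down : ∀ k, p ∈ LL cs R (k + 1) → p ∈ LL cs R k := fun k hk => by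
    have := LL_map cs (A := Finsupp.linearCombination R
      (Λ ∘ fun x : W => Tprod R M u v f (g x)) - LinearMap.id) (N := LL cs R k) (fun x hx => by
        have := LL_mono cs R (Nat.lt_succ_iff.1 hx) (hΛ x)
        simpa [ev1] using this) hk
    rw [LinearMap.sub_apply, hp, zero_sub, LinearMap.id_apply] at this
    simpa using this
  obtain ⟨k, hk⟩ := exists_mem_LL cs p
  induction k with
  | zero => exact LL_zero cs R hk
  | succ k ih => exact ih (down k hk)

end Final
end Stmt14

open Stmt14 in
/-- The generalized Iwahori–Hecke algebra `A'` is a free `R`-module with basis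
`(T_w)_{w ∈ W}`, for any choice of reduced expressions. -/
theorem generalized_hecke_flat {I : Type*} [Fintype I] [DecidableEq I]
    {W : Type*} [Group W] (M : CoxeterMatrix I) (cs : CoxeterSystem M W)
    (R : Type*) [CommRing R] (u v : I → R) (f : I → I → ℕ → R)
    (hfsymm : ∀ i j l, f i j l = f j i l)
    (h1 : ∀ i j : I, i ≠ j → M i j ≠ 0 → Odd (M i j) → u i = u j ∧ v i = v j)
    (h2 : ∀ i j k : I, i ≠ j → j ≠ k → i ≠ k →
      M i j = 3 → M j k = 3 → M i k = 2 → f i j 1 = f j k 1)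
    (w : W → List I)
    (hw : ∀ x : W, cs.wordProd (w x) = x ∧ cs.IsReduced (w x)) :
    LinearIndependent R (fun x : W => Tprod R M u v f (w x)) ∧
      Submodule.span R (Set.range fun x : W => Tprod R M u v f (w x)) = ⊤ := by
  have hg : ∀ x : W, cs.wordProd (w x) = x ∧ cs.length x = (w x).length := fun x =>
    ⟨(hw x).1, by rw [← (hw x).2.eq, (hw x).1]⟩
  exact ⟨lin_indep hfsymm h1 h2 hg, span_top hg⟩
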